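/- arXiv:2512.22413 — 3 statements merged into one kernel-verified Lean document; each statement's English description precedes it below -/
import Mathlib

section
/- For every natural number n ≥ 2, at least one quarter of the rows of the Sierpiński matrix S_n contain at least one prime; precisely, if A = {k : 1 ≤ k ≤ n and there exists a prime p with (k−1)·n < p ≤ k·n}, then 4·|A| ≥ n. -/
/-!
Suppose fewer than a quarter of the rows contain a prime; then every prime up to `n ^ 2` lies in one
of these few rows, and an upper bound for the number of primes in a row bounds `π (n ^ 2)`. This is
confronted with the lower bound for `π (n ^ 2)` that follows from Chebyshev's method.

For `log n ≤ 36` the Selberg sieve, carried out on the integers coprime to `30`, gives for each row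
a Brun–Titchmarsh bound whose explicit secondary term is good enough. As `n` grows, this bound tends
to `2 * n / log n` primes per row, against a mean of `n / (2 * log n)`, which just fails to exclude
the proportion `1 / 4`.

For `log n > 36` the sieve is used on average over the rows. The Selberg majorant is a combination
of Ramanujan sums, so the large sieve over Farey fractions bounds the variance of its sums over
short windows, and this is strong enough to push the sieve level from `n ^ (1 / 2)` to about
`n ^ 0.55`. The windows attached to distinct rows are disjoint, so the bound for the primes in a
quarter of the rows improves by about a tenth, which suffices.
-/

open Finset ArithmeticFunction
open scoped Nat ArithmeticFunction.Moebius ArithmeticFunction.omega FourierTransform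

namespace SierpinskiRows

/-! ### Integers coprime to 30 -/

/-- The number of integers `1 ≤ m ≤ t` coprime to `30`. -/
def wheelCount (t : ℕ) : ℕ := #{m ∈ Ioc 0 t | Nat.Coprime m 30}

lemma wheelCount_succ (t : ℕ) :
    wheelCount (t + 1) = wheelCount t + if Nat.Coprime (t + 1) 30 then 1 else 0 := by
  have h : Ioc 0 (t + 1) = insert (t + 1) (Ioc 0 t) := by
    ext m; simp only [mem_Ioc, mem_insert]; omega
  unfold wheelCount
  rw [h, filter_insert]
  split_ifs with hc
  · rw [card_insert_of_notMem (by simp)]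
  · simp

lemma wheelCount_eq_sum (t : ℕ) :
    wheelCount t = ∑ i ∈ range t, if Nat.Coprime (i + 1) 30 then 1 else 0 := by
  induction t with
  | zero => simp [wheelCount]
  | succ t ih => rw [wheelCount_succ, sum_range_succ, ih]

lemma wheelCount_block (r : ℕ) (hr : r < 30) :
    ∑ i ∈ range 30, (if Nat.Coprime (r + i + 1) 30 then 1 else 0) = 8 := by
  revert r
  decide +kernel

lemma wheelCount_add_thirty (t : ℕ) : wheelCount (t + 30) = wheelCount t + 8 := by
  rw [wheelCount_eq_sum, wheelCount_eq_sum, sum_range_add,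
    ← wheelCount_block (t % 30) (Nat.mod_lt _ (by norm_num))]
  have h : ∀ i, Nat.Coprime (t + i + 1) 30 ↔ Nat.Coprime (t % 30 + i + 1) 30 := by
    intro i
    have : t + i + 1 = (t % 30 + i + 1) + 30 * (t / 30) := by omega
    rw [this, Nat.coprime_add_mul_left_left]
  simp only [h]

-- In integers: `|wheelCount ⌊y⌋ - 4 y / 15| ≤ 14 / 15` for every real `y ≥ 0`.
lemma wheelCount_bounds (t : ℕ) :
    15 * wheelCount t ≤ 4 * t + 14 ∧ 4 * (t + 1) ≤ 15 * wheelCount t + 14 := by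
  induction t using Nat.strong_induction_on with
  | _ t ih =>
    rcases Nat.lt_or_ge t 30 with h | h
    · clear ih
      rw [wheelCount_eq_sum]
      revert t
      decide +kernel
    · obtain ⟨s, rfl⟩ := Nat.exists_eq_add_of_le' h
      have := ih s (by omega)
      rw [wheelCount_add_thirty]
      omega

lemma card_multiples_le (d A : ℕ) (hd : 0 < d) (hc : Nat.Coprime d 30) :
    #{m ∈ Ioc 0 A | d ∣ m ∧ Nat.Coprime m 30} = wheelCount (A / d) := by
  unfold wheelCount
  symm
  apply card_bij (fun j _ => d * j)
  · intro j hj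
    simp only [mem_filter, mem_Ioc] at hj ⊢
    refine ⟨⟨Nat.mul_pos hd hj.1.1, ?_⟩, dvd_mul_right _ _, Nat.Coprime.mul_left hc hj.2⟩
    calc d * j ≤ d * (A / d) := Nat.mul_le_mul_left _ hj.1.2
      _ ≤ A := Nat.mul_div_le A d
  · intro a _ b _ h
    exact Nat.eq_of_mul_eq_mul_left hd h
  · intro m hm
    simp only [mem_filter, mem_Ioc] at hm
    obtain ⟨⟨h1, h2⟩, ⟨j, rfl⟩, h3⟩ := hm
    refine ⟨j, ?_, rfl⟩
    simp only [mem_filter, mem_Ioc]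
    refine ⟨⟨Nat.pos_of_mul_pos_left h1 |> fun h => ?_, ?_⟩, Nat.Coprime.coprime_mul_left h3⟩
    · exact Nat.pos_of_ne_zero (by rintro rfl; simp at h1)
    · exact (Nat.le_div_iff_mul_le hd).2 (by rw [mul_comm]; exact h2)

lemma wheelCount_div_bounds (d A : ℕ) (hd : 0 < d) :
    |(wheelCount (A / d) : ℝ) - 4 / 15 * (A / d)| ≤ 14 / 15 := by
  obtain ⟨h1, h2⟩ := wheelCount_bounds (A / d)
  have h1' : (15 : ℝ) * wheelCount (A / d) ≤ 4 * (A / d : ℕ) + 14 := by exact_mod_cast h1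
  have h2' : (4 : ℝ) * ((A / d : ℕ) + 1) ≤ 15 * wheelCount (A / d) + 14 := by exact_mod_cast h2
  have h3 : ((A / d : ℕ) : ℝ) ≤ (A : ℝ) / d := Nat.cast_div_le
  have h4 : (A : ℝ) / d ≤ (A / d : ℕ) + 1 := by
    rw [div_le_iff₀ (by exact_mod_cast hd)]
    have := Nat.lt_div_mul_add (a := A) hd
    have h5 : A ≤ (A / d + 1) * d := by rw [add_mul, one_mul]; omega
    exact_mod_cast h5
  rw [abs_le]; constructor <;> linarith

lemma abs_card_multiples_interval_sub_le (d a N : ℕ) (hd : 0 < d) (hc : Nat.Coprime d 30) :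
    |(#{m ∈ Ioc a (a + N) | d ∣ m ∧ Nat.Coprime m 30} : ℝ) - 4 / 15 * (N / d)| ≤ 28 / 15 := by
  have hsplit : #{m ∈ Ioc 0 (a + N) | d ∣ m ∧ Nat.Coprime m 30} =
      #{m ∈ Ioc 0 a | d ∣ m ∧ Nat.Coprime m 30} +
      #{m ∈ Ioc a (a + N) | d ∣ m ∧ Nat.Coprime m 30} := by
    rw [← card_union_of_disjoint, ← filter_union, Ioc_union_Ioc_eq_Ioc (by omega) (by omega)]
    apply disjoint_filter_filter
    rw [disjoint_left]; intro m; simp only [mem_Ioc]; omega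
  rw [card_multiples_le _ _ hd hc, card_multiples_le _ _ hd hc] at hsplit
  have h1 := wheelCount_div_bounds d (a + N) hd
  have h2 := wheelCount_div_bounds d a hd
  have h3 : (wheelCount ((a + N) / d) : ℝ) = wheelCount (a / d) +
      #{m ∈ Ioc a (a + N) | d ∣ m ∧ Nat.Coprime m 30} := by exact_mod_cast hsplit
  push_cast at h1
  rw [add_div] at h1
  rw [abs_le] at *
  constructor <;> linarith [h1.1, h1.2, h2.1, h2.2]

/-! ### Multiplicative functions at squarefree integers -/

lemma prod_primeFactors_add {r : ℕ} (hr : Squarefree r) (f g : ℕ → ℝ) :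
    ∏ p ∈ r.primeFactors, (f p + g p) = ∑ d ∈ r.divisors,
      (∏ p ∈ d.primeFactors, f p) * ∏ p ∈ (r / d).primeFactors, g p := by
  have hadd := (IsMultiplicative.prodPrimeFactors f).prodPrimeFactors_add_of_squarefree
    (IsMultiplicative.prodPrimeFactors g) hr
  have hprime : ∀ p ∈ r.primeFactors,
      f p + g p = (prodPrimeFactors f + prodPrimeFactors g) p := by
    intro p hp
    have hpp := Nat.prime_of_mem_primeFactors hp
    simp [prodPrimeFactors_apply hpp.ne_zero, hpp.primeFactors]
  rw [prod_congr rfl hprime, ← prodPrimeFactors_apply hr.ne_zero, hadd, mul_apply,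
    Nat.sum_divisorsAntidiagonal fun a b => prodPrimeFactors f a * prodPrimeFactors g b]
  refine sum_congr rfl fun d hd => ?_
  rw [prodPrimeFactors_apply (Nat.pos_of_mem_divisors hd).ne', prodPrimeFactors_apply
    (Nat.div_pos (Nat.divisor_le hd) (Nat.pos_of_mem_divisors hd)).ne']

lemma sum_divisors_prod_primeFactors {r : ℕ} (hr : Squarefree r) (f : ℕ → ℝ) :
    ∑ d ∈ r.divisors, ∏ p ∈ d.primeFactors, f p = ∏ p ∈ r.primeFactors, (1 + f p) := by
  simp only [add_comm (1 : ℝ), prod_primeFactors_add hr, prod_const_one, mul_one]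

lemma totient_eq_prod {r : ℕ} (hr : Squarefree r) :
    (φ r : ℝ) = ∏ p ∈ r.primeFactors, ((p : ℝ) - 1) := by
  have h1 := Nat.totient_mul_prod_primeFactors r
  rw [Nat.prod_primeFactors_of_squarefree hr, mul_comm] at h1
  have h2 := Nat.eq_of_mul_eq_mul_left (Nat.pos_of_ne_zero hr.ne_zero) h1
  rw [h2, Nat.cast_prod]
  refine prod_congr rfl fun p hp => ?_
  rw [Nat.cast_sub (Nat.prime_of_mem_primeFactors hp).one_le]
  simp

lemma cast_eq_prod {r : ℕ} (hr : Squarefree r) :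
    (r : ℝ) = ∏ p ∈ r.primeFactors, (p : ℝ) := by
  rw [← Nat.cast_prod, Nat.prod_primeFactors_of_squarefree hr]

lemma moebius_eq_prod {r : ℕ} (hr : Squarefree r) :
    (μ r : ℝ) = ∏ _p ∈ r.primeFactors, (-1 : ℝ) := by
  rw [prod_const, moebius_apply_of_squarefree hr,
    ← (cardDistinctFactors_eq_cardFactors_iff_squarefree hr.ne_zero).2 hr]
  exact_mod_cast rfl

lemma sum_moebius_divisors_multiples {e r : ℕ} (hr : Squarefree r) (he : e ∣ r) :
    ∑ d ∈ r.divisors with e ∣ d, (μ d : ℝ) = if e = r then (μ r : ℝ) else 0 := by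
  obtain ⟨s, rfl⟩ := he
  have he0 : 0 < e := Nat.pos_of_ne_zero (left_ne_zero_of_mul hr.ne_zero)
  have himage : {d ∈ (e * s).divisors | e ∣ d} = s.divisors.image (e * ·) := by
    ext d
    simp only [mem_filter, Nat.mem_divisors, mem_image]
    constructor
    · rintro ⟨⟨hd, -⟩, c, rfl⟩
      exact ⟨c, ⟨Nat.dvd_of_mul_dvd_mul_left he0 hd, right_ne_zero_of_mul hr.ne_zero⟩, rfl⟩
    · rintro ⟨c, ⟨hc, -⟩, rfl⟩
      exact ⟨⟨mul_dvd_mul_left e hc, hr.ne_zero⟩, dvd_mul_right e c⟩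
  have hmul : ∀ c ∈ s.divisors, (μ (e * c) : ℝ) = μ e * μ c := fun c hc => by
    exact_mod_cast isMultiplicative_moebius.map_mul_of_coprime
      ((Nat.coprime_of_squarefree_mul hr).coprime_dvd_right (Nat.dvd_of_mem_divisors hc))
  have hone : ∑ c ∈ s.divisors, (μ c : ℝ) = if s = 1 then 1 else 0 := by
    have := congrArg (fun f : ArithmeticFunction ℝ => f s) coe_moebius_mul_coe_zeta
    simpa only [coe_mul_zeta_apply, one_apply, intCoe_apply] using this
  rw [himage, sum_image fun a _ b _ h => Nat.eq_of_mul_eq_mul_left he0 h, sum_congr rfl hmul,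
    ← mul_sum, hone]
  have hiff : e = e * s ↔ s = 1 := by
    rw [eq_comm, Nat.mul_eq_left he0.ne']
  simp only [hiff, mul_ite, mul_one, mul_zero]
  split_ifs with hs
  · rw [hs, mul_one]
  · rfl

/-- The orthogonality behind Selberg's diagonalisation. -/
lemma sum_moebius_mul_moebius_mul_gcd {r s : ℕ} (hr : Squarefree r) (hs : Squarefree s) :
    ∑ d ∈ r.divisors, ∑ d' ∈ s.divisors, (μ d : ℝ) * μ d' * (d.gcd d' : ℕ) =
      if r = s then (φ r : ℝ) else 0 := by
  have hgcd : ∀ d ∈ r.divisors, ∀ d' ∈ s.divisors, (μ d : ℝ) * μ d' * (d.gcd d' : ℕ) =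
      ∑ e ∈ (r.gcd s).divisors,
        (φ e : ℝ) * ((if e ∣ d then (μ d : ℝ) else 0) * if e ∣ d' then (μ d' : ℝ) else 0) := by
    intro d hd d' hd'
    have hfilter : (d.gcd d').divisors = {e ∈ (r.gcd s).divisors | e ∣ d ∧ e ∣ d'} := by
      ext e
      have := Nat.gcd_pos_of_pos_left s (Nat.pos_of_ne_zero hr.ne_zero)
      have := Nat.gcd_pos_of_pos_left d' (Nat.pos_of_mem_divisors hd)
      simp only [Nat.mem_divisors, mem_filter, Nat.dvd_gcd_iff] at hd hd' ⊢
      exact ⟨fun h => ⟨⟨⟨h.1.1.trans hd.1, h.1.2.trans hd'.1⟩, by omega⟩, h.1⟩,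
        fun h => ⟨h.2, by omega⟩⟩
    rw [← Nat.sum_totient (d.gcd d'), hfilter, sum_filter, Nat.cast_sum, mul_sum]
    refine sum_congr rfl fun e _ => ?_
    by_cases h1 : e ∣ d <;> by_cases h2 : e ∣ d' <;> simp [h1, h2]
    ring
  calc _ = ∑ e ∈ (r.gcd s).divisors, (φ e : ℝ) *
        ((∑ d ∈ r.divisors with e ∣ d, (μ d : ℝ)) * ∑ d' ∈ s.divisors with e ∣ d', (μ d' : ℝ)) := by
        rw [sum_congr rfl fun d hd => sum_congr rfl fun d' hd' => hgcd d hd d' hd']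
        rw [sum_congr rfl fun d _ => sum_comm, sum_comm]
        simp only [sum_filter, sum_mul_sum, mul_sum _ _ (φ _ : ℝ)]
    _ = ∑ e ∈ (r.gcd s).divisors,
        (φ e : ℝ) * ((if e = r then (μ r : ℝ) else 0) * if e = s then (μ s : ℝ) else 0) := by
        refine sum_congr rfl fun e he => ?_
        have hdvd := Nat.dvd_gcd_iff.1 (Nat.dvd_of_mem_divisors he)
        rw [sum_moebius_divisors_multiples hr hdvd.1, sum_moebius_divisors_multiples hs hdvd.2]
    _ = _ := by
        by_cases hrs : r = s
        · subst hrs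
          have hsq : (μ r : ℝ) ^ 2 = 1 := by exact_mod_cast moebius_sq_eq_one_of_squarefree hr
          simp [hr.ne_zero, ← pow_two, hsq]
        · rw [if_neg hrs, sum_eq_zero]
          intro e _
          by_cases h : e = r
          · rw [if_neg (h.trans_ne hrs), mul_zero, mul_zero]
          · rw [if_neg h, zero_mul, mul_zero]

/-! ### The Selberg majorant -/

/-- The squarefree integers `1 ≤ d ≤ R` coprime to `30`: the support of the sieve. -/
def sieveRange (R : ℕ) : Finset ℕ := {d ∈ Icc 1 R | Squarefree d ∧ Nat.Coprime d 30}

/-- Selberg's sum `L = ∑ 1 / φ(r)` over the sieve range. -/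
noncomputable def selbergSum (R : ℕ) : ℝ := ∑ r ∈ sieveRange R, 1 / (φ r : ℝ)

/-- For squarefree `q` this is `μ(q) c_q(m) / φ(q)`, where `c_q(m)` is the Ramanujan sum, written
as a product over the prime factors of `q`. -/
noncomputable def ramanujanRatio (q m : ℕ) : ℝ :=
  ∏ p ∈ q.primeFactors, if p ∣ m then -1 else 1 / ((p : ℝ) - 1)

/-- Selberg's majorant of the indicator function of the primes above `R`. Each `ramanujanRatio r`
is `1 / φ(r)` at such a prime, so that the majorant is `1` there. -/
noncomputable def majorant (R m : ℕ) : ℝ :=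
  ((∑ r ∈ sieveRange R, ramanujanRatio r m) / selbergSum R) ^ 2

lemma mem_sieveRange {R d : ℕ} :
    d ∈ sieveRange R ↔ (1 ≤ d ∧ d ≤ R) ∧ Squarefree d ∧ Nat.Coprime d 30 := by
  simp [sieveRange]

lemma sieveRange_of_dvd {R d r : ℕ} (hr : r ∈ sieveRange R) (h : d ∣ r) : d ∈ sieveRange R := by
  rw [mem_sieveRange] at *
  have hd : 0 < d := Nat.pos_of_dvd_of_pos h hr.1.1
  exact ⟨⟨hd, (Nat.le_of_dvd hr.1.1 h).trans hr.1.2⟩, hr.2.1.squarefree_of_dvd h,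
    hr.2.2.coprime_dvd_left h⟩

lemma one_mem_sieveRange {R : ℕ} (hR : 1 ≤ R) : 1 ∈ sieveRange R := by
  rw [mem_sieveRange]; simp [hR]

lemma selbergSum_pos {R : ℕ} (hR : 1 ≤ R) : 0 < selbergSum R := by
  apply sum_pos
  · intro r hr
    have : 0 < φ r := Nat.totient_pos.2 (mem_sieveRange.1 hr).1.1
    positivity
  · exact ⟨1, one_mem_sieveRange hR⟩

lemma majorant_nonneg (R m : ℕ) : 0 ≤ majorant R m := sq_nonneg _

lemma ramanujanRatio_prime {r p : ℕ} (hr : Squarefree r) (hp : p.Prime) (h : r < p) :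
    ramanujanRatio r p = 1 / φ r := by
  rw [totient_eq_prod hr, one_div, ← prod_inv_distrib]
  refine prod_congr rfl fun q hq => ?_
  have hqp : ¬ q ∣ p := fun hdvd => by
    have := (Nat.prime_dvd_prime_iff_eq (Nat.prime_of_mem_primeFactors hq) hp).1 hdvd
    have := Nat.le_of_mem_primeFactors hq
    omega
  rw [if_neg hqp, one_div]

lemma majorant_prime {R p : ℕ} (hR : 1 ≤ R) (hp : p.Prime) (h : R < p) : majorant R p = 1 := by
  have hsum : ∑ r ∈ sieveRange R, ramanujanRatio r p = selbergSum R :=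
    sum_congr rfl fun r hr =>
      let hr := mem_sieveRange.1 hr
      ramanujanRatio_prime hr.2.1 hp (hr.1.2.trans_lt h)
  rw [majorant, hsum, div_self (selbergSum_pos hR).ne', one_pow]

lemma ramanujanRatio_eq_sum_divisors {r : ℕ} (hr : Squarefree r) (m : ℕ) :
    ramanujanRatio r m = (∑ d ∈ r.divisors, if d ∣ m then (μ d : ℝ) * d else 0) / φ r := by
  have hlocal : ∀ p ∈ r.primeFactors, (if p ∣ m then -1 else 1 / ((p : ℝ) - 1)) =
      (1 + if p ∣ m then -(p : ℝ) else 0) / ((p : ℝ) - 1) := by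
    intro p hp
    have h1 : (1 : ℝ) < p := by exact_mod_cast (Nat.prime_of_mem_primeFactors hp).one_lt
    have h2 : (p : ℝ) - 1 ≠ 0 := by linarith
    split_ifs
    · field_simp
      ring
    · rw [add_zero]
  rw [ramanujanRatio, prod_congr rfl hlocal, prod_div_distrib, ← totient_eq_prod hr,
    ← sum_divisors_prod_primeFactors hr]
  congr 1
  refine sum_congr rfl fun d hd => ?_
  have hdsq := hr.squarefree_of_dvd (Nat.dvd_of_mem_divisors hd)
  have hdvd : d ∣ m ↔ ∀ p ∈ d.primeFactors, p ∣ m := by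
    refine ⟨fun h p hp => (Nat.dvd_of_mem_primeFactors hp).trans h, fun h => ?_⟩
    rw [← Nat.prod_primeFactors_of_squarefree hdsq]
    exact prod_primes_dvd m (fun p hp => (Nat.prime_of_mem_primeFactors hp).prime) h
  split_ifs with h
  · rw [moebius_eq_prod hdsq, cast_eq_prod hdsq, ← prod_mul_distrib]
    refine prod_congr rfl fun p hp => ?_
    rw [if_pos (hdvd.1 h p hp), neg_one_mul]
  · obtain ⟨p, hp, hpm⟩ : ∃ p ∈ d.primeFactors, ¬ p ∣ m := by
      simpa only [hdvd, not_forall, exists_prop] using h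
    exact prod_eq_zero hp (if_neg hpm)

/-! ### Expansion of the majorant in Ramanujan sums -/

/-- The product over `p ∣ t` of `1 / (p - 1) - 1`, the sum of the two values that
`ramanujanRatio p` takes; this is the linear coefficient of its quadratic equation. -/
noncomputable def ratioTrace (t : ℕ) : ℝ := ∏ p ∈ t.primeFactors, (1 / ((p : ℝ) - 1) - 1)

/-- The coefficient of `ramanujanRatio q` in the expansion of `majorant R`. The pair
`x = (r / e, r' / e)` and `e ∣ gcd r r'` stand for a term of the product of the functions
`ramanujanRatio r` and `ramanujanRatio r'`. -/
noncomputable def majorantCoeff (R q : ℕ) : ℝ :=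
  (∑ e ∈ sieveRange R, ∑ x ∈ sieveRange R ×ˢ sieveRange R with
    (e * x.1 ∈ sieveRange R ∧ e * x.2 ∈ sieveRange R) ∧ x.1.lcm x.2 = q,
      ratioTrace (x.1.gcd x.2) / φ e) / selbergSum R ^ 2

lemma abs_ratioTrace_le_one (t : ℕ) : |ratioTrace t| ≤ 1 := by
  rw [ratioTrace, abs_prod]
  refine prod_le_one (fun _ _ => abs_nonneg _) fun p hp => ?_
  have h : (2 : ℝ) ≤ p := by exact_mod_cast (Nat.prime_of_mem_primeFactors hp).two_le
  have h1 : 1 / ((p : ℝ) - 1) ≤ 1 := (div_le_one (by linarith)).2 (by linarith)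
  have h2 : 0 ≤ 1 / ((p : ℝ) - 1) := div_nonneg zero_le_one (by linarith)
  rw [abs_le]
  constructor <;> linarith

lemma ramanujanRatio_mul_of_coprime {a b : ℕ} (h : Nat.Coprime a b) (m : ℕ) :
    ramanujanRatio (a * b) m = ramanujanRatio a m * ramanujanRatio b m := by
  rw [ramanujanRatio, h.primeFactors_mul, prod_union h.disjoint_primeFactors]
  rfl

lemma ramanujanRatio_sq {g : ℕ} (hg : Squarefree g) (m : ℕ) :
    ramanujanRatio g m ^ 2 = ∑ e ∈ g.divisors,
      ratioTrace (g / e) / φ e * ramanujanRatio (g / e) m := by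
  have hlocal : ∀ p ∈ g.primeFactors, (if p ∣ m then -1 else 1 / ((p : ℝ) - 1)) ^ 2 =
      1 / ((p : ℝ) - 1) +
        (1 / ((p : ℝ) - 1) - 1) * if p ∣ m then -1 else 1 / ((p : ℝ) - 1) := by
    intro p _
    split_ifs <;> ring
  rw [ramanujanRatio, ← prod_pow, prod_congr rfl hlocal, prod_primeFactors_add hg]
  refine sum_congr rfl fun e he => ?_
  rw [prod_mul_distrib, ratioTrace, ramanujanRatio,
    totient_eq_prod (hg.squarefree_of_dvd (Nat.dvd_of_mem_divisors he)), prod_div_distrib,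
    prod_const_one]
  ring

lemma ramanujanRatio_mul {r r' : ℕ} (hr : Squarefree r) (hr' : Squarefree r') (m : ℕ) :
    ramanujanRatio r m * ramanujanRatio r' m = ∑ e ∈ (r.gcd r').divisors,
      ratioTrace ((r / e).gcd (r' / e)) / φ e * ramanujanRatio ((r / e).lcm (r' / e)) m := by
  have hg0 : 0 < r.gcd r' := Nat.gcd_pos_of_pos_left r' (Nat.pos_of_ne_zero hr.ne_zero)
  obtain ⟨a, b, hab, ha, hb⟩ := Nat.exists_coprime r r'
  set g := r.gcd r'
  have hag : Nat.Coprime a g := Nat.coprime_of_squarefree_mul (ha ▸ hr)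
  have hbg : Nat.Coprime b g := Nat.coprime_of_squarefree_mul (hb ▸ hr')
  have hgsq : Squarefree g := hr.squarefree_of_dvd (Nat.gcd_dvd_left r r')
  have hterm : ∀ e ∈ g.divisors,
      ratioTrace ((r / e).gcd (r' / e)) / φ e * ramanujanRatio ((r / e).lcm (r' / e)) m =
      ramanujanRatio a m * ramanujanRatio b m *
        (ratioTrace (g / e) / φ e * ramanujanRatio (g / e) m) := by
    intro e he
    have hdvd := Nat.dvd_of_mem_divisors he
    have hga := hag.coprime_dvd_right (Nat.div_dvd_of_dvd hdvd)
    have hgb := hbg.coprime_dvd_right (Nat.div_dvd_of_dvd hdvd)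
    rw [ha, hb, Nat.mul_div_assoc a hdvd, Nat.mul_div_assoc b hdvd, Nat.gcd_mul_right,
      Nat.lcm_mul_right, hab.gcd_eq_one, one_mul, hab.lcm_eq_mul,
      ramanujanRatio_mul_of_coprime (hga.mul_left hgb), ramanujanRatio_mul_of_coprime hab]
    ring
  rw [sum_congr rfl hterm, ← mul_sum, ← ramanujanRatio_sq hgsq]
  conv_lhs => rw [ha, hb, ramanujanRatio_mul_of_coprime hag, ramanujanRatio_mul_of_coprime hbg]
  ring

lemma sum_sieveRange_multiples (R : ℕ) {e : ℕ} (he : 0 < e) (f : ℕ → ℝ) :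
    ∑ r ∈ sieveRange R with e ∣ r, f (r / e) =
      ∑ a ∈ sieveRange R with e * a ∈ sieveRange R, f a := by
  refine sum_nbij' (· / e) (e * ·) ?_ ?_ ?_ ?_ fun _ _ => rfl
  · intro r hr
    rw [mem_filter] at hr ⊢
    rw [Nat.mul_div_cancel' hr.2]
    exact ⟨sieveRange_of_dvd hr.1 (Nat.div_dvd_of_dvd hr.2), hr.1⟩
  · intro a ha
    rw [mem_filter] at ha ⊢
    exact ⟨ha.2, dvd_mul_right e a⟩
  · exact fun r hr => Nat.mul_div_cancel' (mem_filter.1 hr).2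
  · exact fun a _ => Nat.mul_div_cancel_left a he

lemma lcm_mem_sieveRange {R a b : ℕ} (ha : a ∈ sieveRange R) (hb : b ∈ sieveRange R) :
    a.lcm b ∈ sieveRange (R ^ 2) := by
  rw [mem_sieveRange] at *
  refine ⟨⟨Nat.lcm_pos ha.1.1 hb.1.1, ?_⟩, ?_, ?_⟩
  · calc a.lcm b ≤ a * b := Nat.le_of_dvd (Nat.mul_pos ha.1.1 hb.1.1) (Nat.lcm_dvd_mul a b)
      _ ≤ R ^ 2 := by rw [pow_two]; exact Nat.mul_le_mul ha.1.2 hb.1.2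
  · rw [Nat.squarefree_iff_factorization_le_one (Nat.lcm_pos ha.1.1 hb.1.1).ne',
      Nat.factorization_lcm (Nat.ne_of_gt ha.1.1) (Nat.ne_of_gt hb.1.1)]
    exact fun p => sup_le (ha.2.1.natFactorization_le_one p) (hb.2.1.natFactorization_le_one p)
  · exact (ha.2.2.mul_left hb.2.2).coprime_dvd_left (Nat.lcm_dvd_mul a b)

lemma sq_sum_ramanujanRatio (R m : ℕ) :
    (∑ r ∈ sieveRange R, ramanujanRatio r m) ^ 2 =
      ∑ e ∈ sieveRange R, ∑ x ∈ sieveRange R ×ˢ sieveRange R with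
        e * x.1 ∈ sieveRange R ∧ e * x.2 ∈ sieveRange R,
          ratioTrace (x.1.gcd x.2) / φ e * ramanujanRatio (x.1.lcm x.2) m := by
  set S := sieveRange R
  let F : ℕ → ℕ → ℕ → ℝ := fun e a b =>
    ratioTrace (a.gcd b) / φ e * ramanujanRatio (a.lcm b) m
  have hdivisors : ∀ r ∈ S, ∀ r', (r.gcd r').divisors = {e ∈ S | e ∣ r ∧ e ∣ r'} := by
    intro r hr r'
    ext e
    have := Nat.gcd_pos_of_pos_left r' (mem_sieveRange.1 hr).1.1
    simp only [Nat.mem_divisors, mem_filter, Nat.dvd_gcd_iff]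
    exact ⟨fun h => ⟨sieveRange_of_dvd hr h.1.1, h.1⟩, fun h => ⟨h.2, by omega⟩⟩
  calc _ = ∑ r ∈ S, ∑ r' ∈ S, ∑ e ∈ S, if e ∣ r ∧ e ∣ r' then F e (r / e) (r' / e) else 0 := by
        rw [pow_two, sum_mul_sum]
        refine sum_congr rfl fun r hr => sum_congr rfl fun r' hr' => ?_
        rw [ramanujanRatio_mul (mem_sieveRange.1 hr).2.1 (mem_sieveRange.1 hr').2.1,
          hdivisors r hr, sum_filter]
    _ = ∑ e ∈ S, ∑ r ∈ S with e ∣ r, ∑ r' ∈ S with e ∣ r', F e (r / e) (r' / e) := by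
        rw [sum_congr rfl fun r _ => sum_comm, sum_comm]
        simp only [sum_filter, ite_and, sum_ite_irrel, sum_const_zero]
    _ = ∑ e ∈ S, ∑ a ∈ S with e * a ∈ S, ∑ b ∈ S with e * b ∈ S, F e a b := by
        refine sum_congr rfl fun e he => ?_
        have he0 := (mem_sieveRange.1 he).1.1
        rw [← sum_sieveRange_multiples R he0 fun a => ∑ b ∈ S with e * b ∈ S, F e a b]
        exact sum_congr rfl fun r _ => sum_sieveRange_multiples R he0 _
    _ = _ := sum_congr rfl fun e _ => by
        rw [← sum_product', filter_product (e * · ∈ S) (e * · ∈ S)]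

lemma majorant_eq_sum_ramanujanRatio (R m : ℕ) :
    majorant R m = ∑ q ∈ sieveRange (R ^ 2), majorantCoeff R q * ramanujanRatio q m := by
  let S := sieveRange R
  let F : ℕ → ℕ × ℕ → ℝ := fun e x =>
    ratioTrace (x.1.gcd x.2) / φ e * ramanujanRatio (x.1.lcm x.2) m
  have hpairs : (∑ r ∈ S, ramanujanRatio r m) ^ 2 =
      ∑ e ∈ S, ∑ x ∈ S ×ˢ S with e * x.1 ∈ S ∧ e * x.2 ∈ S, F e x :=
    sq_sum_ramanujanRatio R m
  have hlcm : ∀ e ∈ S, ∑ x ∈ S ×ˢ S with e * x.1 ∈ S ∧ e * x.2 ∈ S, F e x =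
      ∑ q ∈ sieveRange (R ^ 2), ∑ x ∈ S ×ˢ S with (e * x.1 ∈ S ∧ e * x.2 ∈ S) ∧ x.1.lcm x.2 = q,
        ratioTrace (x.1.gcd x.2) / φ e * ramanujanRatio q m := by
    intro e _
    rw [← sum_fiberwise_of_maps_to (t := sieveRange (R ^ 2)) (g := fun x => x.1.lcm x.2)]
    · refine sum_congr rfl fun q _ => ?_
      rw [filter_filter]
      refine sum_congr rfl fun x hx => ?_
      rw [← (mem_filter.1 hx).2.2]
    · intro x hx
      have hx := mem_product.1 (mem_filter.1 hx).1
      exact lcm_mem_sieveRange hx.1 hx.2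
  rw [majorant, div_pow, hpairs, sum_congr rfl hlcm, sum_comm, sum_div]
  refine sum_congr rfl fun q _ => ?_
  simp only [majorantCoeff, ← sum_mul, S]
  ring

lemma majorantCoeff_one {R : ℕ} (hR : 1 ≤ R) : majorantCoeff R 1 = 1 / selbergSum R := by
  have hL := (selbergSum_pos hR).ne'
  have hpair : ∀ e ∈ sieveRange R, {x ∈ sieveRange R ×ˢ sieveRange R |
      (e * x.1 ∈ sieveRange R ∧ e * x.2 ∈ sieveRange R) ∧ x.1.lcm x.2 = 1} = {(1, 1)} := by
    intro e he
    ext ⟨a, b⟩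
    simp only [mem_filter, mem_product, mem_singleton, Prod.mk.injEq, Nat.lcm_eq_one_iff]
    refine ⟨fun h => h.2.2, ?_⟩
    rintro ⟨rfl, rfl⟩
    simp [one_mem_sieveRange hR, he]
  rw [majorantCoeff, sum_congr rfl fun e he => by rw [hpair e he, sum_singleton]]
  simp only [Nat.gcd_self, ratioTrace, Nat.primeFactors_one, prod_empty]
  rw [← selbergSum]
  field_simp

lemma abs_majorantCoeff_le {R q : ℕ} (hR : 1 ≤ R) (hq : Squarefree q) :
    |majorantCoeff R q| ≤ 3 ^ ω q / selbergSum R := by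
  have hL := selbergSum_pos hR
  have hinner : ∀ e ∈ sieveRange R, |∑ x ∈ sieveRange R ×ˢ sieveRange R with
      (e * x.1 ∈ sieveRange R ∧ e * x.2 ∈ sieveRange R) ∧ x.1.lcm x.2 = q,
        ratioTrace (x.1.gcd x.2) / φ e| ≤ 3 ^ ω q * (1 / φ e) := by
    intro e _
    refine (abs_sum_le_sum_abs _ _).trans ?_
    calc _ ≤ ∑ x ∈ sieveRange R ×ˢ sieveRange R with
          (e * x.1 ∈ sieveRange R ∧ e * x.2 ∈ sieveRange R) ∧ x.1.lcm x.2 = q, 1 / (φ e : ℝ) := by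
          refine sum_le_sum fun x _ => ?_
          rw [abs_div, Nat.abs_cast]
          gcongr
          exact abs_ratioTrace_le_one _
      _ ≤ ∑ x ∈ q.divisors ×ˢ q.divisors with x.1.lcm x.2 = q, 1 / (φ e : ℝ) := by
          refine sum_le_sum_of_subset_of_nonneg ?_ fun _ _ _ => by positivity
          rintro ⟨a, b⟩ hx
          have hlcm : a.lcm b = q := (mem_filter.1 hx).2.2
          simp only [mem_filter, mem_product, Nat.mem_divisors]
          exact ⟨⟨⟨hlcm ▸ Nat.dvd_lcm_left a b, hq.ne_zero⟩,
            hlcm ▸ Nat.dvd_lcm_right a b, hq.ne_zero⟩, hlcm⟩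
      _ = _ := by
          rw [sum_const, Nat.card_pair_lcm_eq hq, nsmul_eq_mul]
          push_cast
          rfl
  rw [majorantCoeff, abs_div, abs_of_pos (by positivity : 0 < selbergSum R ^ 2), div_le_iff₀
    (by positivity)]
  refine (abs_sum_le_sum_abs _ _).trans ((sum_le_sum hinner).trans_eq ?_)
  rw [← mul_sum, ← selbergSum]
  field_simp

/-! ### The sieve bound for short intervals -/

/-- The sum `B = ∑ σ(r) / φ(r)` over the sieve range, which bounds the error term of the sieve. -/
noncomputable def sieveErrorSum (R : ℕ) : ℝ :=
  ∑ r ∈ sieveRange R, (∑ d ∈ r.divisors, (d : ℝ)) / (φ r : ℝ)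

lemma sieveErrorSum_nonneg (R : ℕ) : 0 ≤ sieveErrorSum R := by
  rw [sieveErrorSum]
  positivity

lemma moebius_mul_card_multiples_lcm_le {d d' : ℕ} (hd : 0 < d) (hd' : 0 < d')
    (hd30 : Nat.Coprime d 30) (hd30' : Nat.Coprime d' 30) (a N : ℕ) :
    (μ d : ℝ) * d * (μ d' * d') * #{m ∈ Ioc a (a + N) | d.lcm d' ∣ m ∧ Nat.Coprime m 30} ≤
      4 / 15 * N * (μ d * μ d' * (d.gcd d' : ℕ)) + 28 / 15 * (d * d') := by
  have hlcm : 0 < d.lcm d' := Nat.lcm_pos hd hd'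
  have hlcm30 : Nat.Coprime (d.lcm d') 30 :=
    (hd30.mul_left hd30').coprime_dvd_left (Nat.lcm_dvd_mul d d')
  have hcount := abs_card_multiples_interval_sub_le _ a N hlcm hlcm30
  set count := (#{m ∈ Ioc a (a + N) | d.lcm d' ∣ m ∧ Nat.Coprime m 30} : ℝ)
  have hmain : (μ d : ℝ) * d * (μ d' * d') * (4 / 15 * (N / (d.lcm d' : ℕ))) =
      4 / 15 * N * (μ d * μ d' * (d.gcd d' : ℕ)) := by
    have h0 : ((d.lcm d' : ℕ) : ℝ) ≠ 0 := by exact_mod_cast hlcm.ne'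
    have hgcd : (d : ℝ) * d' = (d.gcd d' : ℕ) * (d.lcm d' : ℕ) := by
      exact_mod_cast (Nat.gcd_mul_lcm d d').symm
    rw [mul_mul_mul_comm (μ d : ℝ), hgcd]
    field_simp
  have hμ : |(μ d : ℝ) * d * (μ d' * d')| ≤ d * d' := by
    have h1 : |(μ d : ℝ)| ≤ 1 := by exact_mod_cast abs_moebius_le_one (n := d)
    have h2 : |(μ d' : ℝ)| ≤ 1 := by exact_mod_cast abs_moebius_le_one (n := d')
    rw [abs_mul, abs_mul, abs_mul, Nat.abs_cast, Nat.abs_cast]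
    gcongr
    · exact mul_le_of_le_one_left (Nat.cast_nonneg d) h1
    · exact mul_le_of_le_one_left (Nat.cast_nonneg d') h2
  have herror : (μ d : ℝ) * d * (μ d' * d') * (count - 4 / 15 * (N / (d.lcm d' : ℕ))) ≤
      d * d' * (28 / 15) := by
    refine (le_abs_self _).trans ?_
    rw [abs_mul]
    exact mul_le_mul hμ hcount (abs_nonneg _) (by positivity)
  linarith

lemma sum_ramanujanRatio_mul_interval_le {r s : ℕ} (hr : Squarefree r) (hs : Squarefree s)
    (hr30 : Nat.Coprime r 30) (hs30 : Nat.Coprime s 30) (a N : ℕ) :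
    ∑ m ∈ Ioc a (a + N) with Nat.Coprime m 30, ramanujanRatio r m * ramanujanRatio s m ≤
      4 / 15 * N * (if r = s then 1 / (φ r : ℝ) else 0) +
        28 / 15 * ((∑ d ∈ r.divisors, (d : ℝ)) / φ r * ((∑ d ∈ s.divisors, (d : ℝ)) / φ s)) := by
  have hφr : (0 : ℝ) < φ r := by exact_mod_cast Nat.totient_pos.2 (Nat.pos_of_ne_zero hr.ne_zero)
  have hφs : (0 : ℝ) < φ s := by exact_mod_cast Nat.totient_pos.2 (Nat.pos_of_ne_zero hs.ne_zero)
  have hcount : ∑ m ∈ Ioc a (a + N) with Nat.Coprime m 30,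
      (∑ d ∈ r.divisors, if d ∣ m then (μ d : ℝ) * d else 0) *
        (∑ d' ∈ s.divisors, if d' ∣ m then (μ d' : ℝ) * d' else 0) =
      ∑ d ∈ r.divisors, ∑ d' ∈ s.divisors, μ d * d * (μ d' * d') *
        (#{m ∈ Ioc a (a + N) | d.lcm d' ∣ m ∧ Nat.Coprime m 30} : ℝ) := by
    simp only [sum_mul_sum]
    rw [sum_comm]
    refine sum_congr rfl fun d _ => ?_
    rw [sum_comm]
    refine sum_congr rfl fun d' _ => ?_
    simp only [ite_zero_mul_ite_zero, ← Nat.lcm_dvd_iff]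
    rw [← sum_filter, sum_const, filter_filter, nsmul_eq_mul, mul_comm]
    simp only [and_comm]
  simp only [ramanujanRatio_eq_sum_divisors hr, ramanujanRatio_eq_sum_divisors hs, div_mul_div_comm]
  rw [← sum_div, hcount, div_le_iff₀ (by positivity)]
  calc _ ≤ ∑ d ∈ r.divisors, ∑ d' ∈ s.divisors,
        (4 / 15 * N * ((μ d : ℝ) * μ d' * (d.gcd d' : ℕ)) + 28 / 15 * (d * d')) :=
        sum_le_sum fun d hd => sum_le_sum fun d' hd' => moebius_mul_card_multiples_lcm_le
          (Nat.pos_of_mem_divisors hd) (Nat.pos_of_mem_divisors hd')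
          (hr30.coprime_dvd_left (Nat.dvd_of_mem_divisors hd))
          (hs30.coprime_dvd_left (Nat.dvd_of_mem_divisors hd')) a N
    _ = 4 / 15 * N * (if r = s then (φ r : ℝ) else 0) +
        28 / 15 * ((∑ d ∈ r.divisors, (d : ℝ)) * ∑ d ∈ s.divisors, (d : ℝ)) := by
        rw [← sum_moebius_mul_moebius_mul_gcd hr hs, sum_mul_sum]
        simp only [sum_add_distrib, mul_sum]
    _ = _ := by
        split_ifs with h
        · subst h
          field_simp
        · field_simp
          ring

lemma sum_majorant_interval_le {R : ℕ} (hR : 1 ≤ R) (a N : ℕ) :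
    ∑ m ∈ Ioc a (a + N) with Nat.Coprime m 30, majorant R m ≤
      4 / 15 * N / selbergSum R + 28 / 15 * (sieveErrorSum R / selbergSum R) ^ 2 := by
  have hL := selbergSum_pos hR
  have hsq : ∑ m ∈ Ioc a (a + N) with Nat.Coprime m 30, majorant R m =
      (∑ r ∈ sieveRange R, ∑ s ∈ sieveRange R, ∑ m ∈ Ioc a (a + N) with Nat.Coprime m 30,
        ramanujanRatio r m * ramanujanRatio s m) / selbergSum R ^ 2 := by
    rw [sum_congr rfl fun r _ => sum_comm, sum_comm, sum_div]
    refine sum_congr rfl fun m _ => ?_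
    rw [majorant, div_pow, pow_two (∑ r ∈ sieveRange R, ramanujanRatio r m), sum_mul_sum]
  rw [hsq, div_le_iff₀ (by positivity)]
  calc _ ≤ ∑ r ∈ sieveRange R, ∑ s ∈ sieveRange R,
        (4 / 15 * N * (if r = s then 1 / (φ r : ℝ) else 0) +
          28 / 15 * ((∑ d ∈ r.divisors, (d : ℝ)) / φ r * ((∑ d ∈ s.divisors, (d : ℝ)) / φ s))) := by
        refine sum_le_sum fun r hr => sum_le_sum fun s hs => ?_
        have hr := (mem_sieveRange.1 hr).2
        have hs := (mem_sieveRange.1 hs).2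
        exact sum_ramanujanRatio_mul_interval_le hr.1 hs.1 hr.2 hs.2 a N
    _ = 4 / 15 * N * selbergSum R + 28 / 15 * sieveErrorSum R ^ 2 := by
        rw [selbergSum, sieveErrorSum, pow_two, sum_mul_sum]
        simp only [sum_add_distrib, ← mul_sum, sum_ite_eq, sum_ite_mem, inter_self]
    _ = _ := by
        field_simp

lemma coprime_thirty_of_prime {p : ℕ} (hp : p.Prime) (h : 5 < p) : Nat.Coprime p 30 := by
  rw [Nat.Prime.coprime_iff_not_dvd hp]
  intro h2
  have h3 : (30 : ℕ) = 2 * (3 * 5) := by norm_num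
  rw [h3, hp.dvd_mul, hp.dvd_mul] at h2
  rcases h2 with h2 | h2 | h2 <;> have := Nat.le_of_dvd (by norm_num) h2 <;> omega

lemma card_primes_interval_le {R : ℕ} (hR : 1 ≤ R) (a N : ℕ) :
    (#{p ∈ Ioc a (a + N) | p.Prime ∧ R < p ∧ 5 < p} : ℝ) ≤
      4 / 15 * N / selbergSum R + 28 / 15 * (sieveErrorSum R / selbergSum R) ^ 2 := by
  refine le_trans ?_ (sum_majorant_interval_le hR a N)
  rw [card_eq_sum_ones]
  push_cast
  calc _ = ∑ p ∈ Ioc a (a + N) with p.Prime ∧ R < p ∧ 5 < p, majorant R p := by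
        refine sum_congr rfl fun p hp => ?_
        simp only [mem_filter] at hp
        exact (majorant_prime hR hp.2.1 hp.2.2.1).symm
    _ ≤ _ := by
        refine sum_le_sum_of_subset_of_nonneg ?_ fun m _ _ => majorant_nonneg R m
        intro p hp
        simp only [mem_filter] at hp ⊢
        exact ⟨hp.1, coprime_thirty_of_prime hp.2.1 hp.2.2.2⟩

/-! ### Sums over the sieve range -/

/-- The primes `7 ≤ p ≤ R`. -/
def sievePrimes (R : ℕ) : Finset ℕ := {p ∈ Icc 7 R | p.Prime}

lemma primeFactors_subset {R d : ℕ} (hd : d ∈ sieveRange R) : d.primeFactors ⊆ sievePrimes R := by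
  intro p hp
  have h := mem_sieveRange.1 hd
  have hpp := Nat.prime_of_mem_primeFactors hp
  have hpd := Nat.dvd_of_mem_primeFactors hp
  have hle := Nat.le_of_dvd h.1.1 hpd
  have hc : Nat.Coprime p 30 := h.2.2.coprime_dvd_left hpd
  simp only [sievePrimes, mem_filter, mem_Icc]
  refine ⟨⟨?_, hle.trans h.1.2⟩, hpp⟩
  by_contra hlt
  push Not at hlt
  interval_cases p <;> revert hc hpp <;> decide

lemma sum_sieveRange_le_prod (R : ℕ) (h : ℕ → ℝ) (h0 : ∀ p, 0 ≤ h p) :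
    ∑ d ∈ sieveRange R, ∏ p ∈ d.primeFactors, h p ≤ ∏ p ∈ sievePrimes R, (1 + h p) := by
  rw [prod_one_add]
  have hinj : Set.InjOn Nat.primeFactors (sieveRange R) := by
    intro a ha b hb hab
    have h1 := (mem_sieveRange.1 ha).2.1
    have h2 := (mem_sieveRange.1 hb).2.1
    rw [← Nat.prod_primeFactors_of_squarefree h1, ← Nat.prod_primeFactors_of_squarefree h2, hab]
  rw [← sum_image (f := fun t => ∏ p ∈ t, h p) hinj]
  refine sum_le_sum_of_subset_of_nonneg ?_ fun t _ _ => prod_nonneg fun p _ => h0 p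
  intro t ht
  obtain ⟨d, hd, rfl⟩ := mem_image.1 ht
  exact mem_powerset.2 (primeFactors_subset hd)

lemma hasSum_inv_factoredNumbers {r : ℕ} (hr : Squarefree r) :
    HasSum (fun m : Nat.factoredNumbers r.primeFactors => ((m : ℕ) : ℝ)⁻¹) (r / φ r) := by
  let inv : ℕ →* ℝ := (invMonoidHom : ℝ →* ℝ).comp (Nat.castRingHom ℝ : ℕ →* ℝ)
  have hinv : ∀ {p : ℕ}, p.Prime → ‖inv p‖ < 1 := by
    intro p hp
    change ‖(p : ℝ)⁻¹‖ < 1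
    rw [norm_inv, Real.norm_natCast]
    exact inv_lt_one_of_one_lt₀ (by exact_mod_cast hp.one_lt)
  have hsum := (EulerProduct.summable_and_hasSum_factoredNumbers_prod_filter_prime_geometric
    hinv r.primeFactors).2
  have hprod : ∏ p ∈ r.primeFactors with p.Prime, (1 - inv p)⁻¹ = r / φ r := by
    rw [filter_true_of_mem fun p hp => Nat.prime_of_mem_primeFactors hp, totient_eq_prod hr]
    conv_rhs => rw [cast_eq_prod hr]
    rw [← prod_div_distrib]
    refine prod_congr rfl fun p hp => ?_
    have hp1 : (1 : ℝ) < p := by exact_mod_cast (Nat.prime_of_mem_primeFactors hp).one_lt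
    have hp0 : (p : ℝ) - 1 ≠ 0 := by linarith
    change (1 - (p : ℝ)⁻¹)⁻¹ = p / (p - 1)
    field_simp
  rwa [hprod] at hsum

lemma sum_inv_le_of_primeFactors_eq {r : ℕ} (hr : Squarefree r) (S : Finset ℕ)
    (hS : ∀ m ∈ S, m ≠ 0 ∧ m.primeFactors = r.primeFactors) :
    ∑ m ∈ S, 1 / (m : ℝ) ≤ 1 / (φ r : ℝ) := by
  have hr0 : (0 : ℝ) < r := by exact_mod_cast Nat.pos_of_ne_zero hr.ne_zero
  have hdvd : ∀ m ∈ S, r ∣ m := fun m hm => by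
    rw [← Nat.prod_primeFactors_of_squarefree hr, ← (hS m hm).2]
    exact Nat.prod_primeFactors_dvd m
  have hmem : ∀ m ∈ S, m / r ∈ Nat.factoredNumbers r.primeFactors := fun m hm => by
    rw [Nat.mem_factoredNumbers_iff_primeFactors_subset]
    have hd := Nat.div_dvd_of_dvd (hdvd m hm)
    exact ⟨ne_zero_of_dvd_ne_zero (hS m hm).1 hd,
      (hS m hm).2 ▸ Nat.primeFactors_mono hd (hS m hm).1⟩
  let quot : S → Nat.factoredNumbers r.primeFactors := fun m => ⟨m.1 / r, hmem m.1 m.2⟩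
  have hquot : Function.Injective quot := by
    intro a b hab
    have : a.1 / r = b.1 / r := congrArg Subtype.val hab
    apply Subtype.ext
    rw [← Nat.div_mul_cancel (hdvd a.1 a.2), this, Nat.div_mul_cancel (hdvd b.1 b.2)]
  have hle := sum_le_hasSum (S.attach.map ⟨quot, hquot⟩) (fun i _ => by positivity)
    (hasSum_inv_factoredNumbers hr)
  rw [sum_map] at hle
  calc ∑ m ∈ S, 1 / (m : ℝ) = 1 / r * ∑ m ∈ S.attach, ((m.1 / r : ℕ) : ℝ)⁻¹ := by
        rw [sum_attach S fun m => ((m / r : ℕ) : ℝ)⁻¹, mul_sum]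
        refine sum_congr rfl fun m hm => ?_
        rw [Nat.cast_div (hdvd m hm) hr0.ne']
        field_simp
    _ ≤ 1 / r * (r / φ r) := by gcongr; exact hle
    _ = 1 / φ r := by field_simp

-- Group the integers `m ≤ R` by their radical.
lemma sum_inv_le_selbergSum (R : ℕ) :
    ∑ m ∈ Ioc 0 R with Nat.Coprime m 30, 1 / (m : ℝ) ≤ selbergSum R := by
  rw [selbergSum,
    ← sum_fiberwise_of_maps_to (t := sieveRange R) (g := fun m => ∏ p ∈ m.primeFactors, p)]
  · refine sum_le_sum fun r hr => sum_inv_le_of_primeFactors_eq (mem_sieveRange.1 hr).2.1 _ ?_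
    intro m hm
    simp only [mem_filter, mem_Ioc] at hm
    refine ⟨by omega, ?_⟩
    rw [← hm.2, Nat.primeFactors_prod_primeFactors]
  · intro m hm
    simp only [mem_filter, mem_Ioc] at hm
    have hd := Nat.prod_primeFactors_dvd m
    rw [mem_sieveRange]
    refine ⟨⟨Nat.pos_of_dvd_of_pos hd hm.1.1, (Nat.le_of_dvd hm.1.1 hd).trans hm.1.2⟩, ?_,
      hm.2.coprime_dvd_left hd⟩
    rw [← Nat.radical_eq_prod_primeFactors]
    exact UniqueFactorizationMonoid.squarefree_radical

/-- The sum of `1 / m` over the integers `m ≤ t` coprime to `30`. -/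
noncomputable def wheelHarmonic (t : ℕ) : ℝ := ∑ m ∈ Ioc 0 t with Nat.Coprime m 30, 1 / (m : ℝ)

lemma sum_coprime_succ (g : ℕ → ℝ) (t : ℕ) :
    ∑ m ∈ Ioc 0 (t + 1) with Nat.Coprime m 30, g m =
      (∑ m ∈ Ioc 0 t with Nat.Coprime m 30, g m) +
        (if Nat.Coprime (t + 1) 30 then 1 else 0) * g (t + 1) := by
  rw [sum_filter, sum_filter, ← Finset.insert_Ioc_right_eq_Ioc_add_one (by omega),
    sum_insert (by simp), add_comm]
  congr 1
  split_ifs <;> simp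

lemma log_add_one_le {x : ℝ} (hx : 0 < x) : Real.log (x + 1) ≤ Real.log x + 1 / x := by
  have h := Real.log_le_sub_one_of_pos (x := (x + 1) / x) (by positivity)
  rw [Real.log_div (by positivity) hx.ne'] at h
  have : (x + 1) / x - 1 = 1 / x := by field_simp; ring
  linarith

lemma wheelCount_succ_cast (t : ℕ) : (wheelCount (t + 1) : ℝ) =
    wheelCount t + if Nat.Coprime (t + 1) 30 then 1 else 0 := by
  rw [wheelCount_succ]; push_cast; rfl

-- Partial summation, started at `T`, against the lower bound `15 W(t) ≥ 4 t - 10` for `wheelCount`.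
lemma wheelHarmonic_ge {T R : ℕ} (hT : 1 ≤ T) (hR : T ≤ R) (K : ℝ)
    (hK : K + wheelCount T / T + 4 / 15 * Real.log (T + 1) + 2 / 3 / T ≤ wheelHarmonic T) :
    K + wheelCount R / R + 4 / 15 * Real.log (R + 1) + 2 / 3 / R ≤ wheelHarmonic R := by
  induction R, hR using Nat.le_induction with
  | base => exact hK
  | succ R hR ih =>
    have hR0 : (0 : ℝ) < R := by exact_mod_cast (by omega : 0 < R)
    rw [wheelHarmonic] at ih ⊢
    rw [sum_coprime_succ (fun m => 1 / (m : ℝ)) R, wheelCount_succ_cast]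
    have hW : (4 : ℝ) * (R + 1) ≤ 15 * wheelCount R + 14 := by
      exact_mod_cast (wheelCount_bounds R).2
    have hlog := log_add_one_le (x := (R : ℝ) + 1) (by positivity)
    have hstep : (wheelCount R : ℝ) / (R + 1) + 4 / 15 * (1 / (R + 1)) + 2 / 3 / (R + 1) ≤
        wheelCount R / R + 2 / 3 / R := by
      have hadd : (wheelCount R : ℝ) / (R + 1) + 4 / 15 * (1 / (R + 1)) + 2 / 3 / (R + 1) =
          (wheelCount R + 14 / 15) / (R + 1) := by ring
      rw [hadd, ← add_div, div_le_div_iff₀ (by positivity) (by positivity)]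
      linarith
    push_cast
    rw [add_div, div_eq_mul_one_div (ite _ _ _)]
    linarith

lemma selbergSum_ge_of_wheelHarmonic {T R : ℕ} (hT : 1 ≤ T) (hR : T ≤ R) (K : ℝ)
    (hK : K + wheelCount T / T + 4 / 15 * Real.log (T + 1) + 2 / 3 / T ≤ wheelHarmonic T) :
    4 / 15 * (Real.log (R + 1) + 1 + 15 / 4 * K) ≤ selbergSum R := by
  have h1 := wheelHarmonic_ge hT hR K hK
  have h2 : wheelHarmonic R ≤ selbergSum R := sum_inv_le_selbergSum R
  have hR0 : (0 : ℝ) < R := by exact_mod_cast (by omega : 0 < R)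
  have h3 : (4 : ℝ) * (R + 1) ≤ 15 * wheelCount R + 14 := by
    exact_mod_cast (wheelCount_bounds R).2
  have h4 : 4 / 15 ≤ (wheelCount R : ℝ) / R + 2 / 3 / R := by
    rw [← add_div, le_div_iff₀ hR0]
    linarith
  linarith

-- Rounding each term down to nine decimals leaves an integer sum for the kernel to evaluate.
lemma wheelHarmonic_ge_div (t : ℕ) :
    ((∑ m ∈ Ioc 0 t, if Nat.gcd m 30 = 1 then 10 ^ 9 / m else 0 : ℕ) : ℝ) / 10 ^ 9 ≤
      wheelHarmonic t := by
  rw [wheelHarmonic, div_le_iff₀ (by positivity), sum_filter, sum_mul]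
  push_cast
  refine sum_le_sum fun m _ => ?_
  simp only [Nat.coprime_iff_gcd_eq_one]
  split_ifs
  · have := Nat.cast_div_le (α := ℝ) (m := 10 ^ 9) (n := m)
    push_cast at this
    rw [one_div_mul_eq_div]
    exact this.trans_eq (by norm_num)
  · simp

lemma selbergSum_ge_of_80_le {R : ℕ} (hR : 80 ≤ R) :
    4 / 15 * (Real.log (R + 1) + 2.177) ≤ selbergSum R := by
  have h := wheelHarmonic_ge_div 80
  have h1 : ∑ m ∈ Ioc 0 80, (if Nat.gcd m 30 = 1 then 10 ^ 9 / m else 0) = 1769285605 := by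
    decide +kernel
  have h2 : wheelCount 80 = 22 := by unfold wheelCount; decide +kernel
  rw [h1] at h
  have h3 : Real.log ((80 : ℕ) + 1) = 4 * Real.log 3 := by
    rw [← Real.log_rpow (by norm_num)]; norm_num
  have h4 := Real.log_three_lt_d9
  refine le_trans ?_ (selbergSum_ge_of_wheelHarmonic (T := 80) (by norm_num) hR (1.177 * 4 / 15) ?_)
  · apply le_of_eq; ring
  · refine le_trans ?_ h
    rw [h2, h3]
    norm_num
    linarith

lemma selbergSum_ge_of_239_le {R : ℕ} (hR : 239 ≤ R) :
    4 / 15 * (Real.log (R + 1) + 2.207) ≤ selbergSum R := by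
  have h := wheelHarmonic_ge_div 239
  have h1 : ∑ m ∈ Ioc 0 239, (if Nat.gcd m 30 = 1 then 10 ^ 9 / m else 0) = 2054056119 := by
    decide +kernel
  have h2 : wheelCount 239 = 64 := by unfold wheelCount; decide +kernel
  rw [h1] at h
  have h3 : Real.log ((239 : ℕ) + 1) = 4 * Real.log 2 + Real.log 3 + Real.log 5 := by
    rw [← Real.log_rpow (by norm_num), ← Real.log_mul (by norm_num) (by norm_num),
      ← Real.log_mul (by norm_num) (by norm_num)]; norm_num
  have h4 := Real.log_three_lt_d9
  have h5 := Real.log_two_lt_d9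
  have h6 := Real.log_five_lt_d9
  refine le_trans ?_
    (selbergSum_ge_of_wheelHarmonic (T := 239) (by norm_num) hR (1.207 * 4 / 15) ?_)
  · apply le_of_eq; ring
  · refine le_trans ?_ h
    rw [h2, h3]
    norm_num
    linarith

lemma sieveErrorSum_eq (R : ℕ) : sieveErrorSum R =
    ∑ d ∈ sieveRange R, (∏ p ∈ d.primeFactors, 2 / ((p : ℝ) - 1)) *
      #{r ∈ sieveRange R | d ∣ r} := by
  have h1 : ∀ r ∈ sieveRange R, (∑ d ∈ r.divisors, (d : ℝ)) / (φ r : ℝ) =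
      ∑ d ∈ sieveRange R, if d ∣ r then ∏ p ∈ d.primeFactors, 2 / ((p : ℝ) - 1) else 0 := by
    intro r hr
    have hsq := (mem_sieveRange.1 hr).2.1
    have h3 : {d ∈ sieveRange R | d ∣ r} = r.divisors := by
      ext d
      simp only [mem_filter, Nat.mem_divisors]
      constructor
      · rintro ⟨_, h⟩
        exact ⟨h, by have := (mem_sieveRange.1 hr).1.1; omega⟩
      · rintro ⟨h, _⟩
        exact ⟨sieveRange_of_dvd hr h, h⟩
    rw [← sum_filter, h3, sum_divisors_prod_primeFactors hsq, totient_eq_prod hsq]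
    have h4 : ∑ d ∈ r.divisors, (d : ℝ) = ∑ d ∈ r.divisors, ∏ p ∈ d.primeFactors, (p : ℝ) :=
      sum_congr rfl fun d hd =>
        cast_eq_prod (hsq.squarefree_of_dvd (Nat.dvd_of_mem_divisors hd))
    rw [h4, sum_divisors_prod_primeFactors hsq, ← prod_div_distrib]
    refine prod_congr rfl fun p hp => ?_
    have hp2 : (1 : ℝ) < p := by exact_mod_cast (Nat.prime_of_mem_primeFactors hp).one_lt
    have : (p : ℝ) - 1 ≠ 0 := by linarith
    field_simp
    ring
  rw [sieveErrorSum, sum_congr rfl h1, sum_comm]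
  refine sum_congr rfl fun d _ => ?_
  rw [← sum_filter, sum_const, nsmul_eq_mul, mul_comm]

lemma inv_sqrt_add_one_le {x : ℝ} (hx : 0 ≤ x) : 1 / √(x + 1) ≤ 2 * (√(x + 1) - √x) := by
  have hpos : 0 < √(x + 1) := Real.sqrt_pos.2 (by positivity)
  rw [div_le_iff₀ hpos]
  nlinarith [Real.sq_sqrt hx, Real.sq_sqrt (by positivity : 0 ≤ x + 1)]

lemma sum_inv_sqrt_le_wheelCount {R : ℕ} (hR : 1 ≤ R) :
    ∑ m ∈ Ioc 0 R with Nat.Coprime m 30, 1 / √(m : ℝ) ≤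
      (wheelCount R - (4 * R + 14) / 15) / √(R : ℝ) + 8 / 15 * √(R : ℝ) + 14 / 15 := by
  induction R, hR using Nat.le_induction with
  | base =>
    have hW : wheelCount 1 = 1 := by unfold wheelCount; decide +kernel
    have hfilter : {m ∈ Ioc 0 1 | Nat.Coprime m 30} = {1} := by decide +kernel
    rw [hW, hfilter]
    norm_num
  | succ R hR ih =>
    have hR0 : (0 : ℝ) < R := by exact_mod_cast (by omega : 0 < R)
    have hW : (15 : ℝ) * wheelCount R ≤ 4 * R + 14 := by exact_mod_cast (wheelCount_bounds R).1
    have hstep : (wheelCount R - (4 * (R : ℝ) + 14) / 15) * (1 / √(R : ℝ)) ≤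
        (wheelCount R - (4 * (R : ℝ) + 14) / 15) * (1 / √((R : ℝ) + 1)) := by
      apply mul_le_mul_of_nonpos_left
      · gcongr
        linarith
      · linarith
    have hsqrt := inv_sqrt_add_one_le hR0.le
    rw [sum_coprime_succ, wheelCount_succ_cast]
    push_cast
    rw [div_eq_mul_one_div (_ - _ : ℝ)] at ih ⊢
    generalize (if Nat.Coprime (R + 1) 30 then (1 : ℝ) else 0) = δ
    linear_combination ih + hstep + 4 / 15 * hsqrt

lemma sum_inv_sqrt_le {R : ℕ} (hR : 1 ≤ R) :
    ∑ m ∈ Ioc 0 R with Nat.Coprime m 30, 1 / √(m : ℝ) ≤ 8 / 15 * √(R : ℝ) + 14 / 15 := by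
  have h1 := sum_inv_sqrt_le_wheelCount hR
  have hW : (15 : ℝ) * wheelCount R ≤ 4 * R + 14 := by exact_mod_cast (wheelCount_bounds R).1
  have h2 : (wheelCount R - (4 * (R : ℝ) + 14) / 15) / √(R : ℝ) ≤ 0 :=
    div_nonpos_of_nonpos_of_nonneg (by linarith) (Real.sqrt_nonneg _)
  linarith

lemma seven_le_of_mem_sievePrimes {R p : ℕ} (hp : p ∈ sievePrimes R) : (7 : ℝ) ≤ p := by
  simp only [sievePrimes, mem_filter, mem_Icc] at hp
  exact_mod_cast hp.1.1

lemma seven_le_of_mem_primeFactors {R d p : ℕ} (hd : d ∈ sieveRange R) (hp : p ∈ d.primeFactors) :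
    (7 : ℝ) ≤ p :=
  seven_le_of_mem_sievePrimes (primeFactors_subset hd hp)

lemma prod_two_div_le {R d : ℕ} (hd : d ∈ sieveRange R) :
    ∏ p ∈ d.primeFactors, 2 / ((p : ℝ) - 1) ≤ 1 / √(d : ℝ) := by
  have hsq := (mem_sieveRange.1 hd).2.1
  have h1 : 1 / √(d : ℝ) = ∏ p ∈ d.primeFactors, 1 / √(p : ℝ) := by
    rw [prod_div_distrib, prod_const_one, cast_eq_prod hsq, Real.sqrt_prod]
    exact fun p _ => Nat.cast_nonneg p
  rw [h1]
  refine prod_le_prod (fun p hp => ?_) fun p hp => ?_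
  · have h7 := seven_le_of_mem_primeFactors hd hp
    exact div_nonneg (by norm_num) (by linarith)
  · have h7 := seven_le_of_mem_primeFactors hd hp
    rw [div_le_div_iff₀ (by linarith) (Real.sqrt_pos.2 (by linarith)), one_mul]
    have h2 : 2 * √(p : ℝ) = √(4 * p) := by
      rw [Real.sqrt_mul (by norm_num)]
      congr 1
      rw [show (4 : ℝ) = 2 ^ 2 by norm_num, Real.sqrt_sq (by norm_num)]
    rw [h2]
    apply Real.sqrt_le_iff.2 ⟨by linarith, by nlinarith⟩

lemma sum_Ico_inv_odd_le {N : ℕ} (hN : 18 ≤ N) :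
    ∑ k ∈ Ico 18 N, 2 / ((2 * (k : ℝ) + 1) * (2 * k)) ≤ 1 / 35 - 1 / (2 * N - 1) := by
  induction N, hN using Nat.le_induction with
  | base => norm_num
  | succ N hN ih =>
    have hN' : (18 : ℝ) ≤ N := by exact_mod_cast hN
    have h0 : (0 : ℝ) < 2 * N - 1 := by linarith
    have htelescope : 1 / (2 * (N : ℝ) - 1) - 1 / (2 * (N + 1) - 1) =
        2 / ((2 * N + 1) * (2 * N - 1)) := by
      have : (2 : ℝ) * (N + 1) - 1 ≠ 0 := by linarith
      have h0' := h0.ne'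
      field_simp
      ring
    have hterm : 2 / ((2 * (N : ℝ) + 1) * (2 * N)) ≤ 2 / ((2 * N + 1) * (2 * N - 1)) := by
      gcongr
      linarith
    rw [sum_Ico_succ_top hN]
    push_cast
    linarith

-- Primes are enlarged to odd numbers.
lemma sum_large_sievePrimes_le (R : ℕ) :
    ∑ p ∈ sievePrimes R with ¬ p ≤ 36, 2 / ((p : ℝ) * (p - 1)) ≤ 1 / 35 := by
  set s := {p ∈ sievePrimes R | ¬ p ≤ 36}
  have hodd : ∀ p ∈ s, 37 ≤ p ∧ p ≤ R ∧ p = 2 * (p / 2) + 1 := by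
    intro p hp
    simp only [s, sievePrimes, mem_filter, mem_Icc] at hp
    have := hp.1.2.eq_two_or_odd
    omega
  have hinj : Set.InjOn (fun p : ℕ => p / 2) s := fun p hp q hq hpq => by
    have := hodd p hp
    have := hodd q hq
    have : p / 2 = q / 2 := hpq
    omega
  have hsub : s.image (fun p : ℕ => p / 2) ⊆ Ico 18 (R + 18) := by
    intro k hk
    obtain ⟨p, hp, rfl⟩ := mem_image.1 hk
    have := hodd p hp
    rw [mem_Ico]
    omega
  calc ∑ p ∈ s, 2 / ((p : ℝ) * (p - 1))
      = ∑ k ∈ s.image (fun p : ℕ => p / 2), 2 / ((2 * (k : ℝ) + 1) * (2 * k)) := by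
        rw [sum_image hinj]
        refine sum_congr rfl fun p hp => ?_
        have : (p : ℝ) = 2 * (p / 2 : ℕ) + 1 := by exact_mod_cast (hodd p hp).2.2
        rw [this, add_sub_cancel_right]
    _ ≤ ∑ k ∈ Ico 18 (R + 18), 2 / ((2 * (k : ℝ) + 1) * (2 * k)) :=
        sum_le_sum_of_subset_of_nonneg hsub fun k _ _ => by positivity
    _ ≤ 1 / 35 - 1 / (2 * (R + 18 : ℕ) - 1) := sum_Ico_inv_odd_le (by omega)
    _ ≤ 1 / 35 := by
        have : (0 : ℝ) ≤ R := R.cast_nonneg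
        have : (0 : ℝ) ≤ 1 / (2 * (R + 18 : ℕ) - 1) := by
          push_cast
          exact one_div_nonneg.2 (by linarith)
        linarith

lemma small_sievePrimes_subset (R : ℕ) :
    {p ∈ sievePrimes R | p ≤ 36} ⊆ {7, 11, 13, 17, 19, 23, 29, 31} := by
  intro p hp
  simp only [sievePrimes, mem_filter, mem_Icc] at hp
  obtain ⟨⟨⟨h1, _⟩, h2⟩, h3⟩ := hp
  interval_cases p <;> first | decide | (revert h2; decide)

lemma prod_sievePrimes_le (R : ℕ) :
    ∏ p ∈ sievePrimes R, (1 + 2 / ((p : ℝ) * (p - 1))) ≤ 1.137 := by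
  have hterm {p : ℕ} (h7 : (7 : ℝ) ≤ p) : 0 ≤ 2 / ((p : ℝ) * (p - 1)) :=
    div_nonneg zero_le_two (mul_nonneg (by linarith) (by linarith))
  have hsmall : ∏ p ∈ sievePrimes R with p ≤ 36, (1 + 2 / ((p : ℝ) * (p - 1))) ≤
      ∏ p ∈ ({7, 11, 13, 17, 19, 23, 29, 31} : Finset ℕ), (1 + 2 / ((p : ℝ) * (p - 1))) := by
    refine prod_le_prod_of_subset_of_one_le (small_sievePrimes_subset R) (fun p hp => ?_)
      fun p hp _ => ?_
    · linarith [hterm (seven_le_of_mem_sievePrimes (mem_filter.1 hp).1)]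
    · have h7 : 7 ≤ p := by clear * - hp; revert p; decide
      linarith [hterm (p := p) (by exact_mod_cast h7)]
  have hlarge : ∏ p ∈ sievePrimes R with ¬ p ≤ 36, (1 + 2 / ((p : ℝ) * (p - 1))) ≤ 1.029 := by
    calc _ ≤ ∏ p ∈ sievePrimes R with ¬ p ≤ 36, Real.exp (2 / ((p : ℝ) * (p - 1))) := by
          refine prod_le_prod (fun p hp => ?_) fun p _ => ?_
          · linarith [hterm (seven_le_of_mem_sievePrimes (mem_filter.1 hp).1)]
          · linarith [Real.add_one_le_exp (2 / ((p : ℝ) * (p - 1)))]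
      _ = Real.exp (∑ p ∈ sievePrimes R with ¬ p ≤ 36, 2 / ((p : ℝ) * (p - 1))) :=
          (Real.exp_sum _ _).symm
      _ ≤ Real.exp (1 / 35) := Real.exp_le_exp.2 (sum_large_sievePrimes_le R)
      _ ≤ 1.029 := by
          refine (Real.exp_bound' (n := 3) (by norm_num) (by norm_num) (by norm_num)).trans ?_
          norm_num [Finset.sum_range_succ, Nat.factorial]
  rw [← prod_filter_mul_prod_filter_not (sievePrimes R) (fun p => p ≤ 36)]
  refine (mul_le_mul hsmall hlarge (prod_nonneg fun p hp => ?_)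
    ((prod_nonneg fun p hp => ?_).trans hsmall)).trans (by norm_num)
  all_goals linarith [hterm (seven_le_of_mem_sievePrimes (mem_filter.1 hp).1)]

lemma card_multiples_sieveRange_le {R d : ℕ} (hd : d ∈ sieveRange R) :
    (#{r ∈ sieveRange R | d ∣ r} : ℝ) ≤ 4 / 15 * (R / d) + 14 / 15 := by
  obtain ⟨hd0, -, hd30⟩ := mem_sieveRange.1 hd
  have hsub : {r ∈ sieveRange R | d ∣ r} ⊆ {m ∈ Ioc 0 R | d ∣ m ∧ Nat.Coprime m 30} := by
    intro m hm
    simp only [mem_filter, mem_sieveRange, mem_Ioc] at hm ⊢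
    exact ⟨⟨hm.1.1.1, hm.1.1.2⟩, hm.2, hm.1.2.2⟩
  have hcard : (#{r ∈ sieveRange R | d ∣ r} : ℝ) ≤ wheelCount (R / d) := by
    rw [← card_multiples_le d R hd0.1 hd30]
    exact_mod_cast card_le_card hsub
  linarith [(abs_le.1 (wheelCount_div_bounds d R hd0.1)).2]

lemma sum_sieveRange_prod_two_div_mul_inv_le (R : ℕ) :
    ∑ d ∈ sieveRange R, (∏ p ∈ d.primeFactors, 2 / ((p : ℝ) - 1)) * (1 / d) ≤ 1.137 := by
  have hterm : ∀ d ∈ sieveRange R, (∏ p ∈ d.primeFactors, 2 / ((p : ℝ) - 1)) * (1 / d) =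
      ∏ p ∈ d.primeFactors, 2 / ((p : ℝ) * (p - 1)) := by
    intro d hd
    have hinv : 1 / (d : ℝ) = ∏ p ∈ d.primeFactors, 1 / (p : ℝ) := by
      rw [prod_div_distrib, prod_const_one, ← cast_eq_prod (mem_sieveRange.1 hd).2.1]
    rw [hinv, ← prod_mul_distrib]
    refine prod_congr rfl fun p _ => ?_
    rw [div_mul_div_comm, mul_one, mul_comm (p : ℝ)]
  rw [sum_congr rfl hterm]
  refine (sum_sieveRange_le_prod R (fun p => 2 / ((p : ℝ) * (p - 1))) fun p => ?_).trans
    (prod_sievePrimes_le R)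
  rcases Nat.eq_zero_or_pos p with rfl | h
  · simp
  · have h1 : (1 : ℝ) ≤ p := by exact_mod_cast h
    exact div_nonneg zero_le_two (mul_nonneg (by linarith) (by linarith))

lemma sum_sieveRange_prod_two_div_le {R : ℕ} (hR : 1 ≤ R) :
    ∑ d ∈ sieveRange R, ∏ p ∈ d.primeFactors, 2 / ((p : ℝ) - 1) ≤ 8 / 15 * √(R : ℝ) + 14 / 15 := by
  refine ((sum_le_sum fun d hd => prod_two_div_le hd).trans ?_).trans (sum_inv_sqrt_le hR)
  refine sum_le_sum_of_subset_of_nonneg (fun d hd => ?_) fun _ _ _ => by positivity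
  obtain ⟨hd0, -, hd30⟩ := mem_sieveRange.1 hd
  exact mem_filter.2 ⟨mem_Ioc.2 hd0, hd30⟩

/-- The main term comes from `σ(r) / φ(r) = ∑_{d ∣ r} ∏_{p ∣ d} 2 / (p - 1)` and the count of the
multiples of `d` coprime to `30`, the other two from the discrepancy of that count. -/
lemma sieveErrorSum_le {R : ℕ} (hR : 1 ≤ R) :
    sieveErrorSum R ≤ 0.3032 * R + 0.498 * √(R : ℝ) + 0.872 := by
  rw [sieveErrorSum_eq]
  calc _ ≤ ∑ d ∈ sieveRange R, (∏ p ∈ d.primeFactors, 2 / ((p : ℝ) - 1)) *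
        (4 / 15 * (R / d) + 14 / 15) := by
        refine sum_le_sum fun d hd => mul_le_mul_of_nonneg_left (card_multiples_sieveRange_le hd)
          (prod_nonneg fun p hp => div_nonneg zero_le_two ?_)
        linarith [seven_le_of_mem_primeFactors hd hp]
    _ = 4 / 15 * R * ∑ d ∈ sieveRange R, (∏ p ∈ d.primeFactors, 2 / ((p : ℝ) - 1)) * (1 / d) +
        14 / 15 * ∑ d ∈ sieveRange R, ∏ p ∈ d.primeFactors, 2 / ((p : ℝ) - 1) := by
        rw [mul_sum, mul_sum, ← sum_add_distrib]
        refine sum_congr rfl fun d _ => ?_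
        ring
    _ ≤ 4 / 15 * R * 1.137 + 14 / 15 * (8 / 15 * √(R : ℝ) + 14 / 15) := by
        gcongr
        · exact sum_sieveRange_prod_two_div_mul_inv_le R
        · exact sum_sieveRange_prod_two_div_le hR
    _ ≤ _ := by
        have : (0 : ℝ) ≤ R := Nat.cast_nonneg R
        have := Real.sqrt_nonneg (R : ℝ)
        linarith

lemma sieveRange_one : sieveRange 1 = {1} := by decide +kernel

lemma selbergSum_one : selbergSum 1 = 1 := by simp [selbergSum, sieveRange_one]

lemma sieveErrorSum_one : sieveErrorSum 1 = 1 := by simp [sieveErrorSum, sieveRange_one]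

lemma sieveRange_thirtyone : sieveRange 31 = {1, 7, 11, 13, 17, 19, 23, 29, 31} := by
  ext d
  rw [mem_sieveRange]
  constructor
  · rintro ⟨⟨h1, h2⟩, -, h3⟩
    interval_cases d <;> revert h3 <;> decide +kernel
  · intro h
    simp only [mem_insert, mem_singleton] at h
    rcases h with rfl | rfl | rfl | rfl | rfl | rfl | rfl | rfl | rfl <;>
      exact ⟨by norm_num, by decide +kernel, by norm_num⟩

lemma sum_sieveRange_thirtyone (f : ℕ → ℝ) : ∑ d ∈ sieveRange 31, f d =
    f 1 + f 7 + f 11 + f 13 + f 17 + f 19 + f 23 + f 29 + f 31 := by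
  rw [sieveRange_thirtyone]
  repeat rw [sum_insert (by decide)]
  rw [sum_singleton]
  ring

lemma selbergSum_thirtyone : selbergSum 31 ≥ 1.5825 := by
  have hφ : ∀ p ∈ ({7, 11, 13, 17, 19, 23, 29, 31} : Finset ℕ), φ p = p - 1 := by decide +kernel
  simp only [mem_insert, mem_singleton, forall_eq_or_imp, forall_eq] at hφ
  rw [selbergSum, sum_sieveRange_thirtyone]
  norm_num [hφ]

lemma sieveErrorSum_thirtyone : sieveErrorSum 31 ≤ 10.166 := by
  have hφ : ∀ p ∈ ({7, 11, 13, 17, 19, 23, 29, 31} : Finset ℕ), φ p = p - 1 := by decide +kernel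
  have hσ : ∀ p ∈ ({7, 11, 13, 17, 19, 23, 29, 31} : Finset ℕ), ∑ d ∈ p.divisors, d = p + 1 := by
    decide +kernel
  simp only [mem_insert, mem_singleton, forall_eq_or_imp, forall_eq] at hφ hσ
  rw [sieveErrorSum, sum_sieveRange_thirtyone]
  norm_num [hφ, ← Nat.cast_sum, hσ]

/-! ### Chebyshev's method -/

lemma log_factorial_eq (N : ℕ) :
    Real.log (N !) = ∑ m ∈ Ioc 0 N, vonMangoldt m * ((N / m : ℕ) : ℝ) := by
  rw [← sum_Ioc_mul_zeta_eq_sum, vonMangoldt_mul_zeta, ← Finset.prod_Ico_id_eq_factorial,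
    Nat.cast_prod, Real.log_prod fun k hk => by
      exact_mod_cast (Nat.lt_of_succ_le (mem_Ico.1 hk).1).ne']
  rfl

lemma log_factorial_div_eq (x d : ℕ) :
    Real.log ((x / d)!) = ∑ m ∈ Ioc 0 x, vonMangoldt m * ((x / m / d : ℕ) : ℝ) := by
  rw [log_factorial_eq]
  have h1 : ∀ m, x / d / m = x / m / d := fun m => by
    rw [Nat.div_div_eq_div_mul, Nat.div_div_eq_div_mul, mul_comm]
  simp only [h1]
  apply sum_subset
  · intro m hm
    simp only [mem_Ioc] at hm ⊢
    exact ⟨hm.1, hm.2.trans (Nat.div_le_self _ _)⟩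
  · intro m hm hm'
    simp only [mem_Ioc] at hm hm'
    rw [← h1, Nat.div_eq_of_lt (by omega)]
    simp

lemma log_factorial_bounds {N : ℕ} (hN : 1 ≤ N) :
    N * Real.log N - N + 1 ≤ Real.log (N !) ∧
      Real.log (N !) ≤ N * Real.log N - N + 1 + Real.log N := by
  induction N, hN using Nat.le_induction with
  | base => norm_num
  | succ N hN ih =>
    have hN0 : (0 : ℝ) < N := by exact_mod_cast hN
    have hf : (0 : ℝ) < (N ! : ℝ) := by exact_mod_cast Nat.factorial_pos N
    have h1 : Real.log ((N + 1)! : ℕ) = Real.log (N + 1) + Real.log (N !) := by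
      rw [Nat.factorial_succ, Nat.cast_mul, Real.log_mul (by positivity) hf.ne']
      push_cast; rfl
    have h2 : Real.log (N + 1) - Real.log N ≤ 1 / N := by
      rw [← Real.log_div (by positivity) (by positivity)]
      refine (Real.log_le_sub_one_of_pos (by positivity)).trans (le_of_eq ?_)
      field_simp
      ring
    have h3 : 1 / (N + 1 : ℝ) ≤ Real.log (N + 1) - Real.log N := by
      have h4 : Real.log (N / (N + 1)) ≤ N / (N + 1) - 1 :=
        Real.log_le_sub_one_of_pos (by positivity)
      rw [Real.log_div (by positivity) (by positivity)] at h4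
      have : (N : ℝ) / (N + 1) - 1 = - (1 / (N + 1)) := by field_simp; ring
      linarith
    rw [div_le_iff₀ (by positivity)] at h3
    rw [le_div_iff₀ hN0] at h2
    rw [h1]
    push_cast
    constructor <;> nlinarith [ih.1, ih.2]

lemma log_factorial_div_le {x d : ℕ} (hd : 1 ≤ d) (hx : d ≤ x) :
    Real.log ((x / d)!) ≤ (x / d : ℝ) * Real.log (x / d) - x / d + 1 + Real.log (x / d) := by
  have h1 : 1 ≤ x / d := (Nat.one_le_div_iff hd).2 hx
  have h2 := (log_factorial_bounds h1).2
  have h3 : ((x / d : ℕ) : ℝ) ≤ x / d := Nat.cast_div_le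
  have h4 : (1 : ℝ) ≤ (x / d : ℕ) := by exact_mod_cast h1
  set M : ℝ := ((x / d : ℕ) : ℝ)
  set y : ℝ := (x / d : ℝ)
  have hM0 : 0 < M := by linarith
  have hy0 : 0 < y := by linarith
  have h5 : Real.log M ≤ Real.log y := Real.log_le_log (by linarith) h3
  -- tangent line of the convex function `t log t - t` at `M`
  have h6 : M * Real.log M - M ≤ y * Real.log y - y := by
    have h7 : Real.log (M / y) ≤ M / y - 1 := Real.log_le_sub_one_of_pos (div_pos hM0 hy0)
    rw [Real.log_div hM0.ne' hy0.ne'] at h7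
    have h8 : y * (Real.log M - Real.log y) ≤ M - y := by
      calc y * (Real.log M - Real.log y) ≤ y * (M / y - 1) := by gcongr
        _ = M - y := by field_simp
    have h9 : 0 ≤ Real.log M := Real.log_nonneg h4
    nlinarith
  linarith

lemma div_le_natDiv_add_one (x d : ℕ) : (x / d : ℝ) ≤ (x / d : ℕ) + 1 := by
  rw [← Nat.floor_div_eq_div (K := ℝ)]
  exact (Nat.lt_floor_add_one _).le

lemma le_log_factorial_div {x d : ℕ} (hd : 1 ≤ d) (hx : d ≤ x) :
    (x / d : ℝ) * Real.log (x / d) - x / d + 1 - Real.log (x / d) ≤ Real.log ((x / d)!) := by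
  have h1 : 1 ≤ x / d := (Nat.one_le_div_iff hd).2 hx
  have h2 := (log_factorial_bounds h1).1
  have h3 : ((x / d : ℕ) : ℝ) ≤ x / d := Nat.cast_div_le
  have h3' := div_le_natDiv_add_one x d
  have h4 : (1 : ℝ) ≤ (x / d : ℕ) := by exact_mod_cast h1
  set M : ℝ := ((x / d : ℕ) : ℝ)
  set y : ℝ := (x / d : ℝ)
  have hM0 : 0 < M := by linarith
  have hy0 : 0 < y := by linarith
  -- tangent line of the convex function `t log t - t` at `y`
  have h7 : Real.log (y / M) ≤ y / M - 1 := Real.log_le_sub_one_of_pos (div_pos hy0 hM0)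
  rw [Real.log_div hy0.ne' hM0.ne'] at h7
  have h8 : M * (Real.log y - Real.log M) ≤ y - M := by
    calc M * (Real.log y - Real.log M) ≤ M * (y / M - 1) := by gcongr
      _ = y - M := by field_simp
  have h9 : 0 ≤ Real.log y := Real.log_nonneg (by linarith)
  nlinarith

lemma psi_natCast (x : ℕ) : Chebyshev.psi x = ∑ m ∈ Ioc 0 x, vonMangoldt m := by
  rw [Chebyshev.psi, Nat.floor_natCast]

-- The floor inequality behind the integrality of `(30 n)! n! / ((15 n)! (10 n)! (6 n)!)`.
lemma add_div_thirty_le (u : ℕ) : u + u / 30 ≤ 1 + u / 2 + u / 3 + u / 5 := by omega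

lemma log_factorial_add_log_factorial_le (x : ℕ) :
    Real.log (x !) + Real.log ((x / 30)!) ≤ Chebyshev.psi x + Real.log ((x / 2)!)
      + Real.log ((x / 3)!) + Real.log ((x / 5)!) := by
  rw [log_factorial_eq, psi_natCast]
  simp only [log_factorial_div_eq, ← sum_add_distrib]
  refine sum_le_sum fun m _ => ?_
  have hfloor : ((x / m : ℕ) : ℝ) + (x / m / 30 : ℕ) ≤
      1 + (x / m / 2 : ℕ) + (x / m / 3 : ℕ) + (x / m / 5 : ℕ) := by
    exact_mod_cast add_div_thirty_le (x / m)
  linarith [mul_le_mul_of_nonneg_left hfloor (vonMangoldt_nonneg (n := m))]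

lemma psi_ge_chebyshev {x : ℕ} (hx : 30 ≤ x) :
    0.92129 * x - 4 * Real.log x + 5.8 ≤ Chebyshev.psi x := by
  have hx0 : (30 : ℝ) ≤ x := by exact_mod_cast hx
  have hψ := log_factorial_add_log_factorial_le x
  have h1 := (log_factorial_bounds (N := x) (by omega)).1
  have h2 := log_factorial_div_le (x := x) (d := 2) (by norm_num) (by omega)
  have h3 := log_factorial_div_le (x := x) (d := 3) (by norm_num) (by omega)
  have h5 := log_factorial_div_le (x := x) (d := 5) (by norm_num) (by omega)
  have h30 := le_log_factorial_div (x := x) (d := 30) (by norm_num) (by omega)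
  push_cast at h2 h3 h5 h30
  rw [Real.log_div (by positivity) (by norm_num)] at h2 h3 h5 h30
  have hlog30 : Real.log 30 = Real.log 2 + Real.log 3 + Real.log 5 := by
    rw [← Real.log_mul (by norm_num) (by norm_num), ← Real.log_mul (by norm_num) (by norm_num)]
    norm_num
  rw [hlog30] at h30
  have hlog2 := Real.log_two_gt_d9
  have hlog3 := Real.log_three_gt_d9
  have hlog5 := Real.log_five_gt_d9
  have hconst : (0.92129 : ℝ) ≤ Real.log 2 / 2 + Real.log 3 / 3 + Real.log 5 / 5 -
      (Real.log 2 + Real.log 3 + Real.log 5) / 30 := by linarith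
  nlinarith [mul_le_mul_of_nonneg_right hconst (show (0 : ℝ) ≤ x by linarith)]

/-! ### Explicit Brun–Titchmarsh inequalities -/

lemma sq_sqrt_div_five_le (N : ℕ) : 5 * ((N / 5).sqrt : ℝ) ^ 2 ≤ N := by
  have h : (N / 5).sqrt ^ 2 ≤ N / 5 := Nat.sqrt_le' _
  exact_mod_cast (by omega : 5 * (N / 5).sqrt ^ 2 ≤ N)

lemma half_log_sub_le_log_sqrt_div_five {N : ℕ} (hN : 1 ≤ N) :
    Real.log N / 2 - 0.80472 ≤ Real.log ((N / 5).sqrt + 1) := by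
  have hlt : N / 5 < ((N / 5).sqrt + 1) ^ 2 := Nat.lt_succ_sqrt' _
  have hN' : (N : ℝ) ≤ 5 * ((N / 5).sqrt + 1) ^ 2 := by
    exact_mod_cast (by omega : N ≤ 5 * ((N / 5).sqrt + 1) ^ 2)
  have h := Real.log_le_log (by exact_mod_cast hN) hN'
  rw [Real.log_mul (by norm_num) (by positivity), Real.log_pow] at h
  have := Real.log_five_lt_d9
  push_cast at h
  linarith

-- `R = √(N / 5)` nearly minimises the sum of the main term and the error term of the sieve.
lemma card_primes_interval_le_of_sqrt {N R : ℕ} {κ β c : ℝ} (hN : 5 ≤ N)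
    (hR : R = Nat.sqrt (N / 5)) (hL : 4 / 15 * (Real.log (R + 1) + κ) ≤ selbergSum R)
    (hB : sieveErrorSum R ≤ β * R) (hβ : 0 ≤ β) (hc : 5.25 * β ^ 2 ≤ c) (hκ : 0.80472 ≤ κ) (a : ℕ) :
    (#{p ∈ Ioc a (a + N) | p.Prime ∧ R < p ∧ 5 < p} : ℝ) ≤
      N / (Real.log N / 2 + (κ - 0.80472)) + c * N / (Real.log N / 2 + (κ - 0.80472)) ^ 2 := by
  have hR1 : 1 ≤ R := by
    rw [hR, Nat.le_sqrt]
    omega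
  have hRN : 5 * (R : ℝ) ^ 2 ≤ N := hR ▸ sq_sqrt_div_five_le N
  have hlog : Real.log N / 2 - 0.80472 ≤ Real.log (R + 1) :=
    hR ▸ half_log_sub_le_log_sqrt_div_five (by omega)
  have hlogN : 0 < Real.log N := Real.log_pos (by exact_mod_cast (by omega : 1 < N))
  set V := Real.log N / 2 + (κ - 0.80472) with hV
  have hV0 : 0 < V := by linarith
  have hLV : 4 / 15 * V ≤ selbergSum R := by linarith
  have hratio : 0 ≤ sieveErrorSum R / selbergSum R :=
    div_nonneg (sieveErrorSum_nonneg R) (by linarith)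
  have hmain : 4 / 15 * (N : ℝ) / selbergSum R ≤ N / V := by
    rw [div_le_div_iff₀ (by linarith) hV0]
    nlinarith [N.cast_nonneg (α := ℝ)]
  have herror : 28 / 15 * (sieveErrorSum R / selbergSum R) ^ 2 ≤ c * N / V ^ 2 := by
    calc 28 / 15 * (sieveErrorSum R / selbergSum R) ^ 2
        ≤ 28 / 15 * (β * R / (4 / 15 * V)) ^ 2 := by gcongr
      _ = 26.25 * β ^ 2 * R ^ 2 / V ^ 2 := by field_simp; ring
      _ ≤ c * N / V ^ 2 := div_le_div_of_nonneg_right (by nlinarith [sq_nonneg β]) (by positivity)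
  linarith [card_primes_interval_le hR1 a N]

lemma sieveErrorSum_le_mul {R s : ℕ} {β : ℝ} (hs : 1 ≤ s) (hR : s ^ 2 ≤ R)
    (hβ : 0.3032 + 0.498 / s + 0.872 / (s : ℝ) ^ 2 ≤ β) : sieveErrorSum R ≤ β * R := by
  have hs0 : (0 : ℝ) < s := by exact_mod_cast hs
  have hR0 : (s : ℝ) ^ 2 ≤ R := by exact_mod_cast hR
  have h1 := sieveErrorSum_le (R := R) (by nlinarith)
  have h2 : √(R : ℝ) * s ≤ R := by
    have : (s : ℝ) ≤ √R := Real.le_sqrt_of_sq_le hR0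
    nlinarith [Real.mul_self_sqrt (show (0 : ℝ) ≤ R by positivity), Real.sqrt_nonneg (R : ℝ)]
  have h3 : √(R : ℝ) ≤ 1 / s * R := by
    rw [one_div, inv_mul_eq_div, le_div_iff₀ hs0]; exact h2
  have h4 : (1 : ℝ) ≤ 1 / (s : ℝ) ^ 2 * R := by
    rw [one_div, inv_mul_eq_div, le_div_iff₀ (by positivity)]; linarith
  calc sieveErrorSum R ≤ (0.3032 + 0.498 / s + 0.872 / (s : ℝ) ^ 2) * R := by
        have : (0.3032 + 0.498 / s + 0.872 / (s : ℝ) ^ 2) * R =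
          0.3032 * R + 0.498 * (1 / s * R) + 0.872 * (1 / (s : ℝ) ^ 2 * R) := by ring
        rw [this]
        linarith
    _ ≤ β * R := by gcongr

lemma card_primes_interval_le_of_50000_le {N : ℕ} (hN : 50000 ≤ N) (a : ℕ) :
    (#{p ∈ Ioc a (a + N) | p.Prime ∧ Nat.sqrt (N / 5) < p ∧ 5 < p} : ℝ) ≤
      N / (Real.log N / 2 + 1.37228) + 0.71 * N / (Real.log N / 2 + 1.37228) ^ 2 := by
  have hR : 100 ≤ Nat.sqrt (N / 5) := by rw [Nat.le_sqrt]; omega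
  have hB := sieveErrorSum_le_mul (s := 10) (β := 0.36172) (by norm_num) (hR.trans' (by norm_num))
    (by norm_num)
  have h := card_primes_interval_le_of_sqrt (κ := 2.177) (c := 0.71) (by omega) rfl
    (selbergSum_ge_of_80_le (by omega)) hB (by norm_num) (by norm_num) (by norm_num) a
  norm_num at h ⊢
  exact h

lemma card_primes_interval_le_of_6570000_le {N : ℕ} (hN : 6570000 ≤ N) (a : ℕ) :
    (#{p ∈ Ioc a (a + N) | p.Prime ∧ Nat.sqrt (N / 5) < p ∧ 5 < p} : ℝ) ≤
      N / (Real.log N / 2 + 1.40228) + 0.54 * N / (Real.log N / 2 + 1.40228) ^ 2 := by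
  have hR : 1146 ≤ Nat.sqrt (N / 5) := by rw [Nat.le_sqrt]; omega
  have hB := sieveErrorSum_le_mul (s := 33) (β := 0.3191) (by norm_num) (hR.trans' (by norm_num))
    (by norm_num)
  have h := card_primes_interval_le_of_sqrt (κ := 2.207) (c := 0.54) (by omega) rfl
    (selbergSum_ge_of_239_le (by omega)) hB (by norm_num) (by norm_num) (by norm_num) a
  norm_num at h ⊢
  exact h

/-! ### Rows of the Sierpiński matrix -/

open Classical in
/-- The indices of the rows of the `n`-th Sierpiński matrix that contain a prime. -/
noncomputable def primeRows (n : ℕ) : Finset ℕ :=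
  {k ∈ Icc 1 n | ∃ p : ℕ, p.Prime ∧ (k - 1) * n < p ∧ p ≤ k * n}

lemma ncard_primeRows (n : ℕ) : {k : ℕ | 1 ≤ k ∧ k ≤ n ∧
      ∃ p : ℕ, p.Prime ∧ (k - 1) * n < p ∧ p ≤ k * n}.ncard = #(primeRows n) := by
  rw [← Set.ncard_coe_finset]
  congr 1
  ext k
  simp [primeRows, and_assoc]

lemma exists_mem_primeRows {n p : ℕ} (hn : 1 ≤ n) (hp : p.Prime) (h : p ≤ n ^ 2) :
    ∃ k ∈ primeRows n, p ∈ Ioc ((k - 1) * n) ((k - 1) * n + n) := by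
  have hp1 := hp.one_lt
  have h1 : (p - 1) / n * n ≤ p - 1 := Nat.div_mul_le_self _ _
  have h2 : p - 1 < ((p - 1) / n + 1) * n := by
    rw [mul_comm]; exact Nat.lt_mul_div_succ _ (by omega)
  have h3 : (p - 1) / n < n := by
    rw [Nat.div_lt_iff_lt_mul (by omega)]
    have : n ^ 2 = n * n := sq n
    omega
  have h4 : ((p - 1) / n + 1) * n = (p - 1) / n * n + n := by ring
  refine ⟨(p - 1) / n + 1, ?_, ?_⟩
  · simp only [primeRows, mem_filter, mem_Icc, Nat.add_sub_cancel]
    exact ⟨⟨Nat.le_add_left _ _, h3⟩, p, hp, by omega, by omega⟩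
  · simp only [mem_Ioc, Nat.add_sub_cancel]
    omega

lemma primeCounting_sq_le {n R : ℕ} {M : ℝ} (hn : 1 ≤ n)
    (hM : ∀ a, (#{p ∈ Ioc a (a + n) | p.Prime ∧ R < p ∧ 5 < p} : ℝ) ≤ M) :
    (Nat.primeCounting (n ^ 2) : ℝ) ≤ R + 5 + #(primeRows n) * M := by
  have h1 : Nat.primesLE (n ^ 2) ⊆ Ioc 0 (R + 5) ∪ (primeRows n).biUnion (fun k =>
      {p ∈ Ioc ((k - 1) * n) ((k - 1) * n + n) | p.Prime ∧ R < p ∧ 5 < p}) := by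
    intro p hp
    rw [Nat.mem_primesLE] at hp
    simp only [mem_union, mem_Ioc, mem_biUnion, mem_filter]
    by_cases h : p ≤ R + 5
    · exact Or.inl ⟨hp.2.pos, h⟩
    · obtain ⟨k, hk, hk'⟩ := exists_mem_primeRows hn hp.2 hp.1
      exact Or.inr ⟨k, hk, by simpa using hk', hp.2, by omega, by omega⟩
  have h2 := (card_le_card h1).trans ((card_union_le _ _).trans
    (Nat.add_le_add_left card_biUnion_le _))
  rw [Nat.primesLE_card_eq_primeCounting, Nat.card_Ioc] at h2
  calc (Nat.primeCounting (n ^ 2) : ℝ) ≤ ((R + 5 - 0 + ∑ k ∈ primeRows n,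
        #{p ∈ Ioc ((k - 1) * n) ((k - 1) * n + n) | p.Prime ∧ R < p ∧ 5 < p} : ℕ) : ℝ) := by
        exact_mod_cast h2
    _ ≤ R + 5 + ∑ _ ∈ primeRows n, M := by
        rw [Nat.sub_zero]
        push_cast
        gcongr
        exact hM _
    _ = _ := by simp

lemma psi_sq_le_of_card_primeRows_lt {n R : ℕ} {M : ℝ} (hn : 1 ≤ n) (hA : 4 * #(primeRows n) < n)
    (hM : ∀ a, (#{p ∈ Ioc a (a + n) | p.Prime ∧ R < p ∧ 5 < p} : ℝ) ≤ M) :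
    Chebyshev.psi ((n ^ 2 : ℕ) : ℝ) ≤ 2 * Real.log n * (R + 5 + n / 4 * M) := by
  have h1 := Chebyshev.psi_le_primeCounting_mul_log (n ^ 2)
  have h2 := primeCounting_sq_le hn hM
  have hM0 : 0 ≤ M := (Nat.cast_nonneg _).trans (hM 0)
  have h3 : (#(primeRows n) : ℝ) ≤ n / 4 := by
    have : (4 * #(primeRows n) : ℝ) < n := by exact_mod_cast hA
    linarith
  have h4 : Real.log ((n ^ 2 : ℕ) : ℝ) = 2 * Real.log n := by
    push_cast; rw [Real.log_pow]; norm_num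
  have h5 : 0 ≤ Real.log n := Real.log_natCast_nonneg n
  rw [h4] at h1
  have h6 : (#(primeRows n) : ℝ) * M ≤ n / 4 * M := by gcongr
  nlinarith

lemma le_four_mul_card_primeRows_of_chebyshev {n R : ℕ} {M : ℝ} (hn : 6 ≤ n)
    (hM : ∀ a, (#{p ∈ Ioc a (a + n) | p.Prime ∧ R < p ∧ 5 < p} : ℝ) ≤ M)
    (h : 2 * Real.log n * (R + 9 + n / 4 * M) < 0.92129 * (n : ℝ) ^ 2 + 5.8) :
    n ≤ 4 * #(primeRows n) := by
  by_contra! hA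
  have hupper := psi_sq_le_of_card_primeRows_lt (by omega) hA hM
  have hlower := psi_ge_chebyshev (x := n ^ 2) (by nlinarith)
  rw [Nat.cast_pow, Real.log_pow] at hlower
  push_cast at hupper hlower
  linarith

/-! ### The range `n ≤ e ^ 20` -/

lemma le_four_mul_card_primeRows_of_le_ten {n : ℕ} (hn : 2 ≤ n) (hn' : n ≤ 10) :
    n ≤ 4 * #(primeRows n) := by
  have h1 : 1 ∈ primeRows n := by
    simp only [primeRows, mem_filter, mem_Icc]
    exact ⟨⟨le_rfl, by omega⟩, 2, Nat.prime_two, by omega, by omega⟩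
  have h2 : 2 ∈ primeRows n := by
    obtain ⟨p, hp, hnp, hp2⟩ := Nat.exists_prime_lt_and_le_two_mul n (by omega)
    simp only [primeRows, mem_filter, mem_Icc]
    exact ⟨⟨by omega, by omega⟩, p, hp, by omega, by omega⟩
  rcases Nat.lt_or_ge n 9 with h | h
  · have := card_le_card (show {1, 2} ⊆ primeRows n by simp [insert_subset_iff, h1, h2])
    simp only [card_pair (show 1 ≠ 2 by decide)] at this
    omega
  · have h3 : 3 ∈ primeRows n := by
      simp only [primeRows, mem_filter, mem_Icc]
      exact ⟨⟨by omega, by omega⟩, 23, by norm_num, by omega, by omega⟩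
    have := card_le_card (show {1, 2, 3} ⊆ primeRows n by simp [insert_subset_iff, h1, h2, h3])
    rw [show #({1, 2, 3} : Finset ℕ) = 3 from rfl] at this
    omega

lemma log_le_of_le_smooth {n : ℕ} (a b c : ℕ) {L : ℝ} (hn : 1 ≤ n) (h : n ≤ 2 ^ a * 3 ^ b * 5 ^ c)
    (hL : a * 0.6931471808 + b * 1.098612289 + c * 1.609437913 ≤ L) : Real.log n ≤ L := by
  have h2 := Real.log_two_lt_d9
  have h3 := Real.log_three_lt_d9
  have h5 := Real.log_five_lt_d9
  calc Real.log n ≤ Real.log (2 ^ a * 3 ^ b * 5 ^ c) :=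
        Real.log_le_log (by exact_mod_cast hn) (by exact_mod_cast h)
    _ = a * Real.log 2 + b * Real.log 3 + c * Real.log 5 := by
        rw [Real.log_mul (by positivity) (by positivity),
          Real.log_mul (by positivity) (by positivity), Real.log_pow, Real.log_pow, Real.log_pow]
    _ ≤ a * 0.6931471808 + b * 1.098612289 + c * 1.609437913 := by gcongr <;> linarith
    _ ≤ L := hL

lemma le_four_mul_card_primeRows_of_sieve_one {n : ℕ} {c : ℝ} (hn : 6 ≤ n) (hc : Real.log n ≤ c)
    (h : 2 * c * (10 + (n : ℝ) ^ 2 / 15 + 7 * n / 15) < 0.92129 * (n : ℝ) ^ 2 + 5.8) :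
    n ≤ 4 * #(primeRows n) := by
  refine le_four_mul_card_primeRows_of_chebyshev (R := 1) hn
    (fun a => card_primes_interval_le le_rfl a n) (lt_of_le_of_lt ?_ h)
  rw [selbergSum_one, sieveErrorSum_one]
  calc _ = 2 * Real.log n * (10 + (n : ℝ) ^ 2 / 15 + 7 * n / 15) := by push_cast; ring
    _ ≤ _ := by gcongr

lemma le_four_mul_card_primeRows_of_sieve_thirtyone {n : ℕ} {c : ℝ} (hn : 6 ≤ n)
    (hc : Real.log n ≤ c)
    (h : 2 * c * (40 + 0.0421275 * (n : ℝ) ^ 2 + 19.2588 * n) < 0.92129 * (n : ℝ) ^ 2 + 5.8) :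
    n ≤ 4 * #(primeRows n) := by
  refine le_four_mul_card_primeRows_of_chebyshev (R := 31) hn
    (fun a => card_primes_interval_le (by norm_num) a n) (lt_of_le_of_lt ?_ h)
  have hL := selbergSum_thirtyone
  have hB := sieveErrorSum_thirtyone
  have hB0 := sieveErrorSum_nonneg 31
  have hc0 : 0 ≤ c := (Real.log_natCast_nonneg n).trans hc
  calc 2 * Real.log n * ((31 : ℕ) + 9 + (n : ℝ) / 4 * (4 / 15 * n / selbergSum 31 +
        28 / 15 * (sieveErrorSum 31 / selbergSum 31) ^ 2))
      ≤ 2 * c * ((31 : ℕ) + 9 + (n : ℝ) / 4 * (4 / 15 * n / 1.5825 +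
        28 / 15 * (10.166 / 1.5825) ^ 2)) := by gcongr
    _ = 2 * c * (40 + 4 / 60 / 1.5825 * (n : ℝ) ^ 2 + 28 / 60 * (10.166 / 1.5825) ^ 2 * n) := by
        push_cast
        ring
    _ ≤ 2 * c * (40 + 0.0421275 * (n : ℝ) ^ 2 + 19.2588 * n) := by
        gcongr <;> norm_num

-- On each range `log n` is replaced by its value at the right end, a `5`-smooth number.
lemma le_four_mul_card_primeRows_of_le_900 {n : ℕ} (hn : 11 ≤ n) (hn' : n ≤ 900) :
    n ≤ 4 * #(primeRows n) := by
  have hn0 : (11 : ℝ) ≤ n := by exact_mod_cast hn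
  rcases le_or_gt n 12 with h12 | h12
  · exact le_four_mul_card_primeRows_of_sieve_one (c := 2.5) (by omega)
      (log_le_of_le_smooth 2 1 0 (by omega) h12 (by norm_num)) (by nlinarith)
  rcases le_or_gt n 15 with h15 | h15
  · have hn0 : (13 : ℝ) ≤ n := by exact_mod_cast h12
    exact le_four_mul_card_primeRows_of_sieve_one (c := 2.709) (by omega)
      (log_le_of_le_smooth 0 1 1 (by omega) h15 (by norm_num)) (by nlinarith)
  rcases le_or_gt n 27 with h27 | h27
  · have hn0 : (16 : ℝ) ≤ n := by exact_mod_cast h15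
    exact le_four_mul_card_primeRows_of_sieve_one (c := 3.3) (by omega)
      (log_le_of_le_smooth 0 3 0 (by omega) h27 (by norm_num)) (by nlinarith)
  rcases le_or_gt n 100 with h100 | h100
  · have hn0 : (28 : ℝ) ≤ n := by exact_mod_cast h27
    exact le_four_mul_card_primeRows_of_sieve_one (c := 4.61) (by omega)
      (log_le_of_le_smooth 2 0 2 (by omega) h100 (by norm_num)) (by nlinarith)
  rcases le_or_gt n 512 with h512 | h512
  · have hn0 : (101 : ℝ) ≤ n := by exact_mod_cast h100
    exact le_four_mul_card_primeRows_of_sieve_one (c := 6.24) (by omega)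
      (log_le_of_le_smooth 9 0 0 (by omega) h512 (by norm_num)) (by nlinarith)
  · have hn0 : (513 : ℝ) ≤ n := by exact_mod_cast h512
    exact le_four_mul_card_primeRows_of_sieve_one (c := 6.803) (by omega)
      (log_le_of_le_smooth 2 2 2 (by omega) hn' (by norm_num)) (by nlinarith)

lemma le_four_mul_card_primeRows_of_le_50000 {n : ℕ} (hn : 901 ≤ n) (hn' : n ≤ 50000) :
    n ≤ 4 * #(primeRows n) := by
  have hn0 : (901 : ℝ) ≤ n := by exact_mod_cast hn
  rcases le_or_gt n 1350 with h1350 | h1350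
  · exact le_four_mul_card_primeRows_of_sieve_thirtyone (c := 7.21) (by omega)
      (log_le_of_le_smooth 1 3 2 (by omega) h1350 (by norm_num)) (by nlinarith)
  rcases le_or_gt n 3375 with h3375 | h3375
  · have hn0 : (1351 : ℝ) ≤ n := by exact_mod_cast h1350
    exact le_four_mul_card_primeRows_of_sieve_thirtyone (c := 8.13) (by omega)
      (log_le_of_le_smooth 0 3 3 (by omega) h3375 (by norm_num)) (by nlinarith)
  rcases le_or_gt n 15000 with h15000 | h15000
  · have hn0 : (3376 : ℝ) ≤ n := by exact_mod_cast h3375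
    exact le_four_mul_card_primeRows_of_sieve_thirtyone (c := 9.617) (by omega)
      (log_le_of_le_smooth 3 1 4 (by omega) h15000 (by norm_num)) (by nlinarith)
  rcases le_or_gt n 40000 with h40000 | h40000
  · have hn0 : (15001 : ℝ) ≤ n := by exact_mod_cast h15000
    exact le_four_mul_card_primeRows_of_sieve_thirtyone (c := 10.598) (by omega)
      (log_le_of_le_smooth 6 0 4 (by omega) h40000 (by norm_num)) (by nlinarith)
  rcases le_or_gt n 45000 with h45000 | h45000
  · have hn0 : (40001 : ℝ) ≤ n := by exact_mod_cast h40000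
    exact le_four_mul_card_primeRows_of_sieve_thirtyone (c := 10.716) (by omega)
      (log_le_of_le_smooth 3 2 4 (by omega) h45000 (by norm_num)) (by nlinarith)
  · have hn0 : (45001 : ℝ) ≤ n := by exact_mod_cast h45000
    exact le_four_mul_card_primeRows_of_sieve_thirtyone (c := 10.82) (by omega)
      (log_le_of_le_smooth 4 0 5 (by omega) hn' (by norm_num)) (by nlinarith)

lemma sqrt_div_five_le {n : ℕ} (hn : 50000 ≤ n) : ((n / 5).sqrt : ℝ) ≤ n / 500 := by
  have hsqrt : (100 : ℝ) ≤ (n / 5).sqrt := by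
    exact_mod_cast Nat.le_sqrt.2 (show 100 * 100 ≤ n / 5 by omega)
  nlinarith [sq_sqrt_div_five_le n]

lemma two_log_mul_brun_titchmarsh_le {n l κ c α : ℝ} (hl : 0 < l) (hκ : 0 ≤ κ)
    (h : l * (l / 2 + κ + c) ≤ 2 * α * (l / 2 + κ) ^ 2) :
    2 * l * (n / 4 * (n / (l / 2 + κ) + c * n / (l / 2 + κ) ^ 2)) ≤ α * n ^ 2 := by
  have hV : 0 < l / 2 + κ := by linarith
  set V := l / 2 + κ
  calc 2 * l * (n / 4 * (n / V + c * n / V ^ 2)) = l * (V + c) / (2 * V ^ 2) * n ^ 2 := by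
        field_simp
        ring
    _ ≤ α * n ^ 2 := by
        gcongr
        rw [div_le_iff₀ (by positivity)]
        linarith

lemma le_four_mul_card_primeRows_of_50000_le {n : ℕ} (hn : 50000 ≤ n) (hl : Real.log n ≤ 16.2) :
    n ≤ 4 * #(primeRows n) := by
  have hn0 : (50000 : ℝ) ≤ n := by exact_mod_cast hn
  have hl0 : 0 < Real.log n := Real.log_pos (by linarith)
  refine le_four_mul_card_primeRows_of_chebyshev (by omega)
    (card_primes_interval_le_of_50000_le hn) ?_
  have hmain := two_log_mul_brun_titchmarsh_le (n := n) (κ := 1.37228) (c := 0.71) (α := 0.9212)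
    hl0 (by norm_num) (by nlinarith)
  have hsmall : 2 * Real.log n * ((n / 5).sqrt + 9) ≤ 2 * 16.2 * (n / 500 + 9) := by
    gcongr
    exact sqrt_div_five_le hn
  nlinarith

lemma le_four_mul_card_primeRows_of_6570000_le {n : ℕ} (hn : 6570000 ≤ n)
    (hl : Real.log n ≤ 20) : n ≤ 4 * #(primeRows n) := by
  have hn0 : (6570000 : ℝ) ≤ n := by exact_mod_cast hn
  have hl0 : 0 < Real.log n := Real.log_pos (by linarith)
  refine le_four_mul_card_primeRows_of_chebyshev (by omega)
    (card_primes_interval_le_of_6570000_le hn) ?_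
  have hmain := two_log_mul_brun_titchmarsh_le (n := n) (κ := 1.40228) (c := 0.54) (α := 0.9212)
    hl0 (by norm_num) (by nlinarith)
  have hsmall : 2 * Real.log n * ((n / 5).sqrt + 9) ≤ 2 * 20 * (n / 500 + 9) := by
    gcongr
    exact sqrt_div_five_le (by omega)
  nlinarith

lemma le_exp_sixteen : (6570000 : ℝ) ≤ Real.exp 16 := by
  calc (6570000 : ℝ) ≤ 2.7182818283 ^ 16 := by norm_num
    _ ≤ Real.exp 1 ^ 16 := by gcongr; exact Real.exp_one_gt_d9.le
    _ = Real.exp 16 := by rw [← Real.exp_nat_mul]; norm_num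

lemma le_four_mul_card_primeRows_of_log_le_twenty {n : ℕ} (hn : 2 ≤ n) (hl : Real.log n ≤ 20) :
    n ≤ 4 * #(primeRows n) := by
  rcases le_or_gt n 10 with h10 | h10
  · exact le_four_mul_card_primeRows_of_le_ten hn h10
  rcases le_or_gt n 900 with h900 | h900
  · exact le_four_mul_card_primeRows_of_le_900 h10 h900
  rcases le_or_gt n 50000 with h50000 | h50000
  · exact le_four_mul_card_primeRows_of_le_50000 h900 h50000
  rcases le_or_gt (Real.log n) 16.2 with hlog | hlog
  · exact le_four_mul_card_primeRows_of_50000_le h50000.le hlog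
  · refine le_four_mul_card_primeRows_of_6570000_le ?_ hl
    have hexp : Real.exp 16 ≤ n := by
      rw [← Real.le_log_iff_exp_le (by positivity)]
      linarith
    exact_mod_cast le_exp_sixteen.trans hexp

/-! ### A sharper lower bound for `ψ` -/

lemma sum_vonMangoldt_interval_le {a N : ℕ} {x : ℝ} (h : 1 ≤ a + N) (hx : ((a + N : ℕ) : ℝ) ≤ x) :
    ∑ m ∈ Ioc a (a + N), vonMangoldt m ≤
      #{p ∈ Ioc a (a + N) | p.Prime} * Real.log (a + N) + 2 * (√x * Real.log x) := by
  have hunion : Ioc 0 (a + N) = Ioc 0 a ∪ Ioc a (a + N) :=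
    (Ioc_union_Ioc_eq_Ioc (Nat.zero_le _) (Nat.le_add_right _ _)).symm
  have hdisj : Disjoint (Ioc 0 a) (Ioc a (a + N)) := Ioc_disjoint_Ioc_of_le le_rfl
  have hψ : Chebyshev.psi ((a + N : ℕ) : ℝ) =
      Chebyshev.psi a + ∑ m ∈ Ioc a (a + N), vonMangoldt m := by
    rw [psi_natCast, psi_natCast, hunion, sum_union hdisj]
  have hθ : Chebyshev.theta ((a + N : ℕ) : ℝ) = Chebyshev.theta a +
      ∑ p ∈ Ioc a (a + N) with p.Prime, Real.log p := by
    rw [Chebyshev.theta, Chebyshev.theta, Nat.floor_natCast, Nat.floor_natCast, hunion,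
      filter_union, sum_union (disjoint_filter_filter hdisj)]
  have hlog : ∑ p ∈ Ioc a (a + N) with p.Prime, Real.log p ≤
      #{p ∈ Ioc a (a + N) | p.Prime} * Real.log (a + N) := by
    rw [← nsmul_eq_mul]
    refine sum_le_card_nsmul _ _ _ fun p hp => ?_
    simp only [mem_filter, mem_Ioc] at hp
    exact Real.log_le_log (by exact_mod_cast hp.2.pos) (by exact_mod_cast hp.1.2)
  have hone : (1 : ℝ) ≤ ((a + N : ℕ) : ℝ) := by exact_mod_cast h
  have herror : 2 * √((a + N : ℕ) : ℝ) * Real.log ((a + N : ℕ) : ℝ) ≤ 2 * (√x * Real.log x) := by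
    rw [mul_assoc]
    have := Real.log_nonneg hone
    gcongr
  have hψθ := (abs_le.1 (Chebyshev.abs_psi_sub_theta_le_sqrt_mul_log hone)).2
  linarith [Chebyshev.theta_le_psi (a : ℝ)]

/-- The `u < 400` at which the floor combination
`u - ⌊u/2⌋ - ⌊u/3⌋ - ⌊u/5⌋ + ⌊u/6⌋ - ⌊u/7⌋ + ⌊u/10⌋ - ⌊u/11⌋ + ⌊u/2310⌋` takes its maximal value
`2`; elsewhere below `400` it is at most `1`, as Chebyshev's method needs. All terms are moved to
the side where they are positive, so that no truncated subtraction occurs. -/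
def exceptional : Finset ℕ :=
  {u ∈ range 400 | u + u / 6 + u / 10 + u / 2310 = 2 + u / 2 + u / 3 + u / 5 + u / 7 + u / 11}

-- The combination is periodic modulo `2310`, since its coefficients `c_d` satisfy `∑ c_d / d = 0`.
lemma floor_sum_le_two (u : ℕ) :
    u + u / 6 + u / 10 + u / 2310 ≤ 2 + u / 2 + u / 3 + u / 5 + u / 7 + u / 11 := by
  have h : ∀ r < 2310, r + r / 6 + r / 10 ≤ 2 + r / 2 + r / 3 + r / 5 + r / 7 + r / 11 := by
    decide +kernel
  have h1 := h (u % 2310) (Nat.mod_lt _ (by norm_num))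
  have hu : u = u % 2310 + 2310 * (u / 2310) := (Nat.mod_add_div u 2310).symm
  have hr : u % 2310 < 2310 := Nat.mod_lt _ (by norm_num)
  generalize u / 2310 = q at *
  generalize u % 2310 = r at *
  subst hu
  have e : ∀ d c : ℕ, 0 < d → (r + d * c * q) / d = r / d + c * q := fun d c hd => by
    rw [mul_assoc, Nat.add_mul_div_left _ _ hd]
  rw [e 6 385 (by norm_num), e 10 231 (by norm_num), e 2 1155 (by norm_num),
    e 3 770 (by norm_num), e 5 462 (by norm_num), e 7 330 (by norm_num), e 11 210 (by norm_num)]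
  linarith

lemma floor_sum_le (u : ℕ) : u + u / 6 + u / 10 + u / 2310 ≤
    1 + (if 400 ≤ u then 1 else 0) + (if u ∈ exceptional then 1 else 0) +
      u / 2 + u / 3 + u / 5 + u / 7 + u / 11 := by
  have h := floor_sum_le_two u
  by_cases h1 : 400 ≤ u
  · rw [if_pos h1]
    linarith [Nat.zero_le (if u ∈ exceptional then 1 else 0)]
  · by_cases h2 : u ∈ exceptional
    · rw [if_neg h1, if_pos h2]
      linarith
    · rw [if_neg h1, if_neg h2]
      simp only [exceptional, mem_filter, mem_range, not_and] at h2
      have h3 := Nat.lt_of_le_of_ne h (h2 (by omega))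
      linarith

lemma exceptional_bounds : ∀ u ∈ exceptional, 12 ≤ u ∧ u ≤ 399 := by
  decide +kernel

lemma card_exceptional : #exceptional = 51 := by decide +kernel

lemma sum_one_div_mul_succ_le {s : Finset ℕ} {B : ℕ}
    (hB : ∑ u ∈ s, (10 ^ 9 / (u * (u + 1)) + 1) ≤ B) :
    ∑ u ∈ s, (1 / (u * (u + 1)) : ℝ) ≤ B / 10 ^ 9 := by
  calc ∑ u ∈ s, (1 / (u * (u + 1)) : ℝ)
      ≤ ∑ u ∈ s, ((10 ^ 9 / (u * (u + 1)) + 1 : ℕ) : ℝ) / 10 ^ 9 := by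
        refine sum_le_sum fun u _ => ?_
        have h := div_le_natDiv_add_one (10 ^ 9) (u * (u + 1))
        rw [le_div_iff₀ (by norm_num), one_div_mul_eq_div]
        push_cast at h ⊢
        norm_num at h ⊢
        exact h
    _ ≤ B / 10 ^ 9 := by
        rw [← sum_div, ← Nat.cast_sum]
        gcongr

lemma sum_exceptional_lt_sixty :
    ∑ u ∈ exceptional with u < 60, (1 / (u * (u + 1)) : ℝ) ≤ 0.014258 :=
  (sum_one_div_mul_succ_le (B := 14258000) (by decide +kernel)).trans (by norm_num)

lemma sum_exceptional_sixty_le :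
    ∑ u ∈ exceptional with ¬ u < 60, (1 / (u * (u + 1)) : ℝ) ≤ 0.002116 :=
  (sum_one_div_mul_succ_le (B := 2116000) (by decide +kernel)).trans (by norm_num)

lemma le_log_combination : (0.9982 : ℝ) ≤ Real.log 2 / 2 + Real.log 3 / 3 + Real.log 5 / 5 -
    Real.log 6 / 6 + Real.log 7 / 7 - Real.log 10 / 10 + Real.log 11 / 11
    - Real.log 2310 / 2310 := by
  have l2 := Real.log_two_gt_d9
  have l3 := Real.log_three_gt_d9
  have l5 := Real.log_five_gt_d9
  have l6 : Real.log 6 = Real.log 2 + Real.log 3 := by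
    rw [← Real.log_mul (by norm_num) (by norm_num)]; norm_num
  have l10 : Real.log 10 = Real.log 2 + Real.log 5 := by
    rw [← Real.log_mul (by norm_num) (by norm_num)]; norm_num
  have l2310 : Real.log 2310 = Real.log 2 + Real.log 3 + Real.log 5 + Real.log 7 + Real.log 11 := by
    rw [← Real.log_mul (by norm_num) (by norm_num), ← Real.log_mul (by norm_num) (by norm_num),
      ← Real.log_mul (by norm_num) (by norm_num), ← Real.log_mul (by norm_num) (by norm_num)]
    norm_num
  have l7 : 5 * Real.log 2 + Real.log 3 + 2 * Real.log 5 ≤ 4 * Real.log 7 := by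
    have h : Real.log (2 ^ 5 * 3 * 5 ^ 2) ≤ Real.log (7 ^ 4) :=
      Real.log_le_log (by norm_num) (by norm_num)
    rw [Real.log_mul (by norm_num) (by norm_num), Real.log_mul (by norm_num) (by norm_num),
      Real.log_pow, Real.log_pow, Real.log_pow] at h
    push_cast at h
    exact h
  have l11 : 2 * Real.log 2 + 6 * Real.log 3 + Real.log 5 ≤ 4 * Real.log 11 := by
    have h : Real.log (2 ^ 2 * 3 ^ 6 * 5) ≤ Real.log (11 ^ 4) :=
      Real.log_le_log (by norm_num) (by norm_num)
    rw [Real.log_mul (by norm_num) (by norm_num), Real.log_mul (by norm_num) (by norm_num),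
      Real.log_pow, Real.log_pow, Real.log_pow] at h
    push_cast at h
    exact h
  have l2' := Real.log_two_lt_d9
  rw [l6, l10, l2310]
  linarith

lemma le_exp_twenty : (400000000 : ℝ) ≤ Real.exp 20 := by
  calc (400000000 : ℝ) ≤ 2.718 ^ 20 := by norm_num
    _ ≤ Real.exp 1 ^ 20 := by gcongr; linarith [Real.exp_one_gt_d9]
    _ = Real.exp 20 := by rw [← Real.exp_nat_mul]; norm_num

lemma natCast_pos_of_log_pos {x : ℕ} (h : 0 < Real.log x) : (0 : ℝ) < x := by
  refine Nat.cast_pos.2 (Nat.pos_of_ne_zero ?_)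
  rintro rfl
  simp at h

lemma sqrt_mul_log_le {x : ℝ} (hx0 : 0 < x) (hx : 40 ≤ Real.log x) :
    √x * Real.log x ≤ x / 10 ^ 7 := by
  have h1 : √x = Real.exp 20 * Real.exp (Real.log x / 2 - 20) := by
    rw [← Real.exp_add, Real.sqrt_eq_iff_mul_self_eq hx0.le (Real.exp_nonneg _), ← Real.exp_add]
    ring_nf
    exact (Real.exp_log hx0).symm
  have h2 := Real.add_one_le_exp (Real.log x / 2 - 20)
  have h3 := le_exp_twenty
  have h4 : Real.log x * 10 ^ 7 ≤ √x := by
    rw [h1]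
    nlinarith [Real.exp_pos (Real.log x / 2 - 20)]
  have h5 : x = √x * √x := (Real.mul_self_sqrt hx0.le).symm
  rw [le_div_iff₀ (by norm_num)]
  nlinarith [Real.sqrt_nonneg x]

lemma le_of_forty_le_log {x : ℝ} (hx0 : 0 < x) (hx : 40 ≤ Real.log x) : 16 * 10 ^ 16 ≤ x := by
  calc (16 * 10 ^ 16 : ℝ) ≤ Real.exp 20 ^ 2 := by nlinarith [le_exp_twenty]
    _ = Real.exp 40 := by rw [← Real.exp_nat_mul]; norm_num
    _ ≤ x := (Real.le_log_iff_exp_le hx0).1 hx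

lemma abs_natDiv_sub_natDiv_succ_sub_le {x v : ℕ} (hv : 1 ≤ v) :
    |((x / v : ℕ) : ℝ) - (x / (v + 1) : ℕ) - x * (1 / (v * (v + 1)))| ≤ 1 := by
  have hv0 : (v : ℝ) ≠ 0 := by positivity
  have hdiff : (x : ℝ) / v - x / (v + 1) = x * (1 / (v * (v + 1))) := by
    field_simp
    ring
  have hlower := div_le_natDiv_add_one x v
  have hlower' := div_le_natDiv_add_one x (v + 1)
  have hupper : ((x / v : ℕ) : ℝ) ≤ x / v := Nat.cast_div_le
  have hupper' : ((x / (v + 1) : ℕ) : ℝ) ≤ x / (v + 1 : ℕ) := Nat.cast_div_le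
  push_cast at hlower' hupper'
  rw [abs_le]
  constructor <;> linarith

-- An interval starting at `a` with `N ≤ 400 (a + 1)` lies above `√N`, so the sieve sees all its
-- primes.
lemma card_primes_Ioc_le {a N : ℕ} {V : ℝ} (hN : 6570000 ≤ N) (ha : N ≤ 400 * (a + 1)) (hV0 : 0 < V)
    (hV : V ≤ Real.log N / 2 + 1.40228) :
    (#{p ∈ Ioc a (a + N) | p.Prime} : ℝ) ≤ N * ((V + 0.54) / V ^ 2) := by
  have hsqrt : (N / 5).sqrt ≤ a := by
    rw [← Nat.lt_succ_iff, Nat.sqrt_lt]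
    have : 5 * (N / 5) ≤ N := Nat.mul_div_le N 5
    nlinarith
  have hfilter : {p ∈ Ioc a (a + N) | p.Prime} =
      {p ∈ Ioc a (a + N) | p.Prime ∧ (N / 5).sqrt < p ∧ 5 < p} := by
    refine filter_congr fun p hp => ?_
    rw [mem_Ioc] at hp
    exact ⟨fun h => ⟨h, by omega, by omega⟩, And.left⟩
  calc (#{p ∈ Ioc a (a + N) | p.Prime} : ℝ)
      ≤ N / (Real.log N / 2 + 1.40228) + 0.54 * N / (Real.log N / 2 + 1.40228) ^ 2 := by
        rw [hfilter]
        exact card_primes_interval_le_of_6570000_le hN a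
    _ ≤ N / V + 0.54 * N / V ^ 2 := by gcongr
    _ = N * ((V + 0.54) / V ^ 2) := by field_simp

lemma card_primes_Ioc_mul_log_le {a N : ℕ} {V L K : ℝ} (hN : 6570000 ≤ N) (ha : N ≤ 400 * (a + 1))
    (hV0 : 0 < V) (hV : V ≤ Real.log N / 2 + 1.40228) (hL : Real.log (a + N) ≤ L)
    (hK : L * (V + 0.54) ≤ K * V ^ 2) :
    #{p ∈ Ioc a (a + N) | p.Prime} * Real.log (a + N) ≤ K * N := by
  have hlog : 0 ≤ Real.log (a + N) := by exact_mod_cast Real.log_natCast_nonneg (a + N)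
  calc (#{p ∈ Ioc a (a + N) | p.Prime} : ℝ) * Real.log (a + N)
      ≤ (N * ((V + 0.54) / V ^ 2)) * L := by
        gcongr
        exact card_primes_Ioc_le hN ha hV0 hV
    _ = N * (L * (V + 0.54) / V ^ 2) := by ring
    _ ≤ N * K := by
        gcongr
        rwa [div_le_iff₀ (by positivity)]
    _ = K * N := mul_comm _ _

lemma div_le_natDiv_sub_natDiv_succ {x v : ℕ} {W : ℝ} (hx : (10 ^ 12 : ℝ) ≤ x) (hv : 1 ≤ v)
    (hW : ((v : ℝ) * (v + 1)) + 1 ≤ W) (hW' : W ≤ 10 ^ 6) :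
    x / W ≤ ((x / v : ℕ) : ℝ) - (x / (v + 1) : ℕ) := by
  have hu : 0 < (v : ℝ) * (v + 1) := by positivity
  calc (x : ℝ) / W ≤ x * (1 / (v * (v + 1))) - 1 := by
        rw [mul_one_div, div_le_iff₀ (by linarith), sub_mul, div_mul_eq_mul_div, le_sub_iff_add_le,
          le_div_iff₀ hu]
        nlinarith
    _ ≤ _ := by linarith [(abs_le.1 (abs_natDiv_sub_natDiv_succ_sub_le (x := x) hv)).1]

-- `lv` and `lw` stand for rounded values of `log v` and `log W`, where `W` slightly exceeds
-- `v (v + 1)` to absorb the rounding of the ends of the block.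
lemma sum_vonMangoldt_block_le {x v : ℕ} {lv W lw K : ℝ} (hx : 40 ≤ Real.log x) (hv : 1 ≤ v)
    (hv' : v ≤ 399) (hlv : lv ≤ Real.log v) (hW : ((v : ℝ) * (v + 1)) + 1 ≤ W) (hW' : W ≤ 10 ^ 6)
    (hlw : Real.log W ≤ lw) (hlw' : lw ≤ 12)
    (hK : (Real.log x - lv) * ((Real.log x - lw) / 2 + 1.40228 + 0.54) ≤
      K * ((Real.log x - lw) / 2 + 1.40228) ^ 2) :
    ∑ m ∈ Ioc (x / (v + 1)) (x / v), vonMangoldt m ≤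
      K * (((x / v : ℕ) : ℝ) - (x / (v + 1) : ℕ)) + 2 * (√x * Real.log x) := by
  have hx0 := natCast_pos_of_log_pos (show 0 < Real.log x by linarith)
  have hxbig := le_of_forty_le_log hx0 hx
  have hW0 : 0 < W := by nlinarith [(Nat.cast_nonneg v : (0 : ℝ) ≤ v)]
  have hNW := div_le_natDiv_sub_natDiv_succ (by linarith) hv hW hW'
  have hstart : x ≤ (v + 1) * (x / (v + 1) + 1) := (Nat.lt_mul_div_succ x v.succ_pos).le
  set a := x / (v + 1)
  obtain ⟨N, hN⟩ := Nat.exists_eq_add_of_le (Nat.div_le_div_left v.le_succ hv : a ≤ x / v)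
  have hbN : ((a + N : ℕ) : ℝ) ≤ x / v := hN ▸ Nat.cast_div_le
  have hxN : a + N ≤ x := hN ▸ Nat.div_le_self x v
  rw [hN] at hNW ⊢
  push_cast at hbN hNW ⊢
  rw [add_sub_cancel_left] at hNW ⊢
  have hNbig : 6570000 ≤ N := by
    have : (6570000 : ℝ) ≤ x / W := by
      rw [le_div_iff₀ hW0]
      nlinarith
    exact_mod_cast this.trans hNW
  have hlogN : Real.log x - lw ≤ Real.log N := by
    have := Real.log_le_log (div_pos hx0 hW0) hNW
    rw [Real.log_div hx0.ne' hW0.ne'] at this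
    linarith
  have hlogb : Real.log (a + N) ≤ Real.log x - lv := by
    have := Real.log_le_log (by positivity) hbN
    rw [Real.log_div hx0.ne' (by positivity)] at this
    linarith
  set V := (Real.log x - lw) / 2 + 1.40228 with hV
  have hV0 : 0 < V := by linarith
  have hmain := card_primes_Ioc_mul_log_le hNbig (by nlinarith) hV0 (by linarith) hlogb hK
  linarith [sum_vonMangoldt_interval_le (a := a) (N := N)
    ((show 1 ≤ N by omega).trans (Nat.le_add_left N a)) (Nat.cast_le.2 hxN)]

lemma sum_vonMangoldt_block_le_of_lt_sixty {x v : ℕ} (hx : 40 ≤ Real.log x) (hv : 12 ≤ v)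
    (hv' : v < 60) : ∑ m ∈ Ioc (x / (v + 1)) (x / v), vonMangoldt m ≤
      2.236 * x * (1 / (v * (v + 1))) + (3 + 2 * (√x * Real.log x)) := by
  have hlog12 : (2.4849 : ℝ) ≤ Real.log 12 := by
    rw [show (12 : ℝ) = 2 ^ 2 * 3 by norm_num, Real.log_mul (by norm_num) (by norm_num),
      Real.log_pow]
    linarith [Real.log_two_gt_d9, Real.log_three_gt_d9]
  have hlog3600 : Real.log 3600 ≤ 8.1887 := by
    exact_mod_cast log_le_of_le_smooth (n := 3600) 4 2 2 (by norm_num) le_rfl (by norm_num)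
  have hv12 : (12 : ℝ) ≤ v := by exact_mod_cast hv
  have hv59 : (v : ℝ) ≤ 59 := by exact_mod_cast Nat.le_of_lt_succ hv'
  have hblock := sum_vonMangoldt_block_le (x := x) (v := v) (lv := 2.4849) (W := 3600)
    (lw := 8.1887) (K := 2.236) hx (by omega) (by omega)
    (hlog12.trans (Real.log_le_log (by norm_num) hv12)) (by nlinarith) (by norm_num) hlog3600
    (by norm_num) (by nlinarith)
  have hlen := (abs_le.1 (abs_natDiv_sub_natDiv_succ_sub_le (x := x) (v := v) (by omega))).2
  linarith

lemma sum_vonMangoldt_block_le_of_sixty_le {x v : ℕ} (hx : 40 ≤ Real.log x) (hv : 60 ≤ v)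
    (hv' : v ≤ 399) : ∑ m ∈ Ioc (x / (v + 1)) (x / v), vonMangoldt m ≤
      2.414 * x * (1 / (v * (v + 1))) + (3 + 2 * (√x * Real.log x)) := by
  have hlog60 : (4.0943 : ℝ) ≤ Real.log 60 := by
    rw [show (60 : ℝ) = 2 ^ 2 * 3 * 5 by norm_num, Real.log_mul (by norm_num) (by norm_num),
      Real.log_mul (by norm_num) (by norm_num), Real.log_pow]
    linarith [Real.log_two_gt_d9, Real.log_three_gt_d9, Real.log_five_gt_d9]
  have hlog160000 : Real.log 160000 ≤ 11.9830 := by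
    exact_mod_cast log_le_of_le_smooth (n := 160000) 8 0 4 (by norm_num) le_rfl (by norm_num)
  have hv60 : (60 : ℝ) ≤ v := by exact_mod_cast hv
  have hv399 : (v : ℝ) ≤ 399 := by exact_mod_cast hv'
  have hblock := sum_vonMangoldt_block_le (x := x) (v := v) (lv := 4.0943) (W := 160000)
    (lw := 11.9830) (K := 2.414) hx (by omega) hv'
    (hlog60.trans (Real.log_le_log (by norm_num) hv60)) (by nlinarith) (by norm_num) hlog160000
    (by norm_num) (by nlinarith)
  have hlen := (abs_le.1 (abs_natDiv_sub_natDiv_succ_sub_le (x := x) (v := v) (by omega))).2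
  linarith

lemma sum_vonMangoldt_exceptional_le {x : ℕ} (hx : 40 ≤ Real.log x) :
    ∑ v ∈ exceptional, ∑ m ∈ Ioc (x / (v + 1)) (x / v), vonMangoldt m ≤ 0.03702 * x := by
  have hx0 := natCast_pos_of_log_pos (show 0 < Real.log x by linarith)
  have herror := sqrt_mul_log_le hx0 hx
  have hxbig := le_of_forty_le_log hx0 hx
  set E := 3 + 2 * (√x * Real.log x)
  have hcard : (#{v ∈ exceptional | v < 60} : ℝ) + #{v ∈ exceptional | ¬ v < 60} = 51 := by
    exact_mod_cast (card_filter_add_card_filter_not _).trans card_exceptional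
  have hlow : ∑ v ∈ exceptional with v < 60, ∑ m ∈ Ioc (x / (v + 1)) (x / v), vonMangoldt m ≤
      2.236 * x * 0.014258 + #{v ∈ exceptional | v < 60} * E := by
    calc _ ≤ ∑ v ∈ exceptional with v < 60, (2.236 * x * (1 / (v * (v + 1))) + E) := by
          refine sum_le_sum fun v hv => ?_
          rw [mem_filter] at hv
          exact sum_vonMangoldt_block_le_of_lt_sixty hx (exceptional_bounds v hv.1).1 hv.2
      _ ≤ _ := by
          rw [sum_add_distrib, ← mul_sum, sum_const, nsmul_eq_mul]
          gcongr
          exact sum_exceptional_lt_sixty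
  have hhigh : ∑ v ∈ exceptional with ¬ v < 60, ∑ m ∈ Ioc (x / (v + 1)) (x / v), vonMangoldt m ≤
      2.414 * x * 0.002116 + #{v ∈ exceptional | ¬ v < 60} * E := by
    calc _ ≤ ∑ v ∈ exceptional with ¬ v < 60, (2.414 * x * (1 / (v * (v + 1))) + E) := by
          refine sum_le_sum fun v hv => ?_
          rw [mem_filter, not_lt] at hv
          exact sum_vonMangoldt_block_le_of_sixty_le hx hv.2 (exceptional_bounds v hv.1).2
      _ ≤ _ := by
          rw [sum_add_distrib, ← mul_sum, sum_const, nsmul_eq_mul]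
          gcongr
          exact sum_exceptional_sixty_le
  have hErrors : #{v ∈ exceptional | v < 60} * E + #{v ∈ exceptional | ¬ v < 60} * E = 51 * E := by
    rw [← add_mul, hcard]
  rw [← sum_filter_add_sum_filter_not exceptional (· < 60)]
  linarith

lemma sum_vonMangoldt_le_div_eq_psi {k : ℕ} (hk : 1 ≤ k) (x : ℕ) :
    ∑ m ∈ Ioc 0 x, vonMangoldt m * (if k ≤ x / m then 1 else 0) =
      Chebyshev.psi ((x / k : ℕ) : ℝ) := by
  simp only [psi_natCast, mul_ite, mul_one, mul_zero, ← sum_filter]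
  refine sum_congr (ext fun m => ?_) fun _ _ => rfl
  simp only [mem_filter, mem_Ioc, Nat.le_div_iff_mul_le hk]
  constructor
  · rintro ⟨⟨hm, -⟩, hkm⟩
    exact ⟨hm, by rwa [Nat.le_div_iff_mul_le hm, mul_comm] at hkm⟩
  · rintro ⟨hm, hmk⟩
    exact ⟨⟨hm, (Nat.le_mul_of_pos_right m hk).trans hmk⟩,
      by rwa [Nat.le_div_iff_mul_le hm, mul_comm]⟩

lemma filter_natDiv_eq {v : ℕ} (hv : 1 ≤ v) (x : ℕ) :
    {m ∈ Ioc 0 x | x / m = v} = Ioc (x / (v + 1)) (x / v) := by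
  ext m
  rcases Nat.eq_zero_or_pos m with rfl | hm
  · simp
  rw [mem_filter, mem_Ioc, mem_Ioc, Nat.div_lt_iff_lt_mul v.succ_pos, Nat.le_div_iff_mul_le hv,
    mul_comm m (v + 1), mul_comm m v, ← Nat.div_lt_iff_lt_mul hm, ← Nat.le_div_iff_mul_le hm,
    Nat.lt_succ_iff]
  constructor
  · rintro ⟨-, rfl⟩
    exact ⟨le_rfl, le_rfl⟩
  · rintro ⟨hle, hge⟩
    exact ⟨⟨hm, (Nat.div_pos_iff.1 (hv.trans hge)).2⟩, hle.antisymm hge⟩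

lemma sum_vonMangoldt_div_mem {s : Finset ℕ} (hs : ∀ v ∈ s, 1 ≤ v) (x : ℕ) :
    ∑ m ∈ Ioc 0 x, vonMangoldt m * (if x / m ∈ s then 1 else 0) =
      ∑ v ∈ s, ∑ m ∈ Ioc (x / (v + 1)) (x / v), vonMangoldt m := by
  calc ∑ m ∈ Ioc 0 x, vonMangoldt m * (if x / m ∈ s then 1 else 0)
      = ∑ m ∈ Ioc 0 x, ∑ v ∈ s, if x / m = v then vonMangoldt m else 0 := by
        simp only [sum_ite_eq, mul_ite, mul_one, mul_zero]
    _ = ∑ v ∈ s, ∑ m ∈ Ioc 0 x with x / m = v, vonMangoldt m := by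
        simp only [sum_comm (s := Ioc 0 x), sum_filter]
    _ = _ := sum_congr rfl fun v hv => by rw [filter_natDiv_eq (hs v hv)]

lemma log_factorial_sum_le (x : ℕ) :
    Real.log (x !) + Real.log ((x / 6)!) + Real.log ((x / 10)!) + Real.log ((x / 2310)!) ≤
      Chebyshev.psi x + Chebyshev.psi ((x / 400 : ℕ) : ℝ) +
      (∑ v ∈ exceptional, ∑ m ∈ Ioc (x / (v + 1)) (x / v), vonMangoldt m) + Real.log ((x / 2)!)
      + Real.log ((x / 3)!) + Real.log ((x / 5)!) + Real.log ((x / 7)!) + Real.log ((x / 11)!) := by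
  rw [← sum_vonMangoldt_le_div_eq_psi (by norm_num), ← sum_vonMangoldt_div_mem fun v hv =>
    (exceptional_bounds v hv).1.trans' (by norm_num), psi_natCast, log_factorial_eq]
  simp only [log_factorial_div_eq, ← sum_add_distrib]
  refine sum_le_sum fun m _ => ?_
  have hfloor : ((x / m : ℕ) : ℝ) + ((x / m / 6 : ℕ) : ℝ) + ((x / m / 10 : ℕ) : ℝ) +
      ((x / m / 2310 : ℕ) : ℝ) ≤
      1 + (if 400 ≤ x / m then 1 else 0) + (if x / m ∈ exceptional then 1 else 0) +
      (x / m / 2 : ℕ) + (x / m / 3 : ℕ) + (x / m / 5 : ℕ) + (x / m / 7 : ℕ)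
      + (x / m / 11 : ℕ) := by
    exact_mod_cast floor_sum_le (x / m)
  linarith [mul_le_mul_of_nonneg_left hfloor (vonMangoldt_nonneg (n := m))]

lemma psi_div_400_le {x : ℕ} (hx : 40 ≤ Real.log x) :
    Chebyshev.psi ((x / 400 : ℕ) : ℝ) ≤ 0.003467 * x := by
  have hx0 := natCast_pos_of_log_pos (show 0 < Real.log x by linarith)
  have hxbig := le_of_forty_le_log hx0 hx
  have hone : (1 : ℝ) ≤ ((x / 400 : ℕ) : ℝ) := by
    have : 400 ≤ x := by exact_mod_cast (show (400 : ℝ) ≤ x by linarith)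
    exact_mod_cast (Nat.one_le_div_iff (by norm_num)).2 this
  have hle : ((x / 400 : ℕ) : ℝ) ≤ x / 400 := by
    exact_mod_cast Nat.cast_div_le (α := ℝ) (m := x) (n := 400)
  have herror : √((x / 400 : ℕ) : ℝ) * Real.log ((x / 400 : ℕ) : ℝ) ≤ √x * Real.log x := by
    have := Real.log_nonneg hone
    have : ((x / 400 : ℕ) : ℝ) ≤ x := by linarith
    gcongr
  have hlog4 : Real.log 4 ≤ 1.3863 := by
    rw [show (4 : ℝ) = 2 ^ 2 by norm_num, Real.log_pow]
    push_cast
    linarith [Real.log_two_lt_d9]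
  have hmain : Real.log 4 * ((x / 400 : ℕ) : ℝ) ≤ 1.3863 * (x / 400) := by gcongr
  linarith [Chebyshev.psi_le hone, sqrt_mul_log_le hx0 hx]

-- Chebyshev's method with the floor combination above: the places where it takes the value `2` are
-- paid for with the Brun–Titchmarsh inequality.
lemma psi_ge_of_forty_le_log {x : ℕ} (hx : 40 ≤ Real.log x) : 0.957 * x ≤ Chebyshev.psi x := by
  have hx0 := natCast_pos_of_log_pos (show 0 < Real.log x by linarith)
  have hxbig := le_of_forty_le_log hx0 hx
  have hxN : 2310 ≤ x := by exact_mod_cast (show (2310 : ℝ) ≤ x by linarith)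
  have hψ := log_factorial_sum_le x
  have h1 := (log_factorial_bounds (N := x) (by omega)).1
  have h2 := log_factorial_div_le (x := x) (d := 2) (by norm_num) (by omega)
  have h3 := log_factorial_div_le (x := x) (d := 3) (by norm_num) (by omega)
  have h5 := log_factorial_div_le (x := x) (d := 5) (by norm_num) (by omega)
  have h7 := log_factorial_div_le (x := x) (d := 7) (by norm_num) (by omega)
  have h11 := log_factorial_div_le (x := x) (d := 11) (by norm_num) (by omega)
  have h6 := le_log_factorial_div (x := x) (d := 6) (by norm_num) (by omega)
  have h10 := le_log_factorial_div (x := x) (d := 10) (by norm_num) (by omega)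
  have h2310 := le_log_factorial_div (x := x) (d := 2310) (by norm_num) (by omega)
  push_cast at h2 h3 h5 h6 h7 h10 h11 h2310
  rw [Real.log_div hx0.ne' (by norm_num)] at h2 h3 h5 h6 h7 h10 h11 h2310
  have hsplit : ∀ d : ℝ, (x : ℝ) / d * (Real.log x - Real.log d) =
      1 / d * (x * Real.log x) - x * (Real.log d / d) := fun d => by ring
  rw [hsplit] at h2 h3 h5 h6 h7 h10 h11 h2310
  have hlog : ∀ d : ℝ, 1 ≤ d → 0 ≤ Real.log d := fun d => Real.log_nonneg
  have hlogx : Real.log x ≤ x / 10 ^ 7 := by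
    have : 1 ≤ √(x : ℝ) := Real.one_le_sqrt.2 (by linarith)
    nlinarith [sqrt_mul_log_le hx0 hx]
  linarith [mul_le_mul_of_nonneg_right le_log_combination hx0.le, psi_div_400_le hx,
    sum_vonMangoldt_exceptional_le hx, hlog 2 (by norm_num), hlog 3 (by norm_num),
    hlog 5 (by norm_num), hlog 6 (by norm_num), hlog 7 (by norm_num), hlog 10 (by norm_num),
    hlog 11 (by norm_num), hlog 2310 (by norm_num)]

/-! ### The range `n ≤ e ^ 36` -/

lemma psi_sq_ge {n : ℕ} (hl : 20 ≤ Real.log n) :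
    0.957 * (n : ℝ) ^ 2 ≤ Chebyshev.psi ((n ^ 2 : ℕ) : ℝ) := by
  have h := psi_ge_of_forty_le_log (x := n ^ 2) (by
    push_cast
    rw [Real.log_pow]
    push_cast
    linarith)
  exact_mod_cast h

lemma le_four_mul_card_primeRows_of_log_le_thirtysix {n : ℕ} (hn : 2 ≤ n)
    (hl : Real.log n ≤ 36) : n ≤ 4 * #(primeRows n) := by
  rcases le_or_gt (Real.log n) 20 with h20 | h20
  · exact le_four_mul_card_primeRows_of_log_le_twenty hn h20
  by_contra! hA
  have hbig : (400000000 : ℝ) ≤ n :=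
    le_exp_twenty.trans ((Real.le_log_iff_exp_le (by positivity)).1 h20.le)
  have hbig' : 400000000 ≤ n := by exact_mod_cast hbig
  have hupper := psi_sq_le_of_card_primeRows_lt (by omega) hA
    (card_primes_interval_le_of_6570000_le (N := n) (by omega))
  have hlower := psi_sq_ge h20.le
  have hmain := two_log_mul_brun_titchmarsh_le (n := n) (l := Real.log n) (κ := 1.40228)
    (c := 0.54) (α := 0.9569) (by linarith) (by norm_num) (by nlinarith)
  have hsmall : 2 * Real.log n * ((n / 5).sqrt + 5) ≤ 2 * 36 * (n / 500 + 5) := by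
    gcongr
    exact sqrt_div_five_le (by omega)
  nlinarith

/-! ### Exponential sums -/

lemma fourierChar_eq_one_iff {t : ℝ} : (𝐞 t : ℂ) = 1 ↔ ∃ m : ℤ, t = m := by
  rw [Circle.coe_eq_one, Real.fourierChar_apply', Circle.exp_eq_one]
  refine exists_congr fun m => ?_
  rw [mul_comm (m : ℝ)]
  exact mul_right_inj' (by positivity)

lemma fourierChar_add (s t : ℝ) : (𝐞 (s + t) : ℂ) = 𝐞 s * 𝐞 t := by
  rw [AddChar.map_add_eq_mul, Circle.coe_mul]

lemma fourierChar_sub (s t : ℝ) : (𝐞 (s - t) : ℂ) = 𝐞 s * (starRingEnd ℂ) (𝐞 t) := by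
  rw [sub_eq_add_neg, fourierChar_add, AddChar.map_neg_eq_inv, Circle.coe_inv_eq_conj]

lemma sum_range_fourierChar {Q : ℕ} (hQ : 0 < Q) (r : ℤ) :
    ∑ x ∈ range Q, (𝐞 (r * x / Q) : ℂ) = if (Q : ℤ) ∣ r then (Q : ℂ) else 0 := by
  have hQ' : (Q : ℝ) ≠ 0 := by positivity
  have hpow : ∀ x : ℕ, (𝐞 (r * x / Q) : ℂ) = (𝐞 (r / Q) : ℂ) ^ x := fun x => by
    rw [← Circle.coe_pow, ← AddChar.map_nsmul_eq_pow, nsmul_eq_mul]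
    congr 2
    ring
  have hone : (𝐞 (r / Q) : ℂ) = 1 ↔ (Q : ℤ) ∣ r := by
    rw [fourierChar_eq_one_iff]
    refine exists_congr fun m => ?_
    rw [div_eq_iff hQ', mul_comm]
    exact_mod_cast Iff.rfl
  split_ifs with h
  · simp only [hpow, hone.2 h, one_pow, sum_const, card_range, nsmul_eq_mul, mul_one]
  · have hQr : (𝐞 (r * Q / Q) : ℂ) = 1 := fourierChar_eq_one_iff.2 ⟨r, mul_div_cancel_right₀ _ hQ'⟩
    simp only [hpow] at hQr ⊢
    rw [geom_sum_eq (mt hone.1 h), hQr, sub_self, zero_div]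

lemma sum_range_sq_norm_sum {ι : Type*} (s : Finset ι) (a : ι → ℂ) (r : ι → ℤ) {Q : ℕ}
    (hQ : 0 < Q) :
    ((∑ x ∈ range Q, ‖∑ i ∈ s, a i * 𝐞 (r i * x / Q)‖ ^ 2 : ℝ) : ℂ) =
      Q * ∑ i ∈ s, ∑ j ∈ s, if (Q : ℤ) ∣ r i - r j then a i * (starRingEnd ℂ) (a j) else 0 := by
  have hterm : ∀ x : ℕ, (‖∑ i ∈ s, a i * 𝐞 (r i * x / Q)‖ : ℂ) ^ 2 =
      ∑ i ∈ s, ∑ j ∈ s, a i * (starRingEnd ℂ) (a j) * 𝐞 ((r i - r j : ℤ) * x / Q) := by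
    intro x
    rw [← Complex.mul_conj', map_sum, sum_mul_sum]
    refine sum_congr rfl fun i _ => sum_congr rfl fun j _ => ?_
    rw [map_mul, Int.cast_sub, sub_mul, sub_div, fourierChar_sub]
    ring
  push_cast
  rw [sum_congr rfl fun x _ => hterm x, sum_comm, mul_sum]
  refine sum_congr rfl fun i _ => ?_
  rw [sum_comm, mul_sum]
  refine sum_congr rfl fun j _ => ?_
  rw [← mul_sum, sum_range_fourierChar hQ]
  split_ifs <;> ring

lemma sum_range_sq_norm_sum_of_injective {ι : Type*} (s : Finset ι) (a : ι → ℂ) (r : ι → ℤ)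
    {Q : ℕ} (hQ : 0 < Q) (hr : ∀ i ∈ s, ∀ j ∈ s, (Q : ℤ) ∣ r i - r j → i = j) :
    ∑ x ∈ range Q, ‖∑ i ∈ s, a i * 𝐞 (r i * x / Q)‖ ^ 2 = Q * ∑ i ∈ s, ‖a i‖ ^ 2 := by
  have hdiag : ∑ i ∈ s, ∑ j ∈ s,
      (if (Q : ℤ) ∣ r i - r j then a i * (starRingEnd ℂ) (a j) else 0) =
        ∑ i ∈ s, (‖a i‖ : ℂ) ^ 2 := by
    refine sum_congr rfl fun i hi => ?_
    rw [sum_eq_single_of_mem i hi fun j hj hji => if_neg fun h => hji (hr i hi j hj h).symm,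
      if_pos (by simp), Complex.mul_conj']
  have h := sum_range_sq_norm_sum s a r hQ
  rw [hdiag] at h
  exact_mod_cast h

lemma card_range_filter_dvd_sub_le (q H i : ℕ) (hq : 0 < q) :
    #{j ∈ range H | (q : ℤ) ∣ (i : ℤ) - (j : ℕ)} ≤ H / q + 1 := by
  rw [filter_congr fun j _ => (Nat.modEq_iff_dvd (n := q) (a := j) (b := i)).symm,
    ← Nat.count_eq_card_filter_range, Nat.count_modEq_card _ hq]
  split_ifs <;> omega

lemma sum_range_sq_norm_sum_progression_le {q c : ℕ} (hq : 0 < q) (hc : c.Coprime q) (H : ℕ) :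
    ∑ x ∈ range q, ‖∑ i ∈ range H, (𝐞 (c * i * x / q) : ℂ)‖ ^ 2 ≤ H ^ 2 + q * H := by
  have hdvd : ∀ i j : ℕ, (q : ℤ) ∣ (c * i : ℤ) - c * j ↔ (q : ℤ) ∣ (i : ℤ) - j := fun i j => by
    rw [← mul_sub]
    exact ⟨(Nat.isCoprime_iff_coprime.2 hc.symm).dvd_of_dvd_mul_left, fun h => h.mul_left _⟩
  have hparseval : ∑ x ∈ range q, ‖∑ i ∈ range H, (𝐞 (c * i * x / q) : ℂ)‖ ^ 2 =
      q * ∑ i ∈ range H, (#{j ∈ range H | (q : ℤ) ∣ (i : ℤ) - (j : ℕ)} : ℝ) := by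
    have h := sum_range_sq_norm_sum (range H) (fun _ => 1) (fun i => (c * i : ℤ)) hq
    simp only [hdvd, ← sum_filter, one_mul, map_one, sum_const, nsmul_eq_mul, mul_one,
      Int.cast_mul, Int.cast_natCast] at h
    exact_mod_cast h
  have hcount : ∀ i ∈ range H,
      (#{j ∈ range H | (q : ℤ) ∣ (i : ℤ) - (j : ℕ)} : ℝ) ≤ (H : ℝ) / q + 1 := fun i _ => by
    refine (Nat.cast_le.2 (card_range_filter_dvd_sub_le q H i hq)).trans ?_
    push_cast
    gcongr
    exact Nat.cast_div_le
  have hq' : (q : ℝ) ≠ 0 := by positivity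
  calc _ ≤ (q : ℝ) * ∑ _i ∈ range H, ((H : ℝ) / q + 1) := by
        rw [hparseval]
        gcongr with i hi
        exact hcount i hi
    _ = _ := by
        rw [sum_const, card_range, nsmul_eq_mul]
        field_simp

lemma sum_coprime_sq_norm_sum_progression_le {q c : ℕ} (hq : 0 < q) (hq1 : q ≠ 1)
    (hc : c.Coprime q) (H : ℕ) :
    ∑ a ∈ range q with a.Coprime q, ‖∑ i ∈ range H, (𝐞 (c * i * a / q) : ℂ)‖ ^ 2 ≤ q * H := by
  have hzero : ‖∑ i ∈ range H, (𝐞 (c * i * (0 : ℕ) / q) : ℂ)‖ ^ 2 = (H : ℝ) ^ 2 := by simp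
  have hall := sum_range_sq_norm_sum_progression_le hq hc H
  rw [← add_sum_erase _ _ (mem_range.2 hq), hzero] at hall
  refine (sum_le_sum_of_subset_of_nonneg (fun a ha => ?_) fun _ _ _ => by positivity).trans
    (le_of_add_le_add_left hall)
  obtain ⟨haq, hcop⟩ := mem_filter.1 ha
  refine mem_erase.2 ⟨?_, haq⟩
  rintro rfl
  exact hq1 (Nat.coprime_zero_left q |>.1 hcop)

/-! ### Ramanujan sums -/

lemma sum_range_filter_dvd {M : Type*} [AddCommMonoid M] {d q : ℕ} (hd : 0 < d) (hdq : d ∣ q)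
    (f : ℕ → M) : ∑ a ∈ range q with d ∣ a, f a = ∑ b ∈ range (q / d), f (d * b) := by
  obtain ⟨k, rfl⟩ := hdq
  rw [Nat.mul_div_cancel_left k hd]
  refine (sum_nbij' (d * ·) (· / d) ?_ ?_ ?_ ?_ fun _ _ => rfl).symm
  · exact fun b hb => mem_filter.2
      ⟨mem_range.2 (Nat.mul_lt_mul_of_pos_left (mem_range.1 hb) hd), dvd_mul_right d b⟩
  · exact fun a ha => mem_range.2 (Nat.div_lt_of_lt_mul (mem_range.1 (mem_filter.1 ha).1))
  · exact fun b _ => Nat.mul_div_cancel_left b hd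
  · exact fun a ha => Nat.mul_div_cancel' (mem_filter.1 ha).2

lemma sum_moebius_divisors_filter_dvd {q : ℕ} (hq : 0 < q) (a : ℕ) :
    ∑ d ∈ q.divisors with d ∣ a, (μ d : ℂ) = if a.Coprime q then 1 else 0 := by
  have hdiv : {d ∈ q.divisors | d ∣ a} = (a.gcd q).divisors := by
    ext d
    have := Nat.gcd_pos_of_pos_right a hq
    simp only [mem_filter, Nat.mem_divisors, Nat.dvd_gcd_iff]
    omega
  have := congrArg (fun f : ArithmeticFunction ℂ => f (a.gcd q)) coe_moebius_mul_coe_zeta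
  simpa only [hdiv, coe_mul_zeta_apply, one_apply, intCoe_apply] using this

lemma sum_coprime_fourierChar {q : ℕ} (hq : 0 < q) (m : ℕ) :
    ∑ a ∈ range q with a.Coprime q, (𝐞 (m * a / q) : ℂ) =
      ∑ d ∈ q.divisors, if d ∣ m then (μ (q / d) * d : ℂ) else 0 := by
  have hinner : ∀ d ∈ q.divisors, ∑ a ∈ range q with d ∣ a, (𝐞 (m * a / q) : ℂ) =
      if q / d ∣ m then ((q / d : ℕ) : ℂ) else 0 := by
    intro d hd
    have hdq := Nat.dvd_of_mem_divisors hd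
    have hd0 := Nat.pos_of_mem_divisors hd
    have hsum := sum_range_fourierChar (Nat.div_pos (Nat.le_of_dvd hq hdq) hd0) m
    simp only [Int.natCast_dvd_natCast, Int.cast_natCast] at hsum
    rw [sum_range_filter_dvd hd0 hdq, ← hsum]
    refine sum_congr rfl fun b _ => ?_
    rw [Nat.cast_div hdq (by positivity)]
    congr 2
    push_cast
    field_simp
  calc _ = ∑ a ∈ range q, ∑ d ∈ q.divisors with d ∣ a, (μ d : ℂ) * 𝐞 (m * a / q) := by
        rw [sum_filter]
        refine sum_congr rfl fun a _ => ?_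
        rw [← sum_mul, sum_moebius_divisors_filter_dvd hq, ite_mul, one_mul, zero_mul]
    _ = ∑ d ∈ q.divisors, (μ d : ℂ) * ∑ a ∈ range q with d ∣ a, (𝐞 (m * a / q) : ℂ) := by
        simp only [sum_filter, mul_sum, mul_ite, mul_zero]
        exact sum_comm
    _ = ∑ d ∈ q.divisors, (μ d : ℂ) * if q / d ∣ m then ((q / d : ℕ) : ℂ) else 0 :=
        sum_congr rfl fun d hd => by rw [hinner d hd]
    _ = ∑ d ∈ q.divisors, (μ (q / d) : ℂ) * if d ∣ m then (d : ℂ) else 0 := by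
        rw [← Nat.sum_div_divisors]
        refine sum_congr rfl fun d hd => ?_
        rw [Nat.div_div_self (Nat.dvd_of_mem_divisors hd) hq.ne']
    _ = _ := by simp only [mul_ite, mul_zero]

lemma ramanujanRatio_eq_sum_fourierChar {q : ℕ} (hq : Squarefree q) (m : ℕ) :
    (ramanujanRatio q m : ℂ) =
      μ q / φ q * ∑ a ∈ range q with a.Coprime q, (𝐞 (m * a / q) : ℂ) := by
  have hmoebius : ∀ d ∈ q.divisors, (μ d : ℂ) = μ q * μ (q / d) := by
    intro d hd
    have hdq := Nat.dvd_of_mem_divisors hd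
    have hcop : Nat.Coprime d (q / d) :=
      Nat.coprime_of_squarefree_mul (by rwa [Nat.mul_div_cancel' hdq])
    have hsq := moebius_sq_eq_one_of_squarefree (hq.squarefree_of_dvd (Nat.div_dvd_of_dvd hdq))
    have hmul := isMultiplicative_moebius.map_mul_of_coprime hcop
    rw [Nat.mul_div_cancel' hdq] at hmul
    rw [hmul]
    push_cast
    rw [mul_assoc, ← pow_two]
    exact_mod_cast (by rw [hsq, mul_one] : μ d = μ d * μ (q / d) ^ 2)
  rw [sum_coprime_fourierChar (Nat.pos_of_ne_zero hq.ne_zero), ramanujanRatio_eq_sum_divisors hq]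
  push_cast
  rw [div_mul_eq_mul_div, mul_sum]
  congr 1
  refine sum_congr rfl fun d hd => ?_
  split_ifs
  · push_cast
    rw [hmoebius d hd, mul_assoc]
  · simp

/-! ### The large sieve -/

lemma sq_div_two_le_sq_norm_sum_range {M : ℕ} {t : ℝ} (h0 : 0 ≤ t) (h1 : t * M ≤ 1 / 4) :
    (M : ℝ) ^ 2 / 2 ≤ ‖∑ k ∈ range M, (𝐞 (t * k) : ℂ)‖ ^ 2 := by
  have hrotate : ‖∑ k ∈ range M, (𝐞 (t * k) : ℂ)‖ = ‖∑ k ∈ range M, (𝐞 (t * k - 1 / 8) : ℂ)‖ := by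
    simp only [fourierChar_sub, ← sum_mul]
    rw [norm_mul, RCLike.norm_conj, Circle.norm_coe, mul_one]
  have hre : ∀ k ∈ range M, √2 / 2 ≤ (𝐞 (t * k - 1 / 8) : ℂ).re := by
    intro k hk
    have hkM : (k : ℝ) ≤ M := by exact_mod_cast (mem_range.1 hk).le
    have hlower : 0 ≤ t * k := by positivity
    have hupper : t * k ≤ 1 / 4 := (mul_le_mul_of_nonneg_left hkM h0).trans h1
    rw [Real.fourierChar_apply, Complex.exp_ofReal_mul_I_re, ← Real.cos_pi_div_four,
      ← Real.cos_abs (2 * Real.pi * (t * k - 1 / 8))]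
    have hpi := Real.pi_pos
    refine Real.cos_le_cos_of_nonneg_of_le_pi (abs_nonneg _) (by linarith) ?_
    rw [abs_le]
    constructor <;> nlinarith
  have hnorm : (M : ℝ) * (√2 / 2) ≤ ‖∑ k ∈ range M, (𝐞 (t * k) : ℂ)‖ := by
    rw [hrotate]
    refine le_trans ?_ (Complex.re_le_norm _)
    rw [Complex.re_sum]
    refine le_trans (le_of_eq ?_) (sum_le_sum hre)
    rw [sum_const, card_range, nsmul_eq_mul]
  calc (M : ℝ) ^ 2 / 2 = ((M : ℝ) * (√2 / 2)) ^ 2 := by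
        rw [mul_pow, div_pow, Real.sq_sqrt (by norm_num)]; ring
    _ ≤ _ := by gcongr

lemma eq_and_eq_of_dvd_translate_sub {ι : Type*} {r : ι → ℤ} {P N : ℕ} {i j : ι}
    (hr : i ≠ j → ∀ n : ℤ, (P : ℤ) ≤ N * |r i - r j - n * P|) {k l : ℕ} (hk : k < P) (hl : l < P)
    (h : ((P * N : ℕ) : ℤ) ∣ (k + N * r i) - (l + N * r j)) : k = l ∧ i = j := by
  obtain ⟨n, hn⟩ := h
  push_cast at hn
  have hkl : |(l : ℤ) - k| < P := by rw [abs_lt]; omega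
  have hij : i = j := by
    by_contra hne
    refine (hr hne n).not_gt ?_
    rwa [← Nat.abs_cast N, ← abs_mul,
      show (N : ℤ) * (r i - r j - n * P) = l - k by linear_combination hn]
  subst hij
  have hdvd : (P : ℤ) ∣ (l : ℤ) - k := ⟨-(N * n), by linear_combination -hn⟩
  have := Int.eq_zero_of_abs_lt_dvd hdvd hkl
  exact ⟨by omega, rfl⟩

-- Each frequency `r i / P` is replaced by the `P` translates `r i / P + k / (P N)` with `k < P`:
-- they are still distinct modulo `1`, and their sum is about `P` times as large for `x ≤ N / 4`,
-- so that Parseval's identity modulo `P N` applies.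
lemma large_sieve {ι : Type*} (s : Finset ι) (c : ι → ℂ) (r : ι → ℤ) {P N X : ℕ} (hP : 0 < P)
    (hN : 0 < N) (hX : 4 * X ≤ N)
    (hr : ∀ i ∈ s, ∀ j ∈ s, i ≠ j → ∀ n : ℤ, (P : ℤ) ≤ N * |r i - r j - n * P|) :
    ∑ x ∈ range X, ‖∑ i ∈ s, c i * 𝐞 (r i * x / P)‖ ^ 2 ≤ 2 * N * ∑ i ∈ s, ‖c i‖ ^ 2 := by
  have hdistinct : ∀ u ∈ range P ×ˢ s, ∀ v ∈ range P ×ˢ s,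
      ((P * N : ℕ) : ℤ) ∣ (u.1 + N * r u.2 : ℤ) - (v.1 + N * r v.2) → u = v := by
    rintro ⟨k, i⟩ hu ⟨l, j⟩ hv h
    simp only [mem_product, mem_range] at hu hv
    obtain ⟨rfl, rfl⟩ := eq_and_eq_of_dvd_translate_sub (hr i hu.2 j hv.2) hu.1 hv.1 h
    rfl
  have hfactor : ∀ x : ℕ, ∑ u ∈ range P ×ˢ s,
      c u.2 * 𝐞 (((u.1 + N * r u.2 : ℤ) : ℝ) * x / (P * N : ℕ)) =
        (∑ k ∈ range P, (𝐞 (x / (P * N) * k) : ℂ)) * ∑ i ∈ s, c i * 𝐞 (r i * x / P) := by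
    intro x
    rw [sum_product, sum_mul_sum]
    refine sum_congr rfl fun k _ => sum_congr rfl fun i _ => ?_
    rw [show (((k + N * r i : ℤ) : ℝ) * x / (P * N : ℕ)) = x / (P * N) * k + r i * x / P by
      push_cast; field_simp, fourierChar_add]
    ring
  have hparseval := sum_range_sq_norm_sum_of_injective (range P ×ˢ s) (fun u => c u.2)
    (fun u => u.1 + N * r u.2) (Nat.mul_pos hP hN) hdistinct
  simp only [hfactor, norm_mul, mul_pow, sum_product, sum_const, card_range, nsmul_eq_mul]
    at hparseval
  have hlower : ∑ x ∈ range X, (P : ℝ) ^ 2 / 2 * ‖∑ i ∈ s, c i * 𝐞 (r i * x / P)‖ ^ 2 ≤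
      (P * N : ℕ) * (P * ∑ i ∈ s, ‖c i‖ ^ 2) := by
    rw [← hparseval]
    refine (sum_le_sum fun x hx => ?_).trans (sum_le_sum_of_subset_of_nonneg
      (range_subset_range.2 (by nlinarith : X ≤ P * N)) fun x _ _ => by positivity)
    gcongr
    refine sq_div_two_le_sq_norm_sum_range (by positivity) ?_
    have hxN : 4 * (x : ℝ) ≤ N := by exact_mod_cast (by have := mem_range.1 hx; omega : 4 * x ≤ N)
    rw [show (x : ℝ) / (P * N) * P = x / N by field_simp, div_le_iff₀ (by positivity)]
    linarith
  rw [← mul_sum] at hlower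
  refine le_of_mul_le_mul_left (hlower.trans_eq ?_) (by positivity : (0 : ℝ) < (P : ℝ) ^ 2 / 2)
  push_cast
  ring

lemma one_le_abs_mul_sub_sub {c q q' a a' : ℕ} (hc : c.Coprime q) (hc' : c.Coprime q')
    (hq : 0 < q) (ha : a < q) (ha' : a' < q') (hcop : a.Coprime q) (hcop' : a'.Coprime q')
    (hne : (q, a) ≠ (q', a')) (n : ℤ) :
    1 ≤ |(c * (a * q' - a' * q) - n * (q * q') : ℤ)| := by
  refine Int.one_le_abs fun hzero => hne ?_
  have hdvd : ((q * q' : ℕ) : ℤ) ∣ a * q' - a' * q := by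
    refine (Nat.isCoprime_iff_coprime.2 (hc.mul_right hc').symm).dvd_of_dvd_mul_left
      (⟨n, ?_⟩ : ((q * q' : ℕ) : ℤ) ∣ c * (a * q' - a' * q))
    push_cast
    linear_combination hzero
  have hq' : 0 < q' := by omega
  have hlt : |(a * q' - a' * q : ℤ)| < (q * q' : ℕ) := by
    have h1 : a * q' < q * q' := Nat.mul_lt_mul_of_pos_right ha hq'
    have h2 : a' * q < q * q' := by rw [mul_comm q]; exact Nat.mul_lt_mul_of_pos_right ha' hq
    zify at h1 h2
    push_cast
    rw [abs_lt]
    constructor <;> nlinarith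
  have hcross : a * q' = a' * q := by
    have := Int.eq_zero_of_abs_lt_dvd hdvd hlt
    zify
    linarith
  have hqq : q = q' := Nat.dvd_antisymm
    (hcop.symm.dvd_of_dvd_mul_left (hcross ▸ dvd_mul_left q a'))
    (hcop'.symm.dvd_of_dvd_mul_left (hcross ▸ dvd_mul_left q' a))
  subst hqq
  rw [Nat.eq_of_mul_eq_mul_right hq hcross]

lemma farey_spacing {c D P q q' a a' : ℕ} (hP : 0 < P) (hqP : q ∣ P) (hqP' : q' ∣ P) (hqD : q ≤ D)
    (hqD' : q' ≤ D) (hc : c.Coprime q) (hc' : c.Coprime q') (ha : a < q) (ha' : a' < q')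
    (hcop : a.Coprime q) (hcop' : a'.Coprime q') (hne : (q, a) ≠ (q', a')) (n : ℤ) :
    (P : ℤ) ≤ (D ^ 2 : ℕ) * |c * a * (P / q : ℕ) - c * a' * (P / q' : ℕ) - n * P| := by
  have hclear : (P * (c * (a * q' - a' * q) - n * (q * q')) : ℤ) =
      q * q' * (c * a * (P / q : ℕ) - c * a' * (P / q' : ℕ) - n * P) := by
    have hq : ((P / q : ℕ) : ℤ) * q = P := by exact_mod_cast Nat.div_mul_cancel hqP
    have hq' : ((P / q' : ℕ) : ℤ) * q' = P := by exact_mod_cast Nat.div_mul_cancel hqP'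
    linear_combination -(c * a * q' : ℤ) * hq + (c * a' * q : ℤ) * hq'
  calc (P : ℤ) ≤ P * |(c * (a * q' - a' * q) - n * (q * q') : ℤ)| :=
        le_mul_of_one_le_right (by positivity)
          (one_le_abs_mul_sub_sub hc hc' (by omega) ha ha' hcop hcop' hne n)
    _ = (q * q' : ℕ) * |c * a * (P / q : ℕ) - c * a' * (P / q' : ℕ) - n * P| := by
        rw [← Nat.abs_cast P, ← abs_mul, Nat.abs_cast P, hclear, abs_mul, Nat.cast_mul,
          abs_of_nonneg (by positivity : (0 : ℤ) ≤ q * q')]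
    _ ≤ _ := by
        gcongr
        rw [pow_two]
        exact Nat.mul_le_mul hqD hqD'

lemma large_sieve_farey {Q : Finset ℕ} {b D X : ℕ}
    (hQ : ∀ q ∈ Q, 0 < q ∧ q ≤ D ∧ b.Coprime q) (hD : 0 < D) (hX : 4 * X ≤ D ^ 2)
    (c : ℕ → ℕ → ℂ) :
    ∑ x ∈ range X, ‖∑ q ∈ Q, ∑ a ∈ range q with a.Coprime q, c q a * 𝐞 (b * a * x / q)‖ ^ 2 ≤
      2 * D ^ 2 * ∑ q ∈ Q, ∑ a ∈ range q with a.Coprime q, ‖c q a‖ ^ 2 := by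
  let P := ∏ q ∈ Q, q
  let s := Q.sigma fun q => {a ∈ range q | a.Coprime q}
  have hP : 0 < P := prod_pos fun q hq => (hQ q hq).1
  have hsieve := large_sieve s (fun u => c u.1 u.2) (fun u => b * u.2 * (P / u.1 : ℕ)) hP
    (by positivity : 0 < D ^ 2) hX (by
      rintro ⟨q, a⟩ hu ⟨q', a'⟩ hv huv
      simp only [s, mem_sigma, mem_filter, mem_range] at hu hv
      obtain ⟨-, hqD, hbq⟩ := hQ q hu.1
      obtain ⟨-, hqD', hbq'⟩ := hQ q' hv.1
      exact farey_spacing hP (dvd_prod_of_mem _ hu.1) (dvd_prod_of_mem _ hv.1) hqD hqD' hbq hbq'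
        hu.2.1 hv.2.1 hu.2.2 hv.2.2 fun h => huv (by simpa using h))
  have hfreq : ∀ q ∈ Q, ∀ a x : ℕ,
      (b * a * x / q : ℝ) = ((b * a * (P / q : ℕ) : ℤ) : ℝ) * x / P := by
    intro q hq a x
    have hq0 := (hQ q hq).1
    have hqP : q ∣ P := dvd_prod_of_mem _ hq
    simp only [Int.cast_mul, Int.cast_natCast]
    rw [Nat.cast_div hqP (by positivity)]
    field_simp
  simp only [s, sum_sigma, Nat.cast_pow] at hsieve
  refine le_trans (le_of_eq ?_) hsieve
  refine sum_congr rfl fun x _ => ?_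
  congr 2
  refine sum_congr rfl fun q hq => sum_congr rfl fun a _ => ?_
  rw [hfreq q hq]

/-! ### The variance of the majorant over short windows -/

/-- The sum of `majorant R` over `H` consecutive terms of the progression `b` modulo `30`, starting
at `30 * x + b`, minus its mean value `H / selbergSum R`. -/
noncomputable def windowDeviation (R H b x : ℕ) : ℝ :=
  ∑ i ∈ range H, majorant R (30 * (x + i) + b) - H / selbergSum R

/-- The Fourier coefficient of `windowDeviation R H b` at the frequency `30 * a / q`. -/
noncomputable def windowCoeff (R H b q a : ℕ) : ℂ :=
  majorantCoeff R q * (μ q / φ q) * 𝐞 (b * a / q) * ∑ i ∈ range H, (𝐞 ((30 : ℕ) * i * a / q) : ℂ)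

/-- The sum `∑ 9 ^ ω(q) q / φ(q)²` that bounds the variance of the majorant. -/
noncomputable def varianceSum (D : ℕ) : ℝ :=
  ∑ q ∈ sieveRange D, 9 ^ ω q * (q : ℝ) / (φ q : ℝ) ^ 2

lemma sum_window_ramanujanRatio {q : ℕ} (hq : Squarefree q) (R H b x : ℕ) :
    ((∑ i ∈ range H, majorantCoeff R q * ramanujanRatio q (30 * (x + i) + b) : ℝ) : ℂ) =
      ∑ a ∈ range q with a.Coprime q, windowCoeff R H b q a * 𝐞 ((30 : ℕ) * a * x / q) := by
  simp only [Complex.ofReal_sum, Complex.ofReal_mul, ramanujanRatio_eq_sum_fourierChar hq, mul_sum]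
  rw [sum_comm]
  refine sum_congr rfl fun a _ => ?_
  rw [windowCoeff, mul_sum, sum_mul]
  refine sum_congr rfl fun i _ => ?_
  have hsplit : ((30 * (x + i) + b : ℕ) * a / q : ℝ) =
      b * a / q + (30 : ℕ) * i * a / q + (30 : ℕ) * a * x / q := by
    push_cast
    ring
  rw [hsplit, fourierChar_add, fourierChar_add]
  ring

lemma windowDeviation_eq_sum {R : ℕ} (hR : 1 ≤ R) (H b x : ℕ) :
    (windowDeviation R H b x : ℂ) = ∑ q ∈ (sieveRange (R ^ 2)).erase 1,
      ∑ a ∈ range q with a.Coprime q, windowCoeff R H b q a * 𝐞 ((30 : ℕ) * a * x / q) := by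
  have hone : 1 ∈ sieveRange (R ^ 2) := one_mem_sieveRange (Nat.one_le_pow _ _ hR)
  have hmean : ∑ i ∈ range H, majorantCoeff R 1 * ramanujanRatio 1 (30 * (x + i) + b) =
      H / selbergSum R := by
    simp [majorantCoeff_one hR, ramanujanRatio, div_eq_mul_inv]
  have hdev : windowDeviation R H b x = ∑ q ∈ (sieveRange (R ^ 2)).erase 1,
      ∑ i ∈ range H, majorantCoeff R q * ramanujanRatio q (30 * (x + i) + b) := by
    simp only [windowDeviation, majorant_eq_sum_ramanujanRatio]
    rw [sum_comm, ← add_sum_erase _ _ hone, hmean, add_sub_cancel_left]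
  rw [hdev, Complex.ofReal_sum]
  exact sum_congr rfl fun q hq =>
    sum_window_ramanujanRatio (mem_sieveRange.1 (mem_of_mem_erase hq)).2.1 R H b x

lemma sum_sq_norm_windowCoeff_le {R q : ℕ} (hR : 1 ≤ R) (hq : Squarefree q) (hq1 : q ≠ 1)
    (hq30 : Nat.Coprime q 30) (H b : ℕ) :
    ∑ a ∈ range q with a.Coprime q, ‖windowCoeff R H b q a‖ ^ 2 ≤
      H / selbergSum R ^ 2 * (9 ^ ω q * q / (φ q : ℝ) ^ 2) := by
  have hq0 : 0 < q := Nat.pos_of_ne_zero hq.ne_zero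
  have : (0 : ℝ) < φ q := by exact_mod_cast Nat.totient_pos.2 hq0
  have hL := selbergSum_pos hR
  have hmoebius : |(μ q : ℝ)| ≤ 1 := by exact_mod_cast abs_moebius_le_one
  have hcoeff : ‖(majorantCoeff R q * (μ q / φ q) : ℂ)‖ ≤
      3 ^ ω q / selbergSum R * (1 / φ q) := by
    rw [norm_mul, norm_div, Complex.norm_real, Complex.norm_natCast, Complex.norm_intCast,
      Real.norm_eq_abs]
    have := abs_majorantCoeff_le hR hq
    gcongr
  have hterm : ∀ a, ‖windowCoeff R H b q a‖ ^ 2 =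
      ‖(majorantCoeff R q * (μ q / φ q) : ℂ)‖ ^ 2 *
        ‖∑ i ∈ range H, (𝐞 ((30 : ℕ) * i * a / q) : ℂ)‖ ^ 2 := by
    intro a
    rw [windowCoeff, norm_mul, norm_mul, Circle.norm_coe, mul_one, mul_pow]
  simp only [hterm]
  rw [← mul_sum]
  calc _ ≤ (3 ^ ω q / selbergSum R * (1 / φ q)) ^ 2 * (q * H) := by
        gcongr
        exact sum_coprime_sq_norm_sum_progression_le hq0 hq1 hq30.symm H
    _ = _ := by
        rw [show (9 : ℝ) = 3 ^ 2 by norm_num, ← pow_mul, mul_comm 2, pow_mul]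
        field_simp

lemma sum_sq_windowDeviation_le {R X : ℕ} (hR : 1 ≤ R) (H b : ℕ) (hX : 4 * X ≤ R ^ 4) :
    ∑ x ∈ range X, windowDeviation R H b x ^ 2 ≤
      2 * (R : ℝ) ^ 4 * (H / selbergSum R ^ 2 * varianceSum (R ^ 2)) := by
  have hQ : ∀ q ∈ (sieveRange (R ^ 2)).erase 1, 0 < q ∧ q ≤ R ^ 2 ∧ Nat.Coprime 30 q := by
    intro q hq
    obtain ⟨hrange, -, hcop⟩ := mem_sieveRange.1 (mem_of_mem_erase hq)
    exact ⟨hrange.1, hrange.2, hcop.symm⟩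
  have hnorm : ∀ x, windowDeviation R H b x ^ 2 =
      ‖∑ q ∈ (sieveRange (R ^ 2)).erase 1, ∑ a ∈ range q with a.Coprime q,
        windowCoeff R H b q a * 𝐞 ((30 : ℕ) * a * x / q)‖ ^ 2 := by
    intro x
    rw [← windowDeviation_eq_sum hR, Complex.norm_real, Real.norm_eq_abs, sq_abs]
  simp only [hnorm]
  refine (large_sieve_farey hQ (by positivity) (by rwa [← pow_mul]) _).trans ?_
  rw [Nat.cast_pow, ← pow_mul]
  gcongr
  rw [varianceSum, mul_sum]
  refine (sum_le_sum fun q hq => ?_).trans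
    (sum_le_sum_of_subset_of_nonneg (erase_subset 1 _) fun q _ _ => by positivity)
  obtain ⟨-, hsq, hcop⟩ := mem_sieveRange.1 (mem_of_mem_erase hq)
  exact sum_sq_norm_windowCoeff_le hR hsq (ne_of_mem_erase hq) hcop H b

/-! ### The variance sum -/

lemma one_div_mul_rpow_le {x : ℝ} (hx : 0 < x) :
    1 / ((x + 1) * (x + 1) ^ (4⁻¹ : ℝ)) ≤ 4 * (1 / x ^ (4⁻¹ : ℝ) - 1 / (x + 1) ^ (4⁻¹ : ℝ)) := by
  have hroot : ∀ y : ℝ, 0 ≤ y → (y ^ (4⁻¹ : ℝ)) ^ 4 = y := fun y hy => by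
    exact_mod_cast Real.rpow_inv_natCast_pow hy four_ne_zero
  have hs4 := hroot x hx.le
  have ht4 := hroot (x + 1) (by positivity)
  have hs0 : 0 < x ^ (4⁻¹ : ℝ) := by positivity
  have hst : x ^ (4⁻¹ : ℝ) ≤ (x + 1) ^ (4⁻¹ : ℝ) := by gcongr; linarith
  generalize x ^ (4⁻¹ : ℝ) = s at *
  generalize (x + 1) ^ (4⁻¹ : ℝ) = t at *
  have ht0 : 0 < t := hs0.trans_le hst
  have hfactor : 1 ≤ (t - s) * (4 * t ^ 3) :=
    calc 1 = (t - s) * (t ^ 3 + t ^ 2 * s + t * s ^ 2 + s ^ 3) := by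
          linear_combination hs4 - ht4
      _ ≤ (t - s) * (t ^ 3 + t ^ 2 * t + t * t ^ 2 + t ^ 3) := by gcongr
      _ = (t - s) * (4 * t ^ 3) := by ring
  rw [← ht4, div_sub_div _ _ hs0.ne' ht0.ne', one_mul, mul_one, mul_div_assoc',
    div_le_div_iff₀ (by positivity) (by positivity), one_mul]
  calc s * t ≤ t * t := by gcongr
    _ = t ^ 2 * 1 := by ring
    _ ≤ t ^ 2 * ((t - s) * (4 * t ^ 3)) := by gcongr
    _ = 4 * (t - s) * (t ^ 4 * t) := by ring

-- Summation by parts: the integers coprime to `30` have density `4 / 15`, and the tail of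
-- `∑ m ^ (-5 / 4)` beyond `N` is at most `4 * N ^ (-1 / 4)`.
lemma sum_coprime_thirty_le {N : ℕ} (hN : 36 ≤ N) :
    ∑ m ∈ Ioc 36 N with Nat.Coprime m 30, 1 / ((m : ℝ) * (m : ℝ) ^ (4⁻¹ : ℝ)) ≤
      (wheelCount N - (4 * N + 14) / 15) * (1 / ((N : ℝ) * (N : ℝ) ^ (4⁻¹ : ℝ))) + 0.4532 -
        16 / 15 * (1 / (N : ℝ) ^ (4⁻¹ : ℝ)) := by
  induction N, hN using Nat.le_induction with
  | base =>
    have hcount : wheelCount 36 = 9 := by unfold wheelCount; decide +kernel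
    have hroot : (2.449 : ℝ) ≤ 36 ^ (4⁻¹ : ℝ) := by
      rw [Real.le_rpow_inv_iff_of_pos (by norm_num) (by norm_num) (by norm_num)]
      norm_num
    have hinv : 1 / (36 : ℝ) ^ (4⁻¹ : ℝ) ≤ 1 / 2.449 := by gcongr
    have hsplit : 1 / (36 * (36 : ℝ) ^ (4⁻¹ : ℝ)) = 1 / 36 * (1 / (36 : ℝ) ^ (4⁻¹ : ℝ)) := by
      rw [one_div_mul_one_div]
    rw [hcount]
    simp only [Ioc_self, filter_empty, sum_empty]
    push_cast
    rw [hsplit]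
    linarith
  | succ N hN ih =>
    have hN0 : (0 : ℝ) < N := by exact_mod_cast (by omega : 0 < N)
    have hcount : (15 : ℝ) * wheelCount N ≤ 4 * N + 14 := by exact_mod_cast (wheelCount_bounds N).1
    have hdecr : (wheelCount N - (4 * (N : ℝ) + 14) / 15) * (1 / (N * (N : ℝ) ^ (4⁻¹ : ℝ))) ≤
        (wheelCount N - (4 * (N : ℝ) + 14) / 15) *
          (1 / ((N + 1) * ((N : ℝ) + 1) ^ (4⁻¹ : ℝ))) := by
      apply mul_le_mul_of_nonpos_left
      · gcongr <;> linarith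
      · linarith
    have htelescope := one_div_mul_rpow_le hN0
    rw [← insert_Ioc_right_eq_Ioc_add_one (by omega), filter_insert, wheelCount_succ]
    split_ifs with hcop
    · rw [sum_insert (by simp)]
      push_cast
      linear_combination ih + hdecr + 4 / 15 * htelescope
    · push_cast
      linear_combination ih + hdecr + 4 / 15 * htelescope

lemma sum_coprime_thirty_le_const {N : ℕ} (hN : 36 ≤ N) :
    ∑ m ∈ Ioc 36 N with Nat.Coprime m 30, 1 / ((m : ℝ) * (m : ℝ) ^ (4⁻¹ : ℝ)) ≤ 0.4532 := by
  have hcount : (15 : ℝ) * wheelCount N ≤ 4 * N + 14 := by exact_mod_cast (wheelCount_bounds N).1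
  have hdefect : (wheelCount N - (4 * (N : ℝ) + 14) / 15) *
      (1 / ((N : ℝ) * (N : ℝ) ^ (4⁻¹ : ℝ))) ≤ 0 :=
    mul_nonpos_of_nonpos_of_nonneg (by linarith) (by positivity)
  have htail : 0 ≤ 16 / 15 * (1 / (N : ℝ) ^ (4⁻¹ : ℝ)) := by positivity
  linarith [sum_coprime_thirty_le hN]

/-- The local factor at `p` of the sum that Rankin's trick with exponent `1 / 4` attaches to
`varianceSum`. -/
noncomputable def varianceFactor (p : ℕ) : ℝ :=
  9 * (p : ℝ) / ((p : ℝ) - 1) ^ 2 / (p : ℝ) ^ (4⁻¹ : ℝ)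

lemma varianceFactor_nonneg (p : ℕ) : 0 ≤ varianceFactor p := by
  unfold varianceFactor
  positivity

lemma sqrt_sqrt_le_rpow (m : ℕ) : (m.sqrt.sqrt : ℝ) ≤ (m : ℝ) ^ (4⁻¹ : ℝ) := by
  rw [Real.le_rpow_inv_iff_of_pos (by positivity) (by positivity) (by norm_num)]
  have hsq : m.sqrt.sqrt ^ 4 ≤ m :=
    calc m.sqrt.sqrt ^ 4 = (m.sqrt.sqrt ^ 2) ^ 2 := by ring
      _ ≤ m.sqrt ^ 2 := Nat.pow_le_pow_left (Nat.sqrt_le' _) 2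
      _ ≤ m := Nat.sqrt_le' m
  exact_mod_cast hsq

lemma prod_varianceFactor_small_le :
    ∏ p ∈ ({7, 11, 13, 17, 19, 23, 29, 31} : Finset ℕ), (1 + varianceFactor p) ≤ 12.1 := by
  have hten : (10000 : ℝ) ^ (4⁻¹ : ℝ) = 10 := by
    rw [show (10000 : ℝ) = 10 ^ 4 by norm_num]
    exact Real.pow_rpow_inv_natCast (by norm_num) four_ne_zero
  have hroot : ∀ p : ℕ, ((10000 * p).sqrt.sqrt / 10 : ℝ) ≤ (p : ℝ) ^ (4⁻¹ : ℝ) := fun p => by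
    have hle := sqrt_sqrt_le_rpow (10000 * p)
    push_cast at hle
    rw [Real.mul_rpow (by positivity) (by positivity), hten] at hle
    linarith
  calc _ ≤ ∏ p ∈ ({7, 11, 13, 17, 19, 23, 29, 31} : Finset ℕ),
        (1 + 9 * (p : ℝ) / ((p : ℝ) - 1) ^ 2 / ((10000 * p).sqrt.sqrt / 10)) := by
        refine prod_le_prod (fun p _ => by linarith [varianceFactor_nonneg p]) fun p hp => ?_
        have hp0 : 0 < p := Nat.pos_of_ne_zero (by rintro rfl; simp at hp)
        have : (0 : ℝ) < (10000 * p).sqrt.sqrt := by positivity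
        unfold varianceFactor
        gcongr
        exact hroot p
    _ ≤ 12.1 := by norm_num

lemma varianceFactor_le_of_ge {p : ℕ} (hp : 37 ≤ p) :
    varianceFactor p ≤ 10 * (1 / ((p : ℝ) * (p : ℝ) ^ (4⁻¹ : ℝ))) := by
  have hp' : (37 : ℝ) ≤ p := by exact_mod_cast hp
  have hrational : 9 * (p : ℝ) / ((p : ℝ) - 1) ^ 2 ≤ 10 / p := by
    rw [div_le_div_iff₀ (by nlinarith) (by linarith)]
    nlinarith
  calc varianceFactor p ≤ 10 / p / (p : ℝ) ^ (4⁻¹ : ℝ) := by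
        unfold varianceFactor
        gcongr
    _ = 10 * (1 / ((p : ℝ) * (p : ℝ) ^ (4⁻¹ : ℝ))) := by rw [div_div, mul_one_div]

-- The primes beyond `31` are treated as if they were all the integers coprime to `30`.
lemma sum_varianceFactor_large_le (R : ℕ) :
    ∑ p ∈ sievePrimes R with ¬ p ≤ 36, varianceFactor p ≤ 5 := by
  have hsub : {p ∈ sievePrimes R | ¬ p ≤ 36} ⊆ {m ∈ Ioc 36 (R + 36) | Nat.Coprime m 30} := by
    intro p hp
    simp only [sievePrimes, mem_filter, mem_Icc, mem_Ioc] at hp ⊢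
    exact ⟨by omega, coprime_thirty_of_prime hp.1.2 (by omega)⟩
  calc ∑ p ∈ sievePrimes R with ¬ p ≤ 36, varianceFactor p
      ≤ ∑ p ∈ sievePrimes R with ¬ p ≤ 36, 10 * (1 / ((p : ℝ) * (p : ℝ) ^ (4⁻¹ : ℝ))) :=
        sum_le_sum fun p hp => varianceFactor_le_of_ge (not_le.1 (mem_filter.1 hp).2)
    _ ≤ ∑ m ∈ Ioc 36 (R + 36) with Nat.Coprime m 30, 10 * (1 / ((m : ℝ) * (m : ℝ) ^ (4⁻¹ : ℝ))) :=
        sum_le_sum_of_subset_of_nonneg hsub fun m _ _ => by positivity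
    _ ≤ 5 := by
        rw [← mul_sum]
        linarith [sum_coprime_thirty_le_const (N := R + 36) (by omega)]

lemma prod_varianceFactor_le (R : ℕ) : ∏ p ∈ sievePrimes R, (1 + varianceFactor p) ≤ 1800 := by
  have hnonneg : ∀ p, 0 ≤ 1 + varianceFactor p := fun p => by linarith [varianceFactor_nonneg p]
  have hsmall : ∏ p ∈ sievePrimes R with p ≤ 36, (1 + varianceFactor p) ≤ 12.1 := by
    refine (prod_le_prod_of_subset_of_one_le (fun p hp => ?_) (fun p _ => hnonneg p)
      fun p _ _ => by linarith [varianceFactor_nonneg p]).trans prod_varianceFactor_small_le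
    simp only [sievePrimes, mem_filter, mem_Icc] at hp
    obtain ⟨⟨⟨h7, _⟩, hprime⟩, h36⟩ := hp
    interval_cases p <;> first | decide | (revert hprime; decide)
  have hlarge : ∏ p ∈ sievePrimes R with ¬ p ≤ 36, (1 + varianceFactor p) ≤ 148.5 :=
    calc _ ≤ ∏ p ∈ sievePrimes R with ¬ p ≤ 36, Real.exp (varianceFactor p) :=
          prod_le_prod (fun p _ => hnonneg p) fun p _ => by
            rw [add_comm]
            exact Real.add_one_le_exp _
      _ = Real.exp (∑ p ∈ sievePrimes R with ¬ p ≤ 36, varianceFactor p) := (Real.exp_sum _ _).symm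
      _ ≤ Real.exp ((5 : ℕ) * 1) := by
          rw [Nat.cast_ofNat, mul_one]
          exact Real.exp_le_exp.2 (sum_varianceFactor_large_le R)
      _ ≤ 2.7182818286 ^ 5 := by
          rw [Real.exp_nat_mul]
          gcongr
          exact Real.exp_one_lt_d9.le
      _ ≤ 148.5 := by norm_num
  rw [← prod_filter_mul_prod_filter_not (sievePrimes R) (fun p => p ≤ 36)]
  calc _ ≤ (12.1 : ℝ) * 148.5 :=
        mul_le_mul hsmall hlarge (prod_nonneg fun p _ => hnonneg p) (by norm_num)
    _ ≤ 1800 := by norm_num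

lemma prod_primeFactors_varianceFactor {q : ℕ} (hq : Squarefree q) :
    ∏ p ∈ q.primeFactors, varianceFactor p =
      9 ^ ω q * (q : ℝ) / (φ q : ℝ) ^ 2 / (q : ℝ) ^ (4⁻¹ : ℝ) := by
  unfold varianceFactor
  rw [prod_div_distrib, prod_div_distrib, prod_mul_distrib, prod_pow, prod_const,
    Real.finsetProd_rpow _ _ fun p _ => Nat.cast_nonneg p, ← totient_eq_prod hq,
    ← cast_eq_prod hq]
  rfl

-- Rankin's trick with exponent `1 / 4`.
lemma varianceSum_le (D : ℕ) : varianceSum D ≤ 1800 * (D : ℝ) ^ (4⁻¹ : ℝ) :=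
  calc varianceSum D
      ≤ ∑ q ∈ sieveRange D, (∏ p ∈ q.primeFactors, varianceFactor p) * (D : ℝ) ^ (4⁻¹ : ℝ) := by
        refine sum_le_sum fun q hq => ?_
        obtain ⟨⟨hq1, hqD⟩, hsq, -⟩ := mem_sieveRange.1 hq
        have : (0 : ℝ) < q := by exact_mod_cast hq1
        rw [prod_primeFactors_varianceFactor hsq, div_mul_eq_mul_div, le_div_iff₀ (by positivity)]
        gcongr
    _ ≤ 1800 * (D : ℝ) ^ (4⁻¹ : ℝ) := by
        rw [← sum_mul]
        gcongr
        exact (sum_sieveRange_le_prod D varianceFactor varianceFactor_nonneg).trans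
          (prod_varianceFactor_le D)

/-! ### Primes in the rows and the variance -/

/-- The primes of row `k` in the residue class `b` modulo `30`. -/
def rowClass (n k b : ℕ) : Finset ℕ :=
  {p ∈ Ioc ((k - 1) * n) ((k - 1) * n + n) | p.Prime ∧ p % 30 = b}

/-- The `s` starting points `x` attached to row `k`: the terms `30 * (x + i) + b` with
`i < n / 30 + 1 + s` then run through all the elements of the row congruent to `b` modulo `30`. -/
def rowWindow (n s k : ℕ) : Finset ℕ := Ioc ((k - 1) * n / 30 - s) ((k - 1) * n / 30)

lemma div_thirty_mem_of_mem_rowClass {n s k b x p : ℕ} (hx : x ∈ rowWindow n s k)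
    (hp : p ∈ rowClass n k b) :
    x ≤ p / 30 ∧ p / 30 - x < n / 30 + 1 + s ∧ 30 * (p / 30) + b = p := by
  simp only [rowWindow, rowClass, mem_filter, mem_Ioc] at hx hp
  generalize (k - 1) * n = a at *
  omega

lemma card_rowClass_le_sum_majorant {n R s k b x : ℕ} (hR : 1 ≤ R) (hRn : R ≤ n) (hk : 2 ≤ k)
    (hx : x ∈ rowWindow n s k) :
    (#(rowClass n k b) : ℝ) ≤ ∑ i ∈ range (n / 30 + 1 + s), majorant R (30 * (x + i) + b) := by
  have hcover : ∀ p ∈ rowClass n k b,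
      x ≤ p / 30 ∧ p / 30 - x < n / 30 + 1 + s ∧ 30 * (p / 30) + b = p :=
    fun p => div_thirty_mem_of_mem_rowClass hx
  have hone : ∀ p ∈ rowClass n k b, majorant R (30 * (x + (p / 30 - x)) + b) = 1 := by
    intro p hp
    obtain ⟨hxp, -, hmod⟩ := hcover p hp
    obtain ⟨hrow, hprime, -⟩ := mem_filter.1 hp
    have hn : n ≤ (k - 1) * n := Nat.le_mul_of_pos_left n (by omega)
    rw [Nat.add_sub_cancel' hxp, hmod]
    exact majorant_prime hR hprime ((hRn.trans hn).trans_lt (mem_Ioc.1 hrow).1)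
  have hinj : Set.InjOn (fun p => p / 30 - x) (rowClass n k b : Set ℕ) := by
    intro p hp p' hp' heq
    have := hcover p hp
    have := hcover p' hp'
    simp only at heq
    omega
  calc (#(rowClass n k b) : ℝ)
      = ∑ p ∈ rowClass n k b, majorant R (30 * (x + (p / 30 - x)) + b) := by
        rw [sum_congr rfl hone, sum_const, nsmul_one]
    _ = ∑ i ∈ (rowClass n k b).image (fun p => p / 30 - x), majorant R (30 * (x + i) + b) :=
        (sum_image (f := fun i => majorant R (30 * (x + i) + b)) hinj).symm
    _ ≤ _ := sum_le_sum_of_subset_of_nonneg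
        (image_subset_iff.2 fun p hp => mem_range.2 (hcover p hp).2.1)
        fun i _ _ => majorant_nonneg _ _

lemma card_rowWindow {n s k : ℕ} (hs : s ≤ n / 30) (hk : 2 ≤ k) : #(rowWindow n s k) = s := by
  have hn : n ≤ (k - 1) * n := Nat.le_mul_of_pos_left n (by omega)
  rw [rowWindow, Nat.card_Ioc]
  omega

lemma pairwiseDisjoint_rowWindow {n s : ℕ} (hs : s ≤ n / 30) :
    {k | 2 ≤ k}.PairwiseDisjoint (rowWindow n s) := by
  have hlt : ∀ k k', 2 ≤ k → k < k' → Disjoint (rowWindow n s k) (rowWindow n s k') := by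
    intro k k' hk hkk'
    have hrow : (k - 1) * n + n ≤ (k' - 1) * n :=
      calc (k - 1) * n + n = (k - 1 + 1) * n := by ring
        _ ≤ (k' - 1) * n := Nat.mul_le_mul_right _ (by omega)
    refine disjoint_left.2 fun x hx hx' => ?_
    rw [rowWindow, mem_Ioc] at hx hx'
    omega
  intro k hk k' hk' hne
  rcases lt_or_gt_of_ne hne with h | h
  · exact hlt k k' hk h
  · exact (hlt k' k hk' h).symm

lemma rowWindow_subset_range {n s k : ℕ} (hn : 30 ≤ n) (hk : k ≤ n) :
    rowWindow n s k ⊆ range (n ^ 2 / 30) := by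
  intro x hx
  rw [rowWindow, mem_Ioc] at hx
  have hle : (k - 1) * n ≤ (n - 1) * n := Nat.mul_le_mul_right _ (by omega)
  have hsq : (n - 1) * n + n = n ^ 2 := by
    rw [← Nat.succ_mul, Nat.succ_eq_add_one, Nat.sub_add_cancel (by omega), sq]
  rw [mem_range]
  omega

-- The arithmetic-geometric mean inequality `D ≤ c + D ^ 2 / (4 * c)` replaces Cauchy–Schwarz.
lemma mul_card_rowClass_le {n R s k : ℕ} {c : ℝ} (hR : 1 ≤ R) (hRn : R ≤ n) (hs : s ≤ n / 30)
    (hk : 2 ≤ k) (hc : 0 < c) (b : ℕ) :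
    s * (#(rowClass n k b) : ℝ) ≤ s * ((n / 30 + 1 + s : ℕ) / selbergSum R + c) +
      (∑ x ∈ rowWindow n s k, windowDeviation R (n / 30 + 1 + s) b x ^ 2) / (4 * c) := by
  have hpoint : ∀ x ∈ rowWindow n s k, (#(rowClass n k b) : ℝ) ≤
      (n / 30 + 1 + s : ℕ) / selbergSum R + c +
        windowDeviation R (n / 30 + 1 + s) b x ^ 2 / (4 * c) := by
    intro x hx
    have hcover := card_rowClass_le_sum_majorant (b := b) hR hRn hk hx
    have hdev : windowDeviation R (n / 30 + 1 + s) b x = ∑ i ∈ range (n / 30 + 1 + s),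
      majorant R (30 * (x + i) + b) - (n / 30 + 1 + s : ℕ) / selbergSum R := rfl
    generalize windowDeviation R (n / 30 + 1 + s) b x = D at *
    have hamgm : 0 ≤ c + D ^ 2 / (4 * c) - D := by
      rw [show c + D ^ 2 / (4 * c) - D = (D - 2 * c) ^ 2 / (4 * c) by field_simp; ring]
      positivity
    linarith
  have hsum := sum_le_sum hpoint
  rwa [sum_const, sum_add_distrib, sum_const, ← sum_div, card_rowWindow hs hk, nsmul_eq_mul,
    nsmul_eq_mul] at hsum

lemma sum_card_rowClass_le {n R s : ℕ} {γ : ℝ} (hR : 1 ≤ R) (hRn : R ≤ n) (hs0 : 0 < s)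
    (hs : s ≤ n / 30) (hX : 4 * (n ^ 2 / 30) ≤ R ^ 4) (hγ : 0 < γ) (b : ℕ)
    {A : Finset ℕ} (hA : ∀ k ∈ A, 2 ≤ k ∧ k ≤ n) :
    ∑ k ∈ A, (#(rowClass n k b) : ℝ) ≤ 1 / selbergSum R * (#A * (1 + γ) * (n / 30 + 1 + s : ℕ) +
      (R : ℝ) ^ 4 * varianceSum (R ^ 2) / (2 * γ * s)) := by
  have hL := selbergSum_pos hR
  have hs0' : (0 : ℝ) < s := by exact_mod_cast hs0
  have hrow := fun k hk => mul_card_rowClass_le (c := γ * ((n / 30 + 1 + s : ℕ) / selbergSum R))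
    hR hRn hs (hA k hk).1 (by positivity) b
  have hH0 : (0 : ℝ) < (n / 30 + 1 + s : ℕ) := by positivity
  generalize n / 30 + 1 + s = H at *
  have hvariance : ∑ k ∈ A, ∑ x ∈ rowWindow n s k, windowDeviation R H b x ^ 2 ≤
      2 * (R : ℝ) ^ 4 * (H / selbergSum R ^ 2 * varianceSum (R ^ 2)) := by
    rw [← sum_biUnion ((pairwiseDisjoint_rowWindow hs).subset fun k hk => (hA k hk).1)]
    refine (sum_le_sum_of_subset_of_nonneg ?_ fun x _ _ => sq_nonneg _).trans
      (sum_sq_windowDeviation_le hR H b hX)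
    exact biUnion_subset.2 fun k hk => rowWindow_subset_range (by omega) (hA k hk).2
  have htotal := sum_le_sum hrow
  rw [sum_add_distrib, ← sum_div, ← mul_sum, sum_const, nsmul_eq_mul] at htotal
  refine le_of_mul_le_mul_left ?_ hs0'
  calc _ ≤ _ := htotal
    _ ≤ #A * (s * (H / selbergSum R + γ * (H / selbergSum R))) +
        2 * (R : ℝ) ^ 4 * (H / selbergSum R ^ 2 * varianceSum (R ^ 2)) /
          (4 * (γ * (H / selbergSum R))) := by gcongr
    _ = _ := by field_simp; ring

lemma primesLE_sq_subset (n : ℕ) (hn : 5 ≤ n) :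
    Nat.primesLE (n ^ 2) ⊆ Ioc 0 n ∪ {b ∈ range 30 | Nat.Coprime b 30}.biUnion fun b =>
      ((primeRows n).erase 1).biUnion fun k => rowClass n k b := by
  intro p hp
  obtain ⟨hle, hprime⟩ := Nat.mem_primesLE.1 hp
  simp only [mem_union, mem_Ioc, mem_biUnion, mem_erase]
  by_cases hpn : p ≤ n
  · exact Or.inl ⟨hprime.pos, hpn⟩
  obtain ⟨k, hk, hpk⟩ := exists_mem_primeRows (by omega) hprime hle
  have hcop : Nat.Coprime (p % 30) 30 :=
    (Nat.mod_modEq p 30).gcd_eq.trans (coprime_thirty_of_prime hprime (by omega))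
  refine Or.inr ⟨p % 30, mem_filter.2 ⟨mem_range.2 (Nat.mod_lt _ (by norm_num)), hcop⟩, k,
    ⟨?_, hk⟩, mem_filter.2 ⟨hpk, hprime, rfl⟩⟩
  rintro rfl
  rw [mem_Ioc] at hpk
  omega

-- The first row is counted trivially; `8 = φ(30)` residue classes remain.
lemma primeCounting_sq_le_of_variance {n R s : ℕ} {γ : ℝ} (hR : 1 ≤ R) (hRn : R ≤ n) (hs0 : 0 < s)
    (hs : s ≤ n / 30) (hX : 4 * (n ^ 2 / 30) ≤ R ^ 4) (hγ : 0 < γ) :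
    (Nat.primeCounting (n ^ 2) : ℝ) ≤ n + 8 / selbergSum R *
      (#(primeRows n) * (1 + γ) * (n / 30 + 1 + s : ℕ) +
        (R : ℝ) ^ 4 * varianceSum (R ^ 2) / (2 * γ * s)) := by
  have hL := selbergSum_pos hR
  have hclasses : #{b ∈ range 30 | Nat.Coprime b 30} = 8 := by decide +kernel
  have hA : ∀ k ∈ (primeRows n).erase 1, 2 ≤ k ∧ k ≤ n := by
    intro k hk
    simp only [mem_erase, primeRows, mem_filter, mem_Icc] at hk
    omega
  have hcount := (card_le_card (primesLE_sq_subset n (by omega))).trans ((card_union_le _ _).trans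
    (Nat.add_le_add_left (card_biUnion_le.trans (sum_le_sum fun b _ => card_biUnion_le)) _))
  rw [Nat.primesLE_card_eq_primeCounting, Nat.card_Ioc, Nat.sub_zero] at hcount
  calc (Nat.primeCounting (n ^ 2) : ℝ)
      ≤ n + ∑ b ∈ range 30 with Nat.Coprime b 30,
          ∑ k ∈ (primeRows n).erase 1, (#(rowClass n k b) : ℝ) := by exact_mod_cast hcount
    _ ≤ n + ∑ b ∈ range 30 with Nat.Coprime b 30, 1 / selbergSum R *
          (#(primeRows n) * (1 + γ) * (n / 30 + 1 + s : ℕ) +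
            (R : ℝ) ^ 4 * varianceSum (R ^ 2) / (2 * γ * s)) := by
        gcongr with b
        refine (sum_card_rowClass_le hR hRn hs0 hs hX hγ b hA).trans ?_
        gcongr
        exact erase_subset _ _
    _ = _ := by
        rw [sum_const, hclasses, nsmul_eq_mul]
        ring

/-! ### The range `n > e ^ 36` -/

lemma le_of_thirtysix_le_log {n : ℕ} (hl : 36 ≤ Real.log n) :
    400000000 * (Real.log n - 19) ≤ n := by
  have hn : (0 : ℝ) < n := natCast_pos_of_log_pos (by linarith)
  calc 400000000 * (Real.log n - 19) ≤ Real.exp 20 * Real.exp (Real.log n - 20) := by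
        gcongr
        · linarith
        · exact le_exp_twenty
        · linarith [Real.add_one_le_exp (Real.log n - 20)]
    _ = n := by rw [← Real.exp_add, add_sub_cancel, Real.exp_log hn]

lemma exists_sieve_level {n : ℕ} (hl : 36 ≤ Real.log n) :
    ∃ R : ℕ, 1000 ≤ R ∧ R ≤ n ∧ (R : ℝ) ≤ Real.exp (0.55 * Real.log n - 2.25) ∧
      Real.exp (0.55 * Real.log n - 2.25) < R + 1 := by
  have hn : (0 : ℝ) < n := natCast_pos_of_log_pos (by linarith)
  have hfloor := Nat.floor_le (Real.exp_nonneg (0.55 * Real.log n - 2.25))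
  refine ⟨⌊Real.exp (0.55 * Real.log n - 2.25)⌋₊, Nat.le_floor ?_, ?_, hfloor,
    Nat.lt_floor_add_one _⟩
  · calc ((1000 : ℕ) : ℝ) ≤ 2.7182818283 ^ 17 := by norm_num
      _ ≤ Real.exp 1 ^ 17 := by gcongr; exact Real.exp_one_gt_d9.le
      _ = Real.exp 17 := by rw [← Real.exp_nat_mul]; norm_num
      _ ≤ _ := Real.exp_le_exp.2 (by linarith)
  · have hle : Real.exp (0.55 * Real.log n - 2.25) ≤ n := by
      rw [← Real.le_log_iff_exp_le hn]
      linarith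
    exact_mod_cast hfloor.trans hle

lemma four_mul_sq_div_thirty_le {n R : ℕ} (hl : 36 ≤ Real.log n) (hR : 1000 ≤ R)
    (hlevel : Real.exp (0.55 * Real.log n - 2.25) < R + 1) : 4 * (n ^ 2 / 30) ≤ R ^ 4 := by
  have hn : (0 : ℝ) < n := natCast_pos_of_log_pos (by linarith)
  have hR' : (1000 : ℝ) ≤ R := by exact_mod_cast hR
  have hexp : 0.1353 ≤ Real.exp (-2) := by
    rw [Real.exp_neg, le_inv_comm₀ (by norm_num) (Real.exp_pos _)]
    calc Real.exp 2 = Real.exp 1 ^ 2 := by rw [← Real.exp_nat_mul]; norm_num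
      _ ≤ 2.7182818286 ^ 2 := by gcongr; exact Real.exp_one_lt_d9.le
      _ ≤ 0.1353⁻¹ := by norm_num
  have hlower : 0.1353 * (n : ℝ) ^ 2 ≤ (R + 1) ^ 4 :=
    calc 0.1353 * (n : ℝ) ^ 2 ≤ Real.exp (-2) * Real.exp ((2 : ℕ) * Real.log n) := by
          rw [Real.exp_nat_mul, Real.exp_log hn]
          gcongr
      _ ≤ Real.exp ((4 : ℕ) * (0.55 * Real.log n - 2.25)) := by
          rw [← Real.exp_add]
          gcongr
          push_cast
          linarith
      _ ≤ (R + 1) ^ 4 := by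
          rw [Real.exp_nat_mul]
          gcongr
  have hdiv : ((n ^ 2 / 30 : ℕ) : ℝ) ≤ (n : ℝ) ^ 2 / 30 := by
    exact_mod_cast Nat.cast_div_le (α := ℝ) (m := n ^ 2) (n := 30)
  have hround : (0.999 * (R + 1) : ℝ) ^ 4 ≤ (R : ℝ) ^ 4 := by
    gcongr
    linarith
  rw [mul_pow] at hround
  have : (4 * (n ^ 2 / 30 : ℕ) : ℝ) ≤ (R : ℝ) ^ 4 := by nlinarith
  exact_mod_cast this

-- With this level the error term of the variance bound, divided by `2 * 0.01 * (n / 3000)`, is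
-- smaller than the main term by a factor `0.01`.
lemma pow_four_mul_varianceSum_le {n R : ℕ} (hl : 36 ≤ Real.log n)
    (hR : (R : ℝ) ≤ Real.exp (0.55 * Real.log n - 2.25)) :
    (R : ℝ) ^ 4 * varianceSum (R ^ 2) ≤ 4.62 / 10 ^ 10 * (n : ℝ) ^ 3 := by
  have hn : (0 : ℝ) < n := natCast_pos_of_log_pos (by linarith)
  have hexp : Real.exp (-29) ≤ 2.56 / 10 ^ 13 := by
    rw [Real.exp_neg, inv_le_comm₀ (Real.exp_pos _) (by norm_num)]
    calc (2.56 / 10 ^ 13 : ℝ)⁻¹ ≤ 2.7182818283 ^ 29 := by norm_num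
      _ ≤ Real.exp 1 ^ 29 := by gcongr; exact Real.exp_one_gt_d9.le
      _ = Real.exp 29 := by rw [← Real.exp_nat_mul]; norm_num
  calc (R : ℝ) ^ 4 * varianceSum (R ^ 2)
      ≤ (R : ℝ) ^ 4 * (1800 * ((R ^ 2 : ℕ) : ℝ) ^ (4⁻¹ : ℝ)) := by
        gcongr
        exact varianceSum_le _
    _ ≤ Real.exp (0.55 * Real.log n - 2.25) ^ 4 *
          (1800 * (Real.exp (0.55 * Real.log n - 2.25) ^ 2) ^ (4⁻¹ : ℝ)) := by
        push_cast
        gcongr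
    _ = 1800 * Real.exp (4.5 * (0.55 * Real.log n - 2.25)) := by
        rw [← Real.exp_nat_mul, ← Real.exp_nat_mul, ← Real.exp_mul, mul_left_comm, ← Real.exp_add]
        congr 2
        push_cast
        ring
    _ ≤ 1800 * (Real.exp (-29) * Real.exp ((3 : ℕ) * Real.log n)) := by
        rw [← Real.exp_add]
        gcongr
        push_cast
        linarith
    _ ≤ 1800 * (2.56 / 10 ^ 13 * (n : ℝ) ^ 3) := by
        rw [Real.exp_nat_mul, Real.exp_log hn]
        gcongr
    _ ≤ 4.62 / 10 ^ 10 * (n : ℝ) ^ 3 := by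
        rw [← mul_assoc]
        gcongr
        norm_num

lemma main_add_error_le {n : ℕ} {E : ℝ} (hn : 400000000 ≤ n) (hA : 4 * #(primeRows n) < n)
    (hE : E ≤ 4.62 / 10 ^ 10 * (n : ℝ) ^ 3) :
    #(primeRows n) * (1 + 0.01) * (n / 30 + 1 + n / 3000 : ℕ) + E / (2 * 0.01 * (n / 3000 : ℕ)) ≤
      0.00858 * (n : ℝ) ^ 2 := by
  have hn' : (400000000 : ℝ) ≤ n := by exact_mod_cast hn
  have hA' : (#(primeRows n) : ℝ) ≤ n / 4 := by
    have : (4 * #(primeRows n) : ℝ) < n := by exact_mod_cast hA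
    linarith
  have hlength : ((n / 30 + 1 + n / 3000 : ℕ) : ℝ) ≤ 0.033667 * n := by
    have h30 : ((n / 30 : ℕ) : ℝ) ≤ n / 30 := Nat.cast_div_le
    have h3000 : ((n / 3000 : ℕ) : ℝ) ≤ n / 3000 := Nat.cast_div_le
    push_cast
    linarith
  have hs : 0.000333 * (n : ℝ) ≤ (n / 3000 : ℕ) := by
    have hlt : (n : ℝ) < 3000 * (n / 3000 : ℕ) + 3000 := by
      exact_mod_cast (by omega : n < 3000 * (n / 3000) + 3000)
    linarith
  have herror : E / (2 * 0.01 * (n / 3000 : ℕ)) ≤ 0.00007 * (n : ℝ) ^ 2 := by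
    rw [div_le_iff₀ (by linarith)]
    calc E ≤ 4.62 / 10 ^ 10 * (n : ℝ) ^ 3 := hE
      _ ≤ 0.00007 * (n : ℝ) ^ 2 * (2 * 0.01 * (0.000333 * n)) := by
          rw [show 0.00007 * (n : ℝ) ^ 2 * (2 * 0.01 * (0.000333 * n)) =
            0.00007 * (2 * 0.01 * 0.000333) * (n : ℝ) ^ 3 by ring]
          gcongr
          norm_num
      _ ≤ _ := by gcongr
  calc _ ≤ n / 4 * (1 + 0.01) * (0.033667 * n) + 0.00007 * (n : ℝ) ^ 2 := by gcongr
    _ ≤ 0.00858 * (n : ℝ) ^ 2 := by nlinarith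

lemma primeCounting_sq_le_of_log_ge {n : ℕ} (hl : 36 ≤ Real.log n) (hA : 4 * #(primeRows n) < n) :
    (Nat.primeCounting (n ^ 2) : ℝ) ≤ n + 0.2574 * (n : ℝ) ^ 2 / (0.55 * Real.log n - 0.043) := by
  have hn : 400000000 ≤ n := by
    have := le_of_thirtysix_le_log hl
    exact_mod_cast (by linarith : (400000000 : ℝ) ≤ n)
  obtain ⟨R, hR, hRn, hRle, hRgt⟩ := exists_sieve_level hl
  have hcount := primeCounting_sq_le_of_variance (s := n / 3000) (γ := 0.01) (by omega) hRn
    (by omega) (by omega) (four_mul_sq_div_thirty_le hl hR hRgt) (by norm_num)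
  have hlog : 0.55 * Real.log n - 2.25 ≤ Real.log (R + 1) := by
    rw [Real.le_log_iff_exp_le (by positivity)]
    exact hRgt.le
  have hL : 4 / 15 * (0.55 * Real.log n - 0.043) ≤ selbergSum R :=
    (by linarith : _ ≤ 4 / 15 * (Real.log (R + 1) + 2.207)).trans
      (selbergSum_ge_of_239_le (by omega))
  have hpos : 0 < 0.55 * Real.log n - 0.043 := by linarith
  have hmain := main_add_error_le hn hA (pow_four_mul_varianceSum_le hl hRle)
  have hL0 : 0 < selbergSum R := lt_of_lt_of_le (by positivity) hL
  calc _ ≤ _ := hcount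
    _ ≤ n + 8 / selbergSum R * (0.00858 * (n : ℝ) ^ 2) := by gcongr
    _ ≤ n + 8 / (4 / 15 * (0.55 * Real.log n - 0.043)) * (0.00858 * (n : ℝ) ^ 2) := by gcongr
    _ = n + 0.2574 * (n : ℝ) ^ 2 / (0.55 * Real.log n - 0.043) := by
        field_simp
        ring

lemma le_four_mul_card_primeRows_of_log_gt_thirtysix {n : ℕ} (hl : 36 < Real.log n) :
    n ≤ 4 * #(primeRows n) := by
  by_contra! hA
  have hcount := primeCounting_sq_le_of_log_ge hl.le hA
  have hlower := psi_sq_ge (n := n) (by linarith)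
  have hupper := Chebyshev.psi_le_primeCounting_mul_log (n ^ 2)
  rw [Nat.cast_pow, Real.log_pow, Nat.cast_ofNat] at hupper
  have hbig := le_of_thirtysix_le_log hl.le
  have hpos : 0 < 0.55 * Real.log n - 0.043 := by linarith
  have hratio : 0.2574 / (0.55 * Real.log n - 0.043) * (2 * Real.log n) ≤ 0.94 := by
    rw [div_mul_eq_mul_div, div_le_iff₀ hpos]
    linarith
  have hsmall : 2 * Real.log n ≤ 0.01 * n := by linarith
  have hsq : (0 : ℝ) < (n : ℝ) ^ 2 := by
    have := natCast_pos_of_log_pos (x := n) (by linarith)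
    positivity
  have hpsi : Chebyshev.psi ((n ^ 2 : ℕ) : ℝ) ≤ 0.95 * (n : ℝ) ^ 2 :=
    calc Chebyshev.psi ((n ^ 2 : ℕ) : ℝ)
        ≤ (n + 0.2574 * (n : ℝ) ^ 2 / (0.55 * Real.log n - 0.043)) * (2 * Real.log n) := by
          rw [Nat.cast_pow]
          exact hupper.trans (by gcongr)
      _ = 2 * Real.log n * n +
          0.2574 / (0.55 * Real.log n - 0.043) * (2 * Real.log n) * (n : ℝ) ^ 2 := by ring
      _ ≤ 0.01 * n * n + 0.94 * (n : ℝ) ^ 2 := by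
          gcongr
      _ = 0.95 * (n : ℝ) ^ 2 := by ring
  linarith

end SierpinskiRows

theorem quarter_of_rows_contain_primes (n : ℕ) (hn : 2 ≤ n) :
    n ≤ 4 * {k : ℕ | 1 ≤ k ∧ k ≤ n ∧
      ∃ p : ℕ, p.Prime ∧ (k - 1) * n < p ∧ p ≤ k * n}.ncard := by
  rw [SierpinskiRows.ncard_primeRows]
  rcases le_or_gt (Real.log n) 36 with h | h
  · exact SierpinskiRows.le_four_mul_card_primeRows_of_log_le_thirtysix hn h
  · exact SierpinskiRows.le_four_mul_card_primeRows_of_log_gt_thirtysix h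
end

section
/- Sierpiński's Hypothesis H₁ is equivalent to a doubly infinite chain of strict inequalities for the prime counting function: (for every n ≥ 2 and every k with 1 ≤ k ≤ n there exists a prime p with (k−1)·n < p ≤ k·n) if and only if (for every k ≥ 1 and every n ≥ k+1 one has π((k+1)·n) > π(k·n)). -/
/-! Row `k + 1` of the `n`-th matrix is the interval `(k * n, (k + 1) * n]`, so the inequality with
parameters `k` and `n` says that this row contains a prime. The chain thus covers every row but the
first, and the first row contains the prime `2`. -/

lemma count_lt_count_iff_exists_mem_Ico {P : ℕ → Prop} [DecidablePred P] {a b : ℕ} :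
    Nat.count P a < Nat.count P b ↔ ∃ x ∈ Set.Ico a b, P x where
  mp := Nat.exists_of_count_lt_count
  mpr := fun ⟨_, ⟨hax, hxb⟩, hx⟩ ↦
    (Nat.count_monotone P hax).trans_lt (Nat.count_strict_mono hx hxb)

lemma primeCounting_lt_primeCounting_iff {a b : ℕ} :
    Nat.primeCounting a < Nat.primeCounting b ↔ ∃ p : ℕ, p.Prime ∧ a < p ∧ p ≤ b := by
  simp only [Nat.primeCounting, Nat.primeCounting', count_lt_count_iff_exists_mem_Ico,
    Set.mem_Ico, Nat.succ_le_iff, Nat.lt_succ_iff, and_comm]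

theorem H1_iff_chain_of_inequalities :
    (∀ n : ℕ, 2 ≤ n → ∀ k : ℕ, 1 ≤ k → k ≤ n →
        ∃ p : ℕ, p.Prime ∧ (k - 1) * n < p ∧ p ≤ k * n) ↔
    (∀ k : ℕ, 1 ≤ k → ∀ n : ℕ, k + 1 ≤ n →
        Nat.primeCounting (k * n) < Nat.primeCounting ((k + 1) * n)) := by
  simp only [primeCounting_lt_primeCounting_iff]
  constructor
  · intro prime_in_row k hk n hkn
    have hn : 2 ≤ n := by lia
    exact prime_in_row n hn (k + 1) k.succ_pos hkn
  · intro prime_in_later_row n hn k hk hkn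
    obtain rfl | one_lt_k := hk.eq_or_lt
    · have two_mem_first_row : (1 - 1) * n < 2 ∧ 2 ≤ 1 * n := by lia
      exact ⟨2, Nat.prime_two, two_mem_first_row⟩
    · obtain ⟨j, rfl⟩ := Nat.exists_eq_add_of_le' hk
      have hj : 1 ≤ j := by lia
      exact prime_in_later_row j hj n hkn
end

section
/- Let m be a positive natural number and let η > 0 and x₀ > 0 be real numbers such that |θ(x) − x| < η·x/(ln x)^m for all real x > x₀. Then for all natural numbers n ≥ 1 and k ≥ 1 satisfying k·n > x₀ and (ln(k·n))^m > η·(2·k+1), one has θ((k+1)·n) − θ(k·n) > 0, and hence there exists a prime p with k·n < p ≤ (k+1)·n. -/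
/-- The first Chebyshev function: `θ(x) = ∑_{p ≤ x, p prime} log p`. -/
noncomputable def chebyshevTheta (x : ℝ) : ℝ :=
  ∑ p ∈ Finset.filter Nat.Prime (Finset.range (⌊x⌋₊ + 1)), Real.log p

/-! Since `log` is increasing, the relative error `δ = η / (log x) ^ m` allowed at `x` also bounds
the relative error at every `y ≥ x`, so `θ(y) - θ(x) > (y - x) - δ (x + y)`. For `x = k n` and
`y = (k + 1) n` the right-hand side is `n (1 - δ (2 k + 1))`, which is positive by assumption, and
`θ(y) - θ(x)` is the sum of `log p` over the primes `p` in `(x, y]`. -/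

lemma exists_prime_of_chebyshevTheta_lt {x y : ℝ} (hθ : chebyshevTheta x < chebyshevTheta y) :
    ∃ p : ℕ, p.Prime ∧ x < p ∧ p ≤ y := by
  contrapose! hθ with no_prime
  refine Finset.sum_le_sum_of_subset_of_nonneg (fun p hp ↦ ?_)
    fun p _ _ ↦ Real.log_natCast_nonneg p
  simp only [Finset.mem_filter, Finset.mem_range, Nat.lt_add_one_iff] at hp ⊢
  obtain ⟨hpy, hp_prime⟩ := hp
  have hpx : (p : ℝ) ≤ x := by
    by_contra! hxp
    exact (no_prime p hp_prime hxp).not_ge ((Nat.le_floor_iff' hp_prime.ne_zero).1 hpy)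
  exact ⟨Nat.le_floor hpx, hp_prime⟩

lemma lt_of_abs_sub_lt_mul {R : Type*} [CommRing R] [LinearOrder R] [IsStrictOrderedRing R]
    {a b x y δ : R} (ha : |a - x| < δ * x) (hb : |b - y| < δ * y)
    (hδ : δ * (x + y) ≤ y - x) : a < b := by
  calc a < x + δ * x := sub_lt_iff_lt_add'.1 (abs_lt.1 ha).2
    _ ≤ y - δ * y := by linarith
    _ < b := sub_lt_of_abs_sub_lt_left hb

theorem chebyshev_bound_implies_prime_in_row_general {m : ℕ} {η x₀ : ℝ} (hη : 0 < η)
    (h : ∀ x : ℝ, x₀ < x → |chebyshevTheta x - x| < η * x / Real.log x ^ m)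
    {x y : ℝ} (hx₀ : x₀ < x) (hx : 1 ≤ x) (hxy : x ≤ y)
    (hlog : η * (x + y) < (y - x) * Real.log x ^ m) :
    chebyshevTheta x < chebyshevTheta y ∧ ∃ p : ℕ, p.Prime ∧ x < p ∧ p ≤ y := by
  have hx_pos : 0 < x := zero_lt_one.trans_le hx
  have hy_pos : 0 < y := hx_pos.trans_le hxy
  have hlog_nonneg : 0 ≤ Real.log x := Real.log_nonneg hx
  have hpow_pos : 0 < Real.log x ^ m :=
    pos_of_mul_pos_right ((mul_pos hη (add_pos hx_pos hy_pos)).trans hlog) (sub_nonneg.2 hxy)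
  have hθx : |chebyshevTheta x - x| < η / Real.log x ^ m * x :=
    (h x hx₀).trans_eq (mul_div_right_comm _ _ _)
  have hθy : |chebyshevTheta y - y| < η / Real.log x ^ m * y := by
    calc |chebyshevTheta y - y| < η * y / Real.log y ^ m := h y (hx₀.trans_le hxy)
      _ ≤ η * y / Real.log x ^ m := by gcongr
      _ = η / Real.log x ^ m * y := mul_div_right_comm _ _ _
  have hδ : η / Real.log x ^ m * (x + y) ≤ y - x := by
    rw [div_mul_eq_mul_div, div_le_iff₀ hpow_pos]
    exact hlog.le
  have hθ : chebyshevTheta x < chebyshevTheta y := lt_of_abs_sub_lt_mul hθx hθy hδ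
  exact ⟨hθ, exists_prime_of_chebyshevTheta_lt hθ⟩

theorem chebyshev_bound_implies_prime_in_row (m : ℕ) (hm : 1 ≤ m)
    (η x₀ : ℝ) (hη : 0 < η) (hx₀ : 0 < x₀)
    (h : ∀ x : ℝ, x₀ < x →
      |chebyshevTheta x - x| < η * x / (Real.log x) ^ m) :
    ∀ n k : ℕ, 1 ≤ n → 1 ≤ k → x₀ < (k : ℝ) * n →
      η * (2 * (k : ℝ) + 1) < (Real.log ((k : ℝ) * n)) ^ m →
      0 < chebyshevTheta (((k : ℝ) + 1) * n) - chebyshevTheta ((k : ℝ) * n) ∧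
        ∃ p : ℕ, p.Prime ∧ k * n < p ∧ p ≤ (k + 1) * n := by
  intro n k hn hk hkn hlog
  have hn_pos : (0 : ℝ) < n := by exact_mod_cast hn
  obtain ⟨hθ, p, hp, hlt, hle⟩ := chebyshev_bound_implies_prime_in_row_general hη h hkn
    (by exact_mod_cast one_le_mul hk hn) (y := (k + 1) * n) (by linarith)
    (by linarith [mul_lt_mul_of_pos_left hlog hn_pos])
  exact ⟨sub_pos.2 hθ, p, hp, by exact_mod_cast hlt, by exact_mod_cast hle⟩
end
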